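/- Let ε ∈ (0,1], k ∈ {0,1}, ε_k = (k+ε)/2, and let p be a strictly pseudoconvex boundary point of class C^{k+2,ε} of a domain Ω in ℂⁿ. Then there exist a constant C > 0 and a neighborhood U of p such that for every z ∈ Ω ∩ U and every X ∈ ℂⁿ, κ_Ω(z;X) ≥ (1 − C·δ_Ω(z)^{ε_k}) · ( |⟨∂δ_Ω(z),X⟩|²/δ_Ω(z)² + L(z;X)/δ_Ω(z) )^{1/2}. -/

import Mathlib

open Metric MeasureTheory Set
open scoped NNReal ENNReal

noncomputable section

/-- Complex Euclidean `n`-space. -/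
abbrev Cn (n : ℕ) := EuclideanSpace ℂ (Fin n)

variable {n : ℕ}

instance : MeasurableSpace (Cn n) := borel _
instance : BorelSpace (Cn n) := ⟨rfl⟩
instance : InnerProductSpace ℝ (Cn n) := InnerProductSpace.rclikeToReal ℂ _

/-- `δ_Ω(z)`: the Euclidean distance from `z` to the boundary of `Ω`. -/
def bdist (Ω : Set (Cn n)) (z : Cn n) : ℝ := Metric.infDist z (frontier Ω)

/-- The squeezing function `σ_Ω(z)` of a (bounded) domain `Ω`. -/
def squeezing (Ω : Set (Cn n)) (z : Cn n) : ℝ :=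
  sSup {r : ℝ | 0 < r ∧ ∃ f : Cn n → Cn n,
    DifferentiableOn ℂ f Ω ∧ Set.InjOn f Ω ∧ Set.MapsTo f Ω (Metric.ball 0 1) ∧
    f z = 0 ∧ Metric.ball (0 : Cn n) r ⊆ f '' Ω}

/-- The Kobayashi metric `κ_Ω(z;X)`. -/
def kobayashi (Ω : Set (Cn n)) (z X : Cn n) : ℝ :=
  sInf {r : ℝ | ∃ (α : ℂ) (φ : ℂ → Cn n),
    DifferentiableOn ℂ φ (Metric.ball 0 1) ∧ Set.MapsTo φ (Metric.ball 0 1) Ω ∧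
    φ 0 = z ∧ α • deriv φ 0 = X ∧ r = ‖α‖}

/-- The Carathéodory metric `γ_Ω(z;X)`. -/
def caratheodory (Ω : Set (Cn n)) (z X : Cn n) : ℝ :=
  sSup {r : ℝ | ∃ f : Cn n → ℂ,
    DifferentiableOn ℂ f Ω ∧ Set.MapsTo f Ω (Metric.ball 0 1) ∧
    r = ‖fderiv ℂ f z X‖}

/-- `⟨∂ρ(q),X⟩ = Σ_j (∂ρ/∂z_j)(q) X_j`, expressed via the real differential:
`⟨∂ρ(q),X⟩ = (Dρ(q)X - i·Dρ(q)(iX))/2`. -/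
def cderiv (ρ : Cn n → ℝ) (q X : Cn n) : ℂ :=
  (((fderiv ℝ ρ q X : ℝ) : ℂ) - Complex.I * ((fderiv ℝ ρ q (Complex.I • X) : ℝ) : ℂ)) / 2

/-- The Levi form `L_ρ(q;X) = Σ_{j,k} (∂²ρ/∂z_j∂z̄_k)(q) X_j X̄_k`, expressed via the real
second differential: `L_ρ(q;X) = (D²ρ(q)[X,X] + D²ρ(q)[iX,iX])/4`. -/
def leviForm (ρ : Cn n → ℝ) (q X : Cn n) : ℝ :=
  (fderiv ℝ (fun w => fderiv ℝ ρ w X) q X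
    + fderiv ℝ (fun w => fderiv ℝ ρ w (Complex.I • X)) q (Complex.I • X)) / 4

/-- `p` is a strictly pseudoconvex boundary point of `Ω` of class `C^{m,ε}`. -/
def IsStrictPscPtHolder (Ω : Set (Cn n)) (p : Cn n) (m : ℕ) (ε : ℝ) : Prop :=
  p ∈ frontier Ω ∧ ∃ W : Set (Cn n), IsOpen W ∧ p ∈ W ∧ ∃ ρ : Cn n → ℝ,
    ContDiffOn ℝ m ρ W ∧
    (∃ C : ℝ≥0, HolderOnWith C ε.toNNReal (iteratedFDeriv ℝ m ρ) W) ∧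
    Ω ∩ W = {z ∈ W | ρ z < 0} ∧
    (∀ q ∈ frontier Ω ∩ W, fderiv ℝ ρ q ≠ 0) ∧
    (∀ q ∈ frontier Ω ∩ W, ∀ X : Cn n, X ≠ 0 → cderiv ρ q X = 0 → 0 < leviForm ρ q X)

/-- `p` is a strictly pseudoconvex boundary point of `Ω` of class `C²`. -/
def IsStrictPscPtC2 (Ω : Set (Cn n)) (p : Cn n) : Prop :=
  p ∈ frontier Ω ∧ ∃ W : Set (Cn n), IsOpen W ∧ p ∈ W ∧ ∃ ρ : Cn n → ℝ,
    ContDiffOn ℝ 2 ρ W ∧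
    Ω ∩ W = {z ∈ W | ρ z < 0} ∧
    (∀ q ∈ frontier Ω ∩ W, fderiv ℝ ρ q ≠ 0) ∧
    (∀ q ∈ frontier Ω ∩ W, ∀ X : Cn n, X ≠ 0 → cderiv ρ q X = 0 → 0 < leviForm ρ q X)

/-- An open set `D ⊆ ℂⁿ` is pseudoconvex: `u = -log dist(·, Dᶜ)` is plurisubharmonic on `D`. -/
def IsPseudoconvex (D : Set (Cn n)) : Prop :=
  IsOpen D ∧
  UpperSemicontinuousOn (fun z => -Real.log (Metric.infDist z Dᶜ)) D ∧
  ∀ a ∈ D, ∀ w : Cn n, ∀ r : ℝ, 0 < r →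
    (∀ l : ℂ, ‖l‖ ≤ r → a + l • w ∈ D) →
    -Real.log (Metric.infDist a Dᶜ) ≤
      (1 / (2 * Real.pi)) * ∫ θ in (0:ℝ)..(2 * Real.pi),
        -Real.log (Metric.infDist (a + ((r : ℂ) * Complex.exp (θ * Complex.I)) • w) Dᶜ)

/-- `cl(Ω)` admits a Stein neighborhood basis. -/
def HasSteinBasis (Ω : Set (Cn n)) : Prop :=
  ∀ W : Set (Cn n), IsOpen W → closure Ω ⊆ W →
    ∃ U : Set (Cn n), IsPseudoconvex U ∧ closure Ω ⊆ U ∧ U ⊆ W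

/-- The squared `L²`-norm of `f` on `D` (as an extended nonnegative real). -/
def L2normSq (D : Set (Cn n)) (f : Cn n → ℂ) : ℝ≥0∞ := ∫⁻ w in D, (‖f w‖₊ : ℝ≥0∞) ^ 2

/-- `J⁰_D(z) = sup {|f(z)|² : f ∈ L²_h(D), ‖f‖_D ≤ 1}`; equals the Bergman kernel on the
diagonal. -/
def J0 (D : Set (Cn n)) (z : Cn n) : ℝ :=
  sSup {v : ℝ | ∃ f : Cn n → ℂ, DifferentiableOn ℂ f D ∧ L2normSq D f ≤ 1 ∧ v = ‖f z‖ ^ 2}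

/-- `J¹_D(z;X) = sup {|f'(z)X|² : f ∈ L²_h(D), ‖f‖_D ≤ 1, f(z) = 0}`. -/
def J1 (D : Set (Cn n)) (z X : Cn n) : ℝ :=
  sSup {v : ℝ | ∃ f : Cn n → ℂ, DifferentiableOn ℂ f D ∧ L2normSq D f ≤ 1 ∧ f z = 0 ∧
    v = ‖fderiv ℂ f z X‖ ^ 2}

/-- `J²_D(z;X,Y) = sup {|Σ_{j,k} f_{ζ_jζ_k}(z) X_j Y_k|² : f ∈ L²_h(D), ‖f‖_D ≤ 1,
f(z) = 0, f'(z) = 0}`. -/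
def J2 (D : Set (Cn n)) (z X Y : Cn n) : ℝ :=
  sSup {v : ℝ | ∃ f : Cn n → ℂ, DifferentiableOn ℂ f D ∧ L2normSq D f ≤ 1 ∧ f z = 0 ∧
    fderiv ℂ f z = 0 ∧ v = ‖fderiv ℂ (fun w => fderiv ℂ f w Y) z X‖ ^ 2}

/-- The Bergman metric `β_D(z;X) = (J¹_D(z;X)/J⁰_D(z))^{1/2}`. -/
def bergman (D : Set (Cn n)) (z X : Cn n) : ℝ := Real.sqrt (J1 D z X / J0 D z)

/-- The bisectional curvature of the Bergman metric. -/
def bisect (D : Set (Cn n)) (z X Y : Cn n) : ℝ :=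
  2 - J0 D z * J2 D z X Y / (J1 D z X * J1 D z Y)

/-- The holomorphic sectional curvature `s_D(z;X)` of the Bergman metric. -/
def sectCurv (D : Set (Cn n)) (z X : Cn n) : ℝ := bisect D z X X

/-- The Ricci curvature `r_D(z;X)` of the Bergman metric (w.r.t. the standard basis). -/
def ricciCurv (D : Set (Cn n)) (z X : Cn n) : ℝ :=
  ∑ j : Fin n, bisect D z (EuclideanSpace.single j 1) X

/-- The scalar curvature `t_D(z)` of the Bergman metric. -/
def scalarCurv (D : Set (Cn n)) (z : Cn n) : ℝ :=
  ∑ j : Fin n, ricciCurv D z (EuclideanSpace.single j 1)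

/-- `M(z;X) = ( |⟨∂δ_Ω(z),X⟩|²/δ_Ω(z)² + L(z;X)/δ_Ω(z) )^{1/2}`, where `L` is the Levi form
of `-δ_Ω`. -/
def Mfun (Ω : Set (Cn n)) (z X : Cn n) : ℝ :=
  Real.sqrt (‖cderiv (bdist Ω) z X‖ ^ 2 / (bdist Ω z) ^ 2
    + leviForm (fun w => -(bdist Ω w)) z X / bdist Ω z)

/-- The sesquilinear form of the Bergman metric, recovered from `β²` by polarization. -/
def bergForm (D : Set (Cn n)) (z X Y : Cn n) : ℂ :=
  (((J1 D z (X + Y) / J0 D z : ℝ) : ℂ) - ((J1 D z (X - Y) / J0 D z : ℝ) : ℂ)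
    + Complex.I * ((J1 D z (X + Complex.I • Y) / J0 D z : ℝ) : ℂ)
    - Complex.I * ((J1 D z (X - Complex.I • Y) / J0 D z : ℝ) : ℂ)) / 4

/-- The Hermitian matrix `(B_{jk}(z))` of the Bergman metric in the standard coordinates. -/
def bergMat (D : Set (Cn n)) (z : Cn n) : Matrix (Fin n) (Fin n) ℂ :=
  fun j k => bergForm D z (EuclideanSpace.single j 1) (EuclideanSpace.single k 1)

/-- The canonical Bergman invariant `J_D(z) = Δ_D(z)/K_D(z)`. -/
def canonInvariant (D : Set (Cn n)) (z : Cn n) : ℂ :=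
  (bergMat D z).det / ((J0 D z : ℝ) : ℂ)

/-! Near `p` the signed boundary distance `d` is of class `C^{k+2,ε}`: the foot point of `z` on the
boundary is found by inverting the `C^{k+1,ε}` map `(y, t) ↦ y + t N y`, and the gradient of `d` at
`z` is the inner normal `N` at the foot point, so `d` regains the lost derivative.

At a point `z` at distance `δ` from the boundary, the Taylor polynomial of `d` of degree `k + 2`
splits into the real part of a holomorphic polynomial and a Levi part. Completing squares gives
holomorphic `s` and `g`, vanishing at `z`, such that `δ + 2 Re s - |g|² + K |s|²` approximates `d`
to the order `2 + k + ε`, up to a multiple of `|s|`. With `κ = 1 - K δ`, the map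
`(√κ s, √δ g) / (δ + s)` sends the part of `Ω` near `z` into a ball of radius
`1 + O(δ^{(k+ε)/2})`, and at `z` its derivative in the direction `X` has norm `(1 + O(δ)) M(z; X)`.

At a fixed distance from `z` the squared norm of this map is `1 + O(δ)`. Hence a holomorphic factor
`exp (A δ P)`, with `P z = 0` and `Re P` negative away from `z`, makes the map strictly smaller
there at the cost of a factor `1 + O(δ)` in the bound, and this is enough for the Schwarz lemma to
hold on analytic discs that leave the neighbourhood of `p`. -/

/-! ### Local Hölder classes -/

section Holder

open Asymptotics Filter Topology

section HolderNear

variable {E F : Type*} [NormedAddCommGroup E] [NormedAddCommGroup F] {ε : ℝ} {x : E}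

/-- `f` is `ε`-Hölder continuous on some neighbourhood of `x`, with no prescribed constant. -/
def IsHolderNear (ε : ℝ) (f : E → F) (x : E) : Prop :=
  (fun q : E × E => f q.1 - f q.2) =O[𝓝 (x, x)] fun q => ‖q.1 - q.2‖ ^ ε

theorem isHolderNear_of_holderOnWith {f : E → F} {C r : ℝ≥0} {s : Set E} (hs : s ∈ 𝓝 x)
    (hf : HolderOnWith C r f s) : IsHolderNear r f x := by
  refine IsBigO.of_bound C ?_
  filter_upwards [prod_mem_nhds hs hs] with q hq
  rw [Real.norm_of_nonneg (by positivity), ← dist_eq_norm, ← dist_eq_norm]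
  exact hf.dist_le hq.1 hq.2

theorem IsHolderNear.congr {f g : E → F} (hf : IsHolderNear ε f x) (hfg : f =ᶠ[𝓝 x] g) :
    IsHolderNear ε g x := by
  refine IsBigO.congr' hf ?_ EventuallyEq.rfl
  filter_upwards [prod_mem_nhds hfg hfg] with q hq
  rw [show f q.1 = g q.1 from hq.1, show f q.2 = g q.2 from hq.2]

theorem IsHolderNear.continuousAt (hε : 0 < ε) {f : E → F} (hf : IsHolderNear ε f x) :
    ContinuousAt f x := by
  have hdiag : Tendsto (fun y => (y, x)) (𝓝 x) (𝓝 (x, x)) :=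
    tendsto_id.prodMk_nhds tendsto_const_nhds
  have hzero : Tendsto (fun y : E => ‖y - x‖ ^ ε) (𝓝 x) (𝓝 0) := by
    have : Continuous fun y : E => ‖y - x‖ ^ ε :=
      (continuous_sub_right x).norm.rpow_const fun _ => Or.inr hε.le
    simpa [Real.zero_rpow hε.ne'] using this.tendsto x
  exact tendsto_sub_nhds_zero_iff.1 ((hf.comp_tendsto hdiag).trans_tendsto hzero)

theorem IsHolderNear.eventually_continuousAt (hε : 0 < ε) {f : E → F} (hf : IsHolderNear ε f x) :
    ∀ᶠ y in 𝓝 x, ContinuousAt f y := by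
  have hev : ∀ᶠ y in 𝓝 x, IsHolderNear ε f y := by
    obtain ⟨C, hC⟩ := hf.bound
    have hdiag : Tendsto (fun y => (y, y)) (𝓝 x) (𝓝 (x, x)) :=
      tendsto_id.prodMk_nhds tendsto_id
    filter_upwards [hdiag.eventually hC.eventually_nhds] with y hy using IsBigO.of_bound C hy
  filter_upwards [hev] with y hy using hy.continuousAt hε

theorem IsHolderNear.add {f g : E → F} (hf : IsHolderNear ε f x) (hg : IsHolderNear ε g x) :
    IsHolderNear ε (fun y => f y + g y) x :=
  (IsBigO.add hf hg).congr_left fun _ => (add_sub_add_comm _ _ _ _).symm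

theorem IsHolderNear.clm_apply {G : Type*} [NormedSpace ℝ F] [NormedAddCommGroup G]
    [NormedSpace ℝ G] (L : F →L[ℝ] G) {f : E → F} (hf : IsHolderNear ε f x) :
    IsHolderNear ε (fun y => L (f y)) x :=
  ((L.isBigO_comp _ _).trans hf).congr_left fun _ => map_sub L _ _

theorem IsHolderNear.bilinear {G H : Type*} [NormedSpace ℝ F] [NormedAddCommGroup G]
    [NormedSpace ℝ G] [NormedAddCommGroup H] [NormedSpace ℝ H] (hε : 0 < ε)
    (B : F →L[ℝ] G →L[ℝ] H) {f : E → F} {g : E → G} (hf : IsHolderNear ε f x)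
    (hg : IsHolderNear ε g x) : IsHolderNear ε (fun y => B (f y) (g y)) x := by
  have hf0 : (fun q : E × E => f q.2) =O[𝓝 (x, x)] fun _ => (1 : ℝ) :=
    ((hf.continuousAt hε).tendsto.comp (continuous_snd.tendsto (x, x))).isBigO_one ℝ
  have hg0 : (fun q : E × E => g q.1) =O[𝓝 (x, x)] fun _ => (1 : ℝ) :=
    ((hg.continuousAt hε).tendsto.comp (continuous_fst.tendsto (x, x))).isBigO_one ℝ
  have hB : ∀ (a : E × E → F) (b : E × E → G),
      (fun q => B (a q) (b q)) =O[𝓝 (x, x)] fun q => ‖a q‖ * ‖b q‖ := fun a b =>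
    IsBigO.of_bound ‖B‖ <| Eventually.of_forall fun q => by
      simpa [mul_assoc] using B.le_opNorm₂ (a q) (b q)
  have h₁ := (hB _ _).trans (hf.norm_left.mul hg0.norm_left)
  have h₂ := (hB _ _).trans (hf0.norm_left.mul hg.norm_left)
  simp only [mul_one, one_mul] at h₁ h₂
  refine (h₁.add h₂).congr_left fun q => ?_
  simp

theorem isHolderNear_of_contDiffAt [NormedSpace ℝ E] [NormedSpace ℝ F] (hε : ε ≤ 1) {f : E → F}
    (hf : ContDiffAt ℝ 1 f x) :
    IsHolderNear ε f x := by
  refine (hf.hasStrictFDerivAt one_ne_zero).isBigO_sub.trans (IsBigO.of_bound 1 ?_)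
  have hsub : Tendsto (fun q : E × E => ‖q.1 - q.2‖) (𝓝 (x, x)) (𝓝 0) := by
    simpa using (continuous_fst.sub continuous_snd).norm.tendsto (x, x)
  filter_upwards [hsub.eventually_le_const one_pos] with q hq
  rw [Real.norm_of_nonneg (by positivity), one_mul]
  rcases (norm_nonneg (q.1 - q.2)).eq_or_lt with h0 | h0
  · rw [← h0]
    positivity
  · simpa using Real.rpow_le_rpow_of_exponent_ge h0 hq hε

theorem IsHolderNear.comp [NormedSpace ℝ E] [NormedSpace ℝ F] {G : Type*}
    [NormedAddCommGroup G] (hε : 0 ≤ ε) {g : F → G} {f : E → F} (hg : IsHolderNear ε g (f x))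
    (hf : ContDiffAt ℝ 1 f x) : IsHolderNear ε (fun y => g (f y)) x := by
  have hcont : Tendsto (fun q : E × E => (f q.1, f q.2)) (𝓝 (x, x)) (𝓝 (f x, f x)) :=
    (hf.continuousAt.tendsto.comp (continuous_fst.tendsto (x, x))).prodMk_nhds
      (hf.continuousAt.tendsto.comp (continuous_snd.tendsto (x, x)))
  refine (hg.comp_tendsto hcont).trans ?_
  exact (hf.hasStrictFDerivAt one_ne_zero).isBigO_sub.norm_norm.rpow hε
    (Eventually.of_forall fun _ => norm_nonneg _)

theorem IsHolderNear.contDiffAt_comp [NormedSpace ℝ F] {G : Type*} [NormedAddCommGroup G]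
    [NormedSpace ℝ G] (hε : 0 < ε) {g : F → G} {f : E → F}
    (hg : ContDiffAt ℝ 1 g (f x)) (hf : IsHolderNear ε f x) :
    IsHolderNear ε (fun y => g (f y)) x := by
  have hcont : Tendsto (fun q : E × E => (f q.1, f q.2)) (𝓝 (x, x)) (𝓝 (f x, f x)) :=
    ((hf.continuousAt hε).tendsto.comp (continuous_fst.tendsto (x, x))).prodMk_nhds
      ((hf.continuousAt hε).tendsto.comp (continuous_snd.tendsto (x, x)))
  exact ((hg.hasStrictFDerivAt one_ne_zero).isBigO_sub.comp_tendsto hcont).trans hf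

end HolderNear

universe u

variable {E F G H : Type u} [NormedAddCommGroup E] [NormedSpace ℝ E]
  [NormedAddCommGroup F] [NormedSpace ℝ F] [NormedAddCommGroup G] [NormedSpace ℝ G]
  [NormedAddCommGroup H] [NormedSpace ℝ H] {ε : ℝ} {m j : ℕ} {x : E}

theorem eventually_differentiableAt_of_contDiffAt {N : ℕ} {f : E → F}
    (hf : ContDiffAt ℝ (N + 1 : ℕ) f x) : ∀ᶠ y in 𝓝 x, DifferentiableAt ℝ f y := by
  filter_upwards [hf.eventually (by simp)] with y hy using hy.differentiableAt (by simp)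

/-- The class `C^{m,ε}` near `x`, encoded recursively: the first `m` Fréchet derivatives exist near
`x` and the `m`-th one is `ε`-Hölder continuous there. -/
def HolderContDiffAt (ε : ℝ) : ℕ → ∀ {F : Type u} [NormedAddCommGroup F] [NormedSpace ℝ F],
    (E → F) → E → Prop
  | 0, _, _, _, f, x => IsHolderNear ε f x
  | m + 1, _, _, _, f, x =>
    (∀ᶠ y in 𝓝 x, DifferentiableAt ℝ f y) ∧ HolderContDiffAt ε m (fderiv ℝ f) x

namespace HolderContDiffAt

theorem congr {f g : E → F} (hf : HolderContDiffAt ε m f x) (hfg : f =ᶠ[𝓝 x] g) :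
    HolderContDiffAt ε m g x := by
  induction m generalizing F with
  | zero => exact IsHolderNear.congr hf hfg
  | succ m ih =>
    refine ⟨?_, ih hf.2 hfg.fderiv⟩
    filter_upwards [hf.1, hfg.eventuallyEq_nhds] with y hy hy' using hy'.differentiableAt_iff.1 hy

theorem contDiffAt (hε : 0 < ε) {f : E → F} (hf : HolderContDiffAt ε m f x) :
    ContDiffAt ℝ m f x := by
  induction m generalizing F with
  | zero =>
    rw [Nat.cast_zero, contDiffAt_zero]
    exact ⟨_, IsHolderNear.eventually_continuousAt hε hf, fun y hy =>
      ContinuousAt.continuousWithinAt hy⟩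
  | succ m ih =>
    exact_mod_cast contDiffAt_succ_iff_hasFDerivAt.2
      ⟨fderiv ℝ f, ⟨_, hf.1, fun y hy => hy.hasFDerivAt⟩, ih hf.2⟩

theorem continuousAt (hε : 0 < ε) {f : E → F} (hf : HolderContDiffAt ε m f x) :
    ContinuousAt f x :=
  (hf.contDiffAt hε).continuousAt

theorem of_contDiffAt (hε : ε ≤ 1) {f : E → F} (hf : ContDiffAt ℝ (m + 1 : ℕ) f x) :
    HolderContDiffAt ε m f x := by
  induction m generalizing F with
  | zero => exact isHolderNear_of_contDiffAt hε (by exact_mod_cast hf)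
  | succ m ih =>
    exact ⟨eventually_differentiableAt_of_contDiffAt hf,
      ih (hf.fderiv_right (m := ((m + 1 : ℕ) : WithTop ℕ∞)) (by norm_cast))⟩

theorem of_le (hε : 0 < ε) (hε1 : ε ≤ 1) (hj : j ≤ m) {f : E → F}
    (hf : HolderContDiffAt ε m f x) : HolderContDiffAt ε j f x := by
  rcases hj.eq_or_lt with rfl | hj
  · exact hf
  · exact of_contDiffAt hε1 ((hf.contDiffAt hε).of_le (by exact_mod_cast hj))

theorem add {f g : E → F} (hf : HolderContDiffAt ε m f x) (hg : HolderContDiffAt ε m g x) :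
    HolderContDiffAt ε m (fun y => f y + g y) x := by
  induction m generalizing F with
  | zero => exact IsHolderNear.add hf hg
  | succ m ih =>
    refine ⟨?_, (ih hf.2 hg.2).congr ?_⟩ <;> filter_upwards [hf.1, hg.1] with y hfy hgy
    · exact hfy.add hgy
    · exact (fderiv_add hfy hgy).symm

theorem clm_apply (L : F →L[ℝ] G) {f : E → F} (hf : HolderContDiffAt ε m f x) :
    HolderContDiffAt ε m (fun y => L (f y)) x := by
  induction m generalizing F G with
  | zero => exact IsHolderNear.clm_apply L hf
  | succ m ih =>
    refine ⟨?_, (ih (ContinuousLinearMap.compL ℝ E F G L) hf.2).congr ?_⟩ <;>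
      filter_upwards [hf.1] with y hy
    · exact L.differentiableAt.comp y hy
    · exact (L.hasFDerivAt.comp y hy.hasFDerivAt).fderiv.symm

theorem prodMk {f : E → F} {g : E → G} (hf : HolderContDiffAt ε m f x)
    (hg : HolderContDiffAt ε m g x) : HolderContDiffAt ε m (fun y => (f y, g y)) x :=
  ((hf.clm_apply (ContinuousLinearMap.inl ℝ F G)).add
    (hg.clm_apply (ContinuousLinearMap.inr ℝ F G))).congr (Eventually.of_forall fun y => by simp)

theorem bilinear (hε : 0 < ε) (hε1 : ε ≤ 1) (B : F →L[ℝ] G →L[ℝ] H) {f : E → F} {g : E → G}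
    (hf : HolderContDiffAt ε m f x) (hg : HolderContDiffAt ε m g x) :
    HolderContDiffAt ε m (fun y => B (f y) (g y)) x := by
  induction m generalizing F G H with
  | zero => exact IsHolderNear.bilinear hε B hf hg
  | succ m ih =>
    refine ⟨?_, ((ih (ContinuousLinearMap.precompR E B) (hf.of_le hε hε1 m.le_succ) hg.2).add
      (ih (ContinuousLinearMap.precompL E B) hf.2 (hg.of_le hε hε1 m.le_succ))).congr ?_⟩ <;>
      filter_upwards [hf.1, hg.1] with y hfy hgy
    · exact (B.hasFDerivAt_of_bilinear hfy.hasFDerivAt hgy.hasFDerivAt).differentiableAt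
    · exact (B.hasFDerivAt_of_bilinear hfy.hasFDerivAt hgy.hasFDerivAt).fderiv.symm

theorem comp_succ (hε : 0 < ε) (hε1 : ε ≤ 1) {g : F → G} {f : E → F}
    (hg : ∀ᶠ y in 𝓝 (f x), DifferentiableAt ℝ g y) (hf : HolderContDiffAt ε (m + 1) f x)
    (hgf : HolderContDiffAt ε m (fun y => fderiv ℝ g (f y)) x) :
    HolderContDiffAt ε (m + 1) (fun y => g (f y)) x := by
  have hd : ∀ᶠ y in 𝓝 x, DifferentiableAt ℝ f y ∧ DifferentiableAt ℝ g (f y) :=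
    hf.1.and ((hf.continuousAt hε).eventually hg)
  exact ⟨hd.mono fun y hy => hy.2.comp y hy.1,
    (bilinear hε hε1 (ContinuousLinearMap.compL ℝ E F G) hgf hf.2).congr
      (hd.mono fun y hy => (fderiv_comp y hy.2 hy.1).symm)⟩

theorem comp (hε : 0 < ε) (hε1 : ε ≤ 1) {g : F → G} {f : E → F}
    (hg : HolderContDiffAt ε m g (f x)) (hf : HolderContDiffAt ε m f x)
    (hf1 : ContDiffAt ℝ 1 f x) : HolderContDiffAt ε m (fun y => g (f y)) x := by
  induction m generalizing G with
  | zero => exact IsHolderNear.comp hε.le hg hf1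
  | succ m ih => exact comp_succ hε hε1 hg.1 hf (ih hg.2 (hf.of_le hε hε1 m.le_succ))

theorem contDiffAt_comp (hε : 0 < ε) (hε1 : ε ≤ 1) {g : F → G} {f : E → F}
    (hg : ContDiffAt ℝ (m + 1 : ℕ) g (f x)) (hf : HolderContDiffAt ε m f x) :
    HolderContDiffAt ε m (fun y => g (f y)) x := by
  induction m generalizing G with
  | zero => exact IsHolderNear.contDiffAt_comp hε (by exact_mod_cast hg) hf
  | succ m ih =>
    exact comp_succ hε hε1 (eventually_differentiableAt_of_contDiffAt hg) hf
      (ih (hg.fderiv_right (m := ((m + 1 : ℕ) : WithTop ℕ∞)) (by norm_cast))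
        (hf.of_le hε hε1 m.le_succ))

theorem of_iteratedFDeriv {f : E → F} (hf : ContDiffAt ℝ m f x)
    (hm : IsHolderNear ε (iteratedFDeriv ℝ m f) x) : HolderContDiffAt ε m f x := by
  induction m generalizing F with
  | zero =>
    refine IsBigO.congr_left hm.norm_left (fun q => ?_) |>.of_norm_left
    simp only [iteratedFDeriv_zero_eq_comp, Function.comp_apply, ← map_sub,
      LinearIsometryEquiv.norm_map]
  | succ m ih =>
    refine ⟨eventually_differentiableAt_of_contDiffAt hf,
      ih (hf.fderiv_right (m := (m : WithTop ℕ∞)) (by norm_cast)) ?_⟩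
    refine IsBigO.congr_left hm.norm_left (fun q => ?_) |>.of_norm_left
    simp only [iteratedFDeriv_succ_eq_comp_right, Function.comp_apply, ← dist_eq_norm,
      LinearIsometryEquiv.dist_map]

end HolderContDiffAt

theorem fderiv_eventuallyEq_inverse_of_rightInverse {f : E → F} {g : F → E} {b : F}
    (e : E ≃L[ℝ] F) (he : fderiv ℝ f (g b) = (e : E →L[ℝ] F))
    (hf : ∀ᶠ x in 𝓝 (g b), DifferentiableAt ℝ f x)
    (hf' : ContinuousAt (fderiv ℝ f) (g b)) (hg : ContDiffAt ℝ 1 g b)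
    (hfg : ∀ᶠ y in 𝓝 b, f (g y) = y) [CompleteSpace E] :
    (fun y => ContinuousLinearMap.inverse (fderiv ℝ f (g y))) =ᶠ[𝓝 b] fderiv ℝ g := by
  have hequiv : ∀ᶠ y in 𝓝 b, fderiv ℝ f (g y) ∈ range ((↑) : (E ≃L[ℝ] F) → E →L[ℝ] F) := by
    refine (hf'.comp hg.continuousAt).eventually ?_
    rw [Function.comp_apply, he]
    exact e.nhds
  filter_upwards [eventually_differentiableAt_of_contDiffAt (N := 0) (by exact_mod_cast hg), hequiv,
    hfg.eventually_nhds, hg.continuousAt.eventually hf] with y hgy ⟨e', he'⟩ hid hfy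
  have hcomp : (fderiv ℝ f (g y)).comp (fderiv ℝ g y) = ContinuousLinearMap.id ℝ F :=
    (hfy.hasFDerivAt.comp y hgy.hasFDerivAt).unique
      ((hasFDerivAt_id y).congr_of_eventuallyEq hid)
  rw [← he'] at hcomp ⊢
  rw [ContinuousLinearMap.inverse_equiv]
  ext v
  simpa using congrArg (fun L => e'.symm (L v)) hcomp.symm

theorem HolderContDiffAt.of_rightInverse [CompleteSpace E] (hε : 0 < ε) (hε1 : ε ≤ 1) {f : E → F}
    {g : F → E} {b : F} (e : E ≃L[ℝ] F) (hf : HolderContDiffAt ε (m + 1) f (g b))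
    (he : fderiv ℝ f (g b) = (e : E →L[ℝ] F)) (hg : ContDiffAt ℝ 1 g b)
    (hfg : ∀ᶠ y in 𝓝 b, f (g y) = y) : HolderContDiffAt ε (m + 1) g b := by
  suffices ∀ j ≤ m + 1, HolderContDiffAt ε j g b from this _ le_rfl
  intro j
  induction j with
  | zero => exact fun _ => of_contDiffAt hε1 (by exact_mod_cast hg)
  | succ j ih =>
    intro hj
    have hfg' : HolderContDiffAt ε j (fun y => fderiv ℝ f (g y)) b :=
      comp hε hε1 (hf.2.of_le hε hε1 (by omega)) (ih (by omega)) hg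
    have hinv : HolderContDiffAt ε j (fun y => (fderiv ℝ f (g y)).inverse) b :=
      contDiffAt_comp hε hε1 (he ▸ contDiffAt_map_inverse e) hfg'
    exact ⟨eventually_differentiableAt_of_contDiffAt (N := 0) (by exact_mod_cast hg),
      hinv.congr (fderiv_eventuallyEq_inverse_of_rightInverse e he hf.1
        (hf.2.continuousAt hε) hg hfg)⟩

end Holder

/-! ### Locally uniform Taylor expansions -/

section Taylor

open Asymptotics Filter Topology

universe u

variable {E F : Type u} [NormedAddCommGroup E] [NormedSpace ℝ E]
  [NormedAddCommGroup F] [NormedSpace ℝ F] {ε : ℝ} {m : ℕ} {x : E}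

theorem iteratedFDeriv_succ_apply_const (f : E → F) (z h : E) (j : ℕ) :
    iteratedFDeriv ℝ (j + 1) f z (fun _ => h) =
      iteratedFDeriv ℝ j (fderiv ℝ f) z (fun _ => h) h :=
  iteratedFDeriv_succ_apply_right _

/-- The value at time `t` of the degree `m` Taylor polynomial of `s ↦ f (z + s • h)` at `0`. -/
def taylorAlong (m : ℕ) (f : E → F) (z h : E) (t : ℝ) : F :=
  ∑ j ∈ Finset.range (m + 1), (t ^ j / j.factorial) • iteratedFDeriv ℝ j f z fun _ => h

theorem taylorAlong_apply_smul (f : E → F) (z h : E) (t : ℝ) :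
    taylorAlong m f z (t • h) 1 = taylorAlong m f z h t := by
  refine Finset.sum_congr rfl fun j _ => ?_
  have hj := (iteratedFDeriv ℝ j f z).map_smul_univ (fun _ => t) (fun _ => h)
  rw [hj, Finset.prod_const, Finset.card_univ, Fintype.card_fin, smul_smul, one_pow,
    div_mul_eq_mul_div, one_mul]

theorem taylorAlong_zero (f : E → F) (z h : E) : taylorAlong m f z h 0 = f z := by
  rw [taylorAlong, Finset.sum_eq_single_of_mem 0 (by simp) fun j _ hj => by simp [hj]]
  simp

theorem hasDerivAt_taylorAlong (f : E → F) (z h : E) (t : ℝ) :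
    HasDerivAt (taylorAlong (m + 1) f z h) (taylorAlong m (fderiv ℝ f) z h t h) t := by
  have hterm : ∀ j : ℕ, HasDerivAt
      (fun s : ℝ => (s ^ (j + 1) / (j + 1).factorial) • iteratedFDeriv ℝ (j + 1) f z fun _ => h)
      ((t ^ j / j.factorial) • iteratedFDeriv ℝ j (fderiv ℝ f) z (fun _ => h) h) t := fun j => by
    have hcoef : HasDerivAt (fun s : ℝ => s ^ (j + 1) / (j + 1).factorial)
        (t ^ j / j.factorial) t := by
      refine ((hasDerivAt_pow (j + 1) t).div_const _).congr_deriv ?_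
      rw [Nat.factorial_succ, Nat.add_sub_cancel]
      push_cast
      exact mul_div_mul_left _ _ (by positivity)
    simpa only [iteratedFDeriv_succ_apply_const] using hcoef.smul_const _
  have hsum := (HasDerivAt.fun_sum fun j (_ : j ∈ Finset.range (m + 1)) => hterm j).add_const (f z)
  rw [taylorAlong, sum_apply]
  refine hsum.congr_of_eventuallyEq (Eventually.of_forall fun s => ?_)
  simp [taylorAlong, Finset.sum_range_succ' _ (m + 1)]

theorem norm_sub_taylorAlong_le {f : E → F} {s : Set E} (hs : Convex ℝ s)
    (hf : ∀ y ∈ s, DifferentiableAt ℝ f y) {z h : E} (hz : z ∈ s) (hzh : z + h ∈ s) {C : ℝ}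
    (hC : ∀ t ∈ Icc (0 : ℝ) 1, z + t • h ∈ s →
      ‖fderiv ℝ f (z + t • h) - taylorAlong m (fderiv ℝ f) z h t‖ ≤ C) :
    ‖f (z + h) - taylorAlong (m + 1) f z h 1‖ ≤ C * ‖h‖ := by
  have hseg : ∀ t ∈ Icc (0 : ℝ) 1, z + t • h ∈ s := fun t ht => by
    simpa using hs.add_smul_sub_mem hz hzh ht
  have hderiv : ∀ t ∈ Icc (0 : ℝ) 1, HasDerivWithinAt
      (fun t : ℝ => f (z + t • h) - taylorAlong (m + 1) f z h t)
      ((fderiv ℝ f (z + t • h) - taylorAlong m (fderiv ℝ f) z h t) h) (Icc 0 1) t := fun t ht => by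
    have hline : HasDerivAt (fun t : ℝ => z + t • h) h t := by
      simpa using ((hasDerivAt_id t).smul_const h).const_add z
    exact (((hf _ (hseg t ht)).hasFDerivAt.comp_hasDerivAt t hline).sub
      (hasDerivAt_taylorAlong f z h t)).hasDerivWithinAt
  have hmean := norm_image_sub_le_of_norm_deriv_le_segment_01' hderiv fun t ht =>
    (ContinuousLinearMap.le_opNorm _ h).trans
      (mul_le_mul_of_nonneg_right (hC t (Ico_subset_Icc_self ht)
        (hseg t (Ico_subset_Icc_self ht))) (norm_nonneg h))
  simpa [taylorAlong_zero] using hmean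

theorem HolderContDiffAt.isBigO_sub_taylorAlong (hε : 0 < ε) {f : E → F}
    (hf : HolderContDiffAt ε m f x) :
    (fun q : E × E => f q.1 - taylorAlong m f q.2 (q.1 - q.2) 1) =O[𝓝 (x, x)]
      fun q => ‖q.1 - q.2‖ ^ (m + ε) := by
  induction m generalizing F with
  | zero =>
    refine IsBigO.congr hf (fun q => ?_) (fun q => by rw [Nat.cast_zero, zero_add])
    simp [taylorAlong]
  | succ m ih =>
    obtain ⟨C, hC0, hC⟩ := (ih hf.2).exists_nonneg
    obtain ⟨r, hr, hball⟩ := Metric.eventually_nhds_iff_ball.1 (hC.bound.and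
      ((continuous_fst.tendsto (x, x)).eventually hf.1))
    have hmem : ∀ y ∈ ball x r, ∀ z ∈ ball x r, (y, z) ∈ ball (x, x) r := fun y hy z hz => by
      rw [← ball_prod_same]
      exact ⟨hy, hz⟩
    refine IsBigO.of_bound C ?_
    filter_upwards [ball_mem_nhds (x, x) hr] with ⟨y, z⟩ hq
    obtain ⟨hy, hz⟩ : y ∈ ball x r ∧ z ∈ ball x r := by rwa [← ball_prod_same] at hq
    have hbound := norm_sub_taylorAlong_le (m := m) (z := z) (h := y - z)
      (C := C * ‖y - z‖ ^ (m + ε)) (convex_ball x r) (fun w hw => (hball _ (hmem w hw z hz)).2) hz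
      (by simpa using hy) fun t ht hw => ?_
    · rw [Real.norm_of_nonneg (by positivity), Nat.cast_succ, add_right_comm,
        Real.rpow_add_of_nonneg (norm_nonneg _) (by positivity) zero_le_one, Real.rpow_one,
        ← mul_assoc]
      simpa using hbound
    · have hfderiv := (hball _ (hmem _ hw z hz)).1
      simp only [add_sub_cancel_left, taylorAlong_apply_smul] at hfderiv
      rw [Real.norm_of_nonneg (by positivity), norm_smul, Real.norm_of_nonneg ht.1] at hfderiv
      refine hfderiv.trans (mul_le_mul_of_nonneg_left ?_ hC0)
      exact Real.rpow_le_rpow (mul_nonneg ht.1 (norm_nonneg _))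
        (mul_le_of_le_one_left (norm_nonneg _) ht.2) (by positivity)

theorem taylorAlong_two (f : E → F) (z h : E) : taylorAlong 2 f z h 1 =
    f z + fderiv ℝ f z h + (1 / 2 : ℝ) • fderiv ℝ (fderiv ℝ f) z h h := by
  simp [taylorAlong, Finset.sum_range_succ, iteratedFDeriv_succ_apply_const]

theorem taylorAlong_three (f : E → F) (z h : E) : taylorAlong 3 f z h 1 =
    f z + fderiv ℝ f z h + (1 / 2 : ℝ) • fderiv ℝ (fderiv ℝ f) z h h
      + (1 / 6 : ℝ) • fderiv ℝ (fderiv ℝ (fderiv ℝ f)) z h h h := by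
  simp [taylorAlong, Finset.sum_range_succ, iteratedFDeriv_succ_apply_const, Nat.factorial]

theorem fderiv_fderiv_comm {f : E → F} {z : E} (hf : ContDiffAt ℝ 2 f z) (v w : E) :
    fderiv ℝ (fderiv ℝ f) z v w = fderiv ℝ (fderiv ℝ f) z w v :=
  (hf.isSymmSndFDerivAt (by simp)) v w

theorem fderiv_fderiv_fderiv_right_comm {f : E → F} {z : E} (hf : ContDiffAt ℝ 3 f z)
    (u v w : E) : fderiv ℝ (fderiv ℝ (fderiv ℝ f)) z u v w =
      fderiv ℝ (fderiv ℝ (fderiv ℝ f)) z u w v := by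
  have hB : DifferentiableAt ℝ (fderiv ℝ (fderiv ℝ f)) z :=
    ((hf.fderiv_right (m := 2) (by norm_num)).fderiv_right (m := 1)
      (by norm_num)).differentiableAt one_ne_zero
  have happly : ∀ a b : E, HasFDerivAt (fun y => fderiv ℝ (fderiv ℝ f) y a b)
      (((fderiv ℝ (fderiv ℝ (fderiv ℝ f)) z).flip a).flip b) z := fun a b => by
    refine ((hB.hasFDerivAt.clm_apply (hasFDerivAt_const a z)).clm_apply
      (hasFDerivAt_const b z)).congr_fderiv ?_
    ext
    simp
  have hsymm : (fun y => fderiv ℝ (fderiv ℝ f) y w v) =ᶠ[𝓝 z]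
      fun y => fderiv ℝ (fderiv ℝ f) y v w := by
    filter_upwards [(hf.of_le (m := 2) (by norm_num)).eventually (by simp)] with y hy
    exact fderiv_fderiv_comm hy w v
  exact DFunLike.congr_fun
    (((happly v w).congr_of_eventuallyEq hsymm).unique (happly w v)) u

end Taylor

/-! ### The signed distance to a regular level set -/

section SignedDistance

open Filter Topology InnerProductSpace
open scoped Gradient

variable {E : Type} [NormedAddCommGroup E] [InnerProductSpace ℝ E] [CompleteSpace E]
  {ε : ℝ} {m : ℕ} {ρ d : E → ℝ} {π : E → E} {p q x y : E}

/-- The inverse Riesz map `(toDual ℝ E).symm`, which in Mathlib is only conjugate-linear by type, as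
a real continuous linear map. -/
def rieszRepresentative : (E →L[ℝ] ℝ) →L[ℝ] E :=
  LinearMap.mkContinuous
    { toFun := fun l => (toDual ℝ E).symm l
      map_add' := map_add _
      map_smul' := fun a l => by simp } 1 fun l => by simp

/-- The unit normal to the level sets of `ρ` which points towards decreasing values of `ρ`. It is
`0` at critical points of `ρ`. -/
def innerNormal (ρ : E → ℝ) (y : E) : E := -(‖∇ ρ y‖⁻¹ • ∇ ρ y)

theorem norm_gradient : ‖∇ ρ y‖ = ‖fderiv ℝ ρ y‖ := by
  rw [← toDual_gradient, LinearIsometryEquiv.norm_map]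

theorem inner_innerNormal (v : E) :
    inner ℝ (innerNormal ρ y) v = -‖fderiv ℝ ρ y‖⁻¹ * fderiv ℝ ρ y v := by
  rw [innerNormal, inner_neg_left, real_inner_smul_left, inner_gradient_left, norm_gradient,
    neg_mul]

theorem norm_innerNormal (h : fderiv ℝ ρ y ≠ 0) : ‖innerNormal ρ y‖ = 1 := by
  rw [innerNormal, norm_neg, norm_smul, norm_inv, norm_norm, norm_gradient,
    inv_mul_cancel₀ (norm_ne_zero_iff.2 h)]

theorem fderiv_innerNormal (h : fderiv ℝ ρ y ≠ 0) :
    fderiv ℝ ρ y (innerNormal ρ y) = -‖fderiv ℝ ρ y‖ := by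
  have hself := inner_innerNormal (ρ := ρ) (y := y) (innerNormal ρ y)
  rw [real_inner_self_eq_norm_sq, norm_innerNormal h] at hself
  have : ‖fderiv ℝ ρ y‖ ≠ 0 := norm_ne_zero_iff.2 h
  field_simp at hself
  linarith

theorem contDiffAt_neg_normalize_rieszRepresentative {N : WithTop ℕ∞} {l : E →L[ℝ] ℝ}
    (hl : l ≠ 0) :
    ContDiffAt ℝ N (fun l : E →L[ℝ] ℝ => -(‖rieszRepresentative l‖⁻¹ • rieszRepresentative l)) l :=
  have hR : ContDiffAt ℝ N (fun l : E →L[ℝ] ℝ => rieszRepresentative l) l :=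
    rieszRepresentative.contDiff.contDiffAt
  have hl' : rieszRepresentative l ≠ 0 := by simpa [rieszRepresentative] using hl
  (((hR.norm ℝ hl').inv (norm_ne_zero_iff.2 hl')).smul hR).neg

theorem contDiffAt_innerNormal (hρ : ContDiffAt ℝ (m + 1 : ℕ) ρ p) (hp : fderiv ℝ ρ p ≠ 0) :
    ContDiffAt ℝ m (innerNormal ρ) p :=
  (contDiffAt_neg_normalize_rieszRepresentative hp).comp p
    (hρ.fderiv_right (m := (m : WithTop ℕ∞)) (by norm_cast))

theorem holderContDiffAt_innerNormal (hε : 0 < ε) (hε1 : ε ≤ 1)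
    (hρ : HolderContDiffAt ε (m + 1) ρ p) (hp : fderiv ℝ ρ p ≠ 0) :
    HolderContDiffAt ε m (innerNormal ρ) p :=
  hρ.2.contDiffAt_comp hε hε1
    (g := fun l => -(‖rieszRepresentative l‖⁻¹ • rieszRepresentative l))
    (contDiffAt_neg_normalize_rieszRepresentative hp)

theorem inner_innerNormal_fderiv_innerNormal (hρ : ContDiffAt ℝ 2 ρ y) (hy : fderiv ℝ ρ y ≠ 0)
    (v : E) : inner ℝ (innerNormal ρ y) (fderiv ℝ (innerNormal ρ) y v) = 0 := by
  have hN : DifferentiableAt ℝ (innerNormal ρ) y :=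
    (contDiffAt_innerNormal (m := 1) hρ hy).differentiableAt one_ne_zero
  have hunit : (fun y => ‖innerNormal ρ y‖ ^ 2) =ᶠ[𝓝 y] fun _ => 1 := by
    filter_upwards [(hρ.fderiv_right (m := 1) (by norm_num)).continuousAt.eventually_ne hy]
      with z hz
    rw [norm_innerNormal hz, one_pow]
  have hderiv := hN.hasFDerivAt.norm_sq.unique
    ((hasFDerivAt_const (1 : ℝ) y).congr_of_eventuallyEq hunit)
  simpa using DFunLike.congr_fun hderiv v

/-- The map which sends a foot point `y.1` and a height `y.2` to the point at this height on the
normal line, together with the level of the foot point. Its local inverse is a tubular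
projection. -/
def normalTubeMap (ρ : E → ℝ) (y : E × ℝ) : E × ℝ := (y.1 + y.2 • innerNormal ρ y.1, ρ y.1)

theorem holderContDiffAt_normalTubeMap (hε : 0 < ε) (hε1 : ε ≤ 1)
    (hρ : HolderContDiffAt ε (m + 1) ρ p) (hp : fderiv ℝ ρ p ≠ 0) :
    HolderContDiffAt ε m (normalTubeMap ρ) (p, (0 : ℝ)) := by
  have hfst : HolderContDiffAt ε m (fun y : E × ℝ => y.1) (p, (0 : ℝ)) :=
    .of_contDiffAt hε1 contDiffAt_fst
  have hsnd : HolderContDiffAt ε m (fun y : E × ℝ => y.2) (p, (0 : ℝ)) :=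
    .of_contDiffAt hε1 contDiffAt_snd
  have hN : HolderContDiffAt ε m (fun y : E × ℝ => innerNormal ρ y.1) (p, (0 : ℝ)) :=
    .comp hε hε1 (f := fun y : E × ℝ => y.1) (holderContDiffAt_innerNormal hε hε1 hρ hp) hfst
      contDiffAt_fst
  have hlevel : HolderContDiffAt ε m (fun y : E × ℝ => ρ y.1) (p, (0 : ℝ)) :=
    .comp hε hε1 (f := fun y : E × ℝ => y.1) (hρ.of_le hε hε1 m.le_succ) hfst contDiffAt_fst
  exact (hfst.add (.bilinear hε hε1 (ContinuousLinearMap.lsmul ℝ ℝ) hsnd hN)).prodMk hlevel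

/-- The linear isomorphism `(v, s) ↦ (v + s • N, l v)`, for a vector `N` transversal to the kernel
of `l`. It is the derivative of `normalTubeMap`. -/
def tubeEquiv (l : E →L[ℝ] ℝ) (N : E) (hN : l N ≠ 0) : (E × ℝ) ≃L[ℝ] (E × ℝ) :=
  let height : (E × ℝ) →L[ℝ] ℝ :=
    (l N)⁻¹ • (l.comp (ContinuousLinearMap.fst ℝ E ℝ) - ContinuousLinearMap.snd ℝ E ℝ)
  ContinuousLinearEquiv.equivOfInverse
    ((ContinuousLinearMap.fst ℝ E ℝ + (ContinuousLinearMap.snd ℝ E ℝ).smulRight N).prod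
      (l.comp (ContinuousLinearMap.fst ℝ E ℝ)))
    ((ContinuousLinearMap.fst ℝ E ℝ - height.smulRight N).prod height)
    (fun ⟨v, s⟩ => by simp [height, mul_comm, hN])
    (fun ⟨v, s⟩ => by
      have : l v - (l N)⁻¹ * (l v - s) * l N = s := by field_simp; ring
      simp [height, this])

theorem hasFDerivAt_normalTubeMap (hρ : ContDiffAt ℝ 2 ρ p) (hp : fderiv ℝ ρ p ≠ 0)
    (hN : fderiv ℝ ρ p (innerNormal ρ p) ≠ 0) :
    HasFDerivAt (normalTubeMap ρ)
      (tubeEquiv (fderiv ℝ ρ p) (innerNormal ρ p) hN : (E × ℝ) →L[ℝ] (E × ℝ)) (p, 0) := by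
  have hN' : HasFDerivAt (fun y : E × ℝ => innerNormal ρ y.1) _ (p, (0 : ℝ)) :=
    HasFDerivAt.comp (p, (0 : ℝ)) (f := fun y : E × ℝ => y.1)
      ((contDiffAt_innerNormal (m := 1) hρ hp).differentiableAt one_ne_zero).hasFDerivAt
      hasFDerivAt_fst
  have hlevel : HasFDerivAt (fun y : E × ℝ => ρ y.1) _ (p, (0 : ℝ)) :=
    HasFDerivAt.comp (p, (0 : ℝ)) (f := fun y : E × ℝ => y.1)
      (hρ.differentiableAt two_ne_zero).hasFDerivAt hasFDerivAt_fst
  refine ((hasFDerivAt_fst.add (hasFDerivAt_snd.smul hN')).prodMk hlevel).congr_fderiv ?_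
  ext v <;> simp [tubeEquiv]

/-- Near `p`, every point `x` lies on the normal line through the point `π x` of the level set
`ρ = 0`, at the height `d x`; this decomposition is unique and continuously differentiable. -/
structure IsTubularProjection (ρ : E → ℝ) (p : E) (π : E → E) (d : E → ℝ) : Prop where
  proj_self : π p = p
  height_self : d p = 0
  contDiffAt_proj : ContDiffAt ℝ 1 π p
  contDiffAt_height : ContDiffAt ℝ 1 d p
  add_smul : ∀ᶠ x in 𝓝 p, π x + d x • innerNormal ρ (π x) = x
  level : ∀ᶠ x in 𝓝 p, ρ (π x) = 0
  height_add_smul : ∀ᶠ y in 𝓝 (p, (0 : ℝ)), ρ y.1 = 0 → d (y.1 + y.2 • innerNormal ρ y.1) = y.2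

theorem exists_localInverse_normalTubeMap (hε : 0 < ε) (hε1 : ε ≤ 1)
    (hρ : HolderContDiffAt ε (m + 2) ρ p) (h0 : ρ p = 0) (hp : fderiv ℝ ρ p ≠ 0) :
    ∃ G : E × ℝ → E × ℝ, HolderContDiffAt ε (m + 1) G (p, 0) ∧ G (p, 0) = (p, 0) ∧
      (∀ᶠ y in 𝓝 (p, (0 : ℝ)), G (normalTubeMap ρ y) = y) ∧
      ∀ᶠ y in 𝓝 (p, (0 : ℝ)), normalTubeMap ρ (G y) = y := by
  have hN : fderiv ℝ ρ p (innerNormal ρ p) ≠ 0 := by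
    rw [fderiv_innerNormal hp]
    exact neg_ne_zero.2 (norm_ne_zero_iff.2 hp)
  have hF := holderContDiffAt_normalTubeMap hε hε1 hρ hp
  have hF1 : ContDiffAt ℝ 1 (normalTubeMap ρ) (p, 0) :=
    (hF.contDiffAt hε).of_le (by norm_cast; lia)
  have hρ2 : ContDiffAt ℝ 2 ρ p := (hρ.contDiffAt hε).of_le (by norm_cast; lia)
  have hF' := hasFDerivAt_normalTubeMap hρ2 hp hN
  have hFp : normalTubeMap ρ (p, 0) = (p, 0) := by simp [normalTubeMap, h0]
  have hstrict := hF1.hasStrictFDerivAt' hF' one_ne_zero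
  have hGp : hF1.localInverse hF' one_ne_zero (p, 0) = (p, 0) := by
    simpa only [hFp] using hF1.localInverse_apply_image hF' one_ne_zero
  have hG1 := hF1.to_localInverse hF' one_ne_zero
  have hright := hstrict.eventually_right_inverse
  rw [hFp] at hG1 hright
  refine ⟨hF1.localInverse hF' one_ne_zero, ?_, hGp, hstrict.eventually_left_inverse, hright⟩
  exact HolderContDiffAt.of_rightInverse hε hε1 (tubeEquiv _ _ hN) (by rwa [hGp])
    (by rw [hGp, hF'.fderiv]) hG1 hright

theorem exists_isTubularProjection (hε : 0 < ε) (hε1 : ε ≤ 1)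
    (hρ : HolderContDiffAt ε (m + 2) ρ p) (h0 : ρ p = 0) (hp : fderiv ℝ ρ p ≠ 0) :
    ∃ π d, HolderContDiffAt ε (m + 1) π p ∧ HolderContDiffAt ε (m + 1) d p ∧
      IsTubularProjection ρ p π d := by
  obtain ⟨G, hG, hGp, hleft, hright⟩ := exists_localInverse_normalTubeMap hε hε1 hρ h0 hp
  have hslice : ContDiff ℝ (m + 1 + 1 : ℕ) fun x : E => (x, (0 : ℝ)) :=
    contDiff_id.prodMk contDiff_const
  have hslice0 : Tendsto (fun x : E => (x, (0 : ℝ))) (𝓝 p) (𝓝 (p, 0)) :=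
    hslice.continuous.tendsto p
  have hGslice : HolderContDiffAt ε (m + 1) (fun x : E => G (x, (0 : ℝ))) p :=
    HolderContDiffAt.comp hε hε1 (f := fun x : E => (x, (0 : ℝ))) hG
      (.of_contDiffAt hε1 hslice.contDiffAt) (contDiff_id.prodMk contDiff_const).contDiffAt
  refine ⟨fun x => (G (x, 0)).1, fun x => (G (x, 0)).2,
    hGslice.clm_apply (ContinuousLinearMap.fst ℝ E ℝ),
    hGslice.clm_apply (ContinuousLinearMap.snd ℝ E ℝ), by simp [hGp], by simp [hGp],
    (hGslice.contDiffAt hε).fst.of_le (by norm_cast; lia),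
    (hGslice.contDiffAt hε).snd.of_le (by norm_cast; lia),
    (hslice0.eventually hright).mono fun x hx => congrArg Prod.fst hx,
    (hslice0.eventually hright).mono fun x hx => congrArg Prod.snd hx, ?_⟩
  filter_upwards [hleft] with y hy hρy
  simpa only [normalTubeMap, hρy] using congrArg Prod.snd hy

namespace IsTubularProjection

theorem eventually_proj (h : IsTubularProjection ρ p π d) {P : E → Prop}
    (hP : ∀ᶠ y in 𝓝 p, P y) : ∀ᶠ x in 𝓝 p, P (π x) := by
  have hcont := h.contDiffAt_proj.continuousAt.tendsto
  rw [h.proj_self] at hcont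
  exact hcont.eventually hP

theorem eventually_fderiv_level_comp (h : IsTubularProjection ρ p π d) (hρ : ContDiffAt ℝ 2 ρ p) :
    ∀ᶠ x in 𝓝 p, ∀ v, fderiv ℝ ρ (π x) (fderiv ℝ π x v) = 0 := by
  filter_upwards [eventually_differentiableAt_of_contDiffAt (N := 0) h.contDiffAt_proj,
    h.eventually_proj (eventually_differentiableAt_of_contDiffAt (N := 1) hρ),
    h.level.eventually_nhds] with x hπx hρx hx v
  have hconst := (hρx.hasFDerivAt.comp x hπx.hasFDerivAt).unique
    ((hasFDerivAt_const (0 : ℝ) x).congr_of_eventuallyEq hx)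
  exact DFunLike.congr_fun hconst v

theorem eventually_fderiv_add_smul (h : IsTubularProjection ρ p π d) (hρ : ContDiffAt ℝ 2 ρ p)
    (hp : fderiv ℝ ρ p ≠ 0) :
    ∀ᶠ x in 𝓝 p, ∀ v, fderiv ℝ π x v + (fderiv ℝ d x v • innerNormal ρ (π x) +
      d x • fderiv ℝ (innerNormal ρ) (π x) (fderiv ℝ π x v)) = v := by
  filter_upwards [eventually_differentiableAt_of_contDiffAt (N := 0) h.contDiffAt_proj,
    eventually_differentiableAt_of_contDiffAt (N := 0) h.contDiffAt_height,
    h.eventually_proj (eventually_differentiableAt_of_contDiffAt (N := 0)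
      (contDiffAt_innerNormal (m := 1) hρ hp)),
    h.add_smul.eventually_nhds] with x hπx hdx hNx hx v
  have hid := (hπx.hasFDerivAt.add
    (hdx.hasFDerivAt.smul (hNx.hasFDerivAt.comp x hπx.hasFDerivAt))).unique
    ((hasFDerivAt_id x).congr_of_eventuallyEq hx)
  simpa [add_comm (fderiv ℝ d x v • _)] using DFunLike.congr_fun hid v

theorem eventually_fderiv_eq (h : IsTubularProjection ρ p π d) (hρ : ContDiffAt ℝ 2 ρ p)
    (hp : fderiv ℝ ρ p ≠ 0) : fderiv ℝ d =ᶠ[𝓝 p] fun x => innerSL ℝ (innerNormal ρ (π x)) := by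
  filter_upwards [h.eventually_fderiv_level_comp hρ, h.eventually_fderiv_add_smul hρ hp,
    h.eventually_proj ((hρ.fderiv_right (m := 1) (by norm_num)).continuousAt.eventually_ne hp),
    h.eventually_proj (hρ.eventually (by simp))] with x hlevel hsum hne hρx
  ext v
  have horth : inner ℝ (innerNormal ρ (π x)) (fderiv ℝ π x v) = 0 := by
    rw [inner_innerNormal, hlevel, mul_zero]
  have hinner := congrArg (inner ℝ (innerNormal ρ (π x))) (hsum v)
  rw [inner_add_right, inner_add_right, real_inner_smul_right, real_inner_smul_right, horth,
    inner_innerNormal_fderiv_innerNormal hρx hne, real_inner_self_eq_norm_sq,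
    norm_innerNormal hne] at hinner
  rw [innerSL_apply_apply, ← hinner]
  ring

theorem fderiv_height_apply (h : IsTubularProjection ρ p π d) (hρ : ContDiffAt ℝ 2 ρ p)
    (hp : fderiv ℝ ρ p ≠ 0) (v : E) :
    fderiv ℝ d p v = -‖fderiv ℝ ρ p‖⁻¹ * fderiv ℝ ρ p v := by
  have hp' : fderiv ℝ d p = innerSL ℝ (innerNormal ρ (π p)) :=
    (h.eventually_fderiv_eq hρ hp).self_of_nhds
  rw [hp', h.proj_self, innerSL_apply_apply, inner_innerNormal]

theorem fderiv_proj_apply (h : IsTubularProjection ρ p π d) (hρ : ContDiffAt ℝ 2 ρ p)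
    (hp : fderiv ℝ ρ p ≠ 0) {X : E} (hX : fderiv ℝ ρ p X = 0) :
    fderiv ℝ π p X = X := by
  simpa [h.height_self, h.fderiv_height_apply hρ hp, hX] using
    (h.eventually_fderiv_add_smul hρ hp).self_of_nhds X

theorem fderiv_fderiv_height_apply (h : IsTubularProjection ρ p π d) (hρ : ContDiffAt ℝ 2 ρ p)
    (hp : fderiv ℝ ρ p ≠ 0) {X : E} (hX : fderiv ℝ ρ p X = 0) :
    fderiv ℝ (fderiv ℝ d) p X X = -‖fderiv ℝ ρ p‖⁻¹ * fderiv ℝ (fderiv ℝ ρ) p X X := by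
  have hDρ : DifferentiableAt ℝ (fderiv ℝ ρ) (π p) := by
    rw [h.proj_self]
    exact (hρ.fderiv_right (m := 1) (by norm_num)).differentiableAt one_ne_zero
  have hne : rieszRepresentative (fderiv ℝ ρ (π p)) ≠ 0 := by
    simpa [rieszRepresentative, h.proj_self] using hp
  have hscale : DifferentiableAt ℝ (fun y => -‖rieszRepresentative (fderiv ℝ ρ y)‖⁻¹) (π p) :=
    (((rieszRepresentative.differentiableAt.comp _ hDρ).norm ℝ hne).inv
      (norm_ne_zero_iff.2 hne)).neg
  have hprod := (hscale.hasFDerivAt.smul hDρ.hasFDerivAt).comp p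
    (h.contDiffAt_proj.differentiableAt one_ne_zero).hasFDerivAt
  have heq : fderiv ℝ d =ᶠ[𝓝 p]
      (fun y => -‖rieszRepresentative (fderiv ℝ ρ y)‖⁻¹ • fderiv ℝ ρ y) ∘ π := by
    filter_upwards [h.eventually_fderiv_eq hρ hp] with x hx
    ext v
    rw [hx, innerSL_apply_apply, inner_innerNormal]
    simp [rieszRepresentative]
  rw [(hprod.congr_of_eventuallyEq heq).fderiv]
  simp [h.fderiv_proj_apply hρ hp hX, h.proj_self, hX, rieszRepresentative]

theorem holderContDiffAt_height (hε : 0 < ε) (hε1 : ε ≤ 1) (h : IsTubularProjection ρ p π d)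
    (hρ : HolderContDiffAt ε (m + 2) ρ p) (hp : fderiv ℝ ρ p ≠ 0)
    (hπ : HolderContDiffAt ε (m + 1) π p) (hd : HolderContDiffAt ε (m + 1) d p) :
    HolderContDiffAt ε (m + 2) d p := by
  have hρ2 : ContDiffAt ℝ 2 ρ p := (hρ.contDiffAt hε).of_le (by norm_cast; lia)
  have hN : HolderContDiffAt ε (m + 1) (fun x => innerNormal ρ (π x)) p :=
    .comp hε hε1 (by rw [h.proj_self]; exact holderContDiffAt_innerNormal hε hε1 hρ hp) hπ
      h.contDiffAt_proj
  exact ⟨hd.1, (hN.clm_apply (innerSL ℝ : E →L[ℝ] E →L[ℝ] ℝ)).congr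
    (h.eventually_fderiv_eq hρ2 hp).symm⟩

end IsTubularProjection

end SignedDistance

/-! ### The distance to the boundary -/

section BoundaryDistance

open Filter Topology
open scoped Gradient

variable {E : Type} [NormedAddCommGroup E] {ρ d : E → ℝ} {Ω : Set E} {p q z : E}

theorem eq_zero_of_mem_frontier (hΩ : IsOpen Ω) (hρ : ContinuousAt ρ q)
    (hmem : ∀ᶠ y in 𝓝 q, y ∈ Ω ↔ ρ y < 0) (hq : q ∈ frontier Ω) : ρ q = 0 := by
  rw [hΩ.frontier_eq] at hq
  refine le_antisymm (not_lt.1 fun hpos => ?_)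
    (not_lt.1 fun hneg => hq.2 (hmem.self_of_nhds.2 hneg))
  obtain ⟨y, hyΩ, hy, hy'⟩ := ((mem_closure_iff_frequently.1 hq.1).and_eventually
    (hmem.and (hρ.tendsto.eventually_const_lt hpos))).exists
  exact lt_asymm hy' (hy.1 hyΩ)

theorem mem_frontier_of_eq_zero [NormedSpace ℝ E] (hmem : ∀ᶠ y in 𝓝 q, y ∈ Ω ↔ ρ y < 0)
    (hq : fderiv ℝ ρ q ≠ 0) (h0 : ρ q = 0) : q ∈ frontier Ω := by
  refine ⟨?_, fun hint => absurd (hmem.self_of_nhds.1 (interior_subset hint)) h0.not_lt⟩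
  by_contra hcl
  refine hq (IsLocalMin.fderiv_eq_zero ?_)
  filter_upwards [isClosed_closure.isOpen_compl.mem_nhds hcl, hmem] with y hy hyΩ
  rw [h0]
  exact not_lt.1 fun hneg => hy (subset_closure (hyΩ.2 hneg))

variable [InnerProductSpace ℝ E] [CompleteSpace E]

theorem exists_eq_add_smul_innerNormal_of_isLocalMinOn (hρ : ContDiffAt ℝ 1 ρ q)
    (hq : fderiv ℝ ρ q ≠ 0) (hmin : IsLocalMinOn (fun y => ‖y - z‖ ^ 2) {y | ρ y = ρ q} q) :
    ∃ t : ℝ, z = q + t • innerNormal ρ q := by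
  have hsq : HasStrictFDerivAt (fun y => ‖y - z‖ ^ 2) (2 • innerSL ℝ (q - z)) q :=
    (hasStrictFDerivAt_norm_sq (q - z)).comp q ((hasStrictFDerivAt_id q).sub_const z)
  obtain ⟨a, b, hab, hsum⟩ := IsLocalExtrOn.exists_multipliers_of_hasStrictFDerivAt_1d
    (Or.inl hmin) (hρ.hasStrictFDerivAt one_ne_zero) hsq
  have hb : b ≠ 0 := by
    rintro rfl
    have ha : a ≠ 0 := by simpa using hab
    exact hq (by simpa [ha] using hsum)
  have hgrad : a • ∇ ρ q + (2 * b) • (q - z) = 0 := by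
    refine ext_inner_right ℝ fun v => ?_
    have := DFunLike.congr_fun hsum v
    simp only [add_apply, smul_apply, smul_eq_mul,
      nsmul_eq_mul, innerSL_apply_apply, zero_apply] at this
    rw [inner_add_left, real_inner_smul_left, real_inner_smul_left, inner_gradient_left,
      inner_zero_left]
    push_cast at this
    linarith
  have hz : z = q + (a / (2 * b)) • ∇ ρ q := by
    rw [← sub_eq_iff_eq_add', div_eq_inv_mul, mul_smul, eq_inv_smul_iff₀ (by positivity),
      ← neg_sub, smul_neg]
    exact (eq_neg_of_add_eq_zero_left hgrad).symm
  have hne : ‖∇ ρ q‖ ≠ 0 := by rwa [norm_gradient, norm_ne_zero_iff]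
  refine ⟨-(a / (2 * b) * ‖∇ ρ q‖), ?_⟩
  rw [innerNormal, smul_neg, neg_smul, neg_neg, smul_smul, mul_assoc, mul_inv_cancel₀ hne, mul_one]
  exact hz

theorem exists_eq_add_smul_innerNormal_of_dist_eq_infDist (hΩ : IsOpen Ω)
    (hρ : ContDiffAt ℝ 1 ρ q) (hq : fderiv ℝ ρ q ≠ 0) (hmem : ∀ᶠ y in 𝓝 q, y ∈ Ω ↔ ρ y < 0)
    (hqΩ : q ∈ frontier Ω) (hz : infDist z (frontier Ω) = dist z q) :
    ∃ t : ℝ, z = q + t • innerNormal ρ q ∧ |t| = infDist z (frontier Ω) := by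
  have hρq : ρ q = 0 := eq_zero_of_mem_frontier hΩ hρ.continuousAt hmem hqΩ
  have hmin : IsLocalMinOn (fun y => ‖y - z‖ ^ 2) {y | ρ y = ρ q} q := by
    filter_upwards [self_mem_nhdsWithin, nhdsWithin_le_nhds hmem.eventually_nhds,
      nhdsWithin_le_nhds ((hρ.fderiv_right (m := 0) (by norm_num)).continuousAt.eventually_ne hq)]
      with y hy hymem hyd
    have hle := infDist_le_dist_of_mem (x := z) (mem_frontier_of_eq_zero hymem hyd (hy.trans hρq))
    rw [hz, dist_comm z, dist_comm z, dist_eq_norm, dist_eq_norm] at hle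
    gcongr
  obtain ⟨t, ht⟩ := exists_eq_add_smul_innerNormal_of_isLocalMinOn hρ hq hmin
  refine ⟨t, ht, ?_⟩
  rw [hz, dist_comm, dist_eq_norm, ← norm_neg, neg_sub, sub_eq_iff_eq_add'.2 ht, norm_smul,
    norm_innerNormal hq, mul_one, Real.norm_eq_abs]

theorem eventually_exists_eq_add_smul_innerNormal [ProperSpace E] (hΩ : IsOpen Ω)
    (hp : p ∈ frontier Ω) (hρ : ContDiffAt ℝ 1 ρ p) (hpρ : fderiv ℝ ρ p ≠ 0)
    (hmem : ∀ᶠ y in 𝓝 p, y ∈ Ω ↔ ρ y < 0) {P : E × ℝ → Prop} (hP : ∀ᶠ y in 𝓝 (p, 0), P y) :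
    ∀ᶠ z in 𝓝 p, ∃ q t, ρ q = 0 ∧ z = q + t • innerNormal ρ q ∧
      |t| = infDist z (frontier Ω) ∧ P (q, t) := by
  have hreg : ∀ᶠ q in 𝓝 p, ContDiffAt ℝ 1 ρ q ∧ fderiv ℝ ρ q ≠ 0 ∧
      ∀ᶠ y in 𝓝 q, y ∈ Ω ↔ ρ y < 0 :=
    (hρ.eventually (by simp)).and
      (((hρ.fderiv_right (m := 0) (by norm_num)).continuousAt.eventually_ne hpρ).and
        hmem.eventually_nhds)
  obtain ⟨r, hr, hball⟩ := Metric.eventually_nhds_iff_ball.1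
    (((continuous_fst.tendsto (p, (0 : ℝ))).eventually hreg).and hP)
  filter_upwards [ball_mem_nhds p (half_pos hr)] with z hz
  obtain ⟨q, hqΩ, hq⟩ := isClosed_frontier.exists_infDist_eq_dist ⟨p, hp⟩ z
  have hzq : dist z q < r / 2 := hq ▸ (infDist_le_dist_of_mem hp).trans_lt hz
  have hqp : dist q p < r := by
    linarith [dist_triangle_left q p z, mem_ball.1 hz]
  obtain ⟨hρq, hdq, hmemq⟩ := (hball (q, 0) (by simpa [Prod.dist_eq, hr] using hqp)).1
  obtain ⟨t, hzt, ht⟩ :=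
    exists_eq_add_smul_innerNormal_of_dist_eq_infDist hΩ hρq hdq hmemq hqΩ hq
  refine ⟨q, t, eq_zero_of_mem_frontier hΩ hρq.continuousAt hmemq hqΩ, hzt, ht, (hball _ ?_).2⟩
  have htr : |t| < r := by linarith
  simpa [Prod.dist_eq] using ⟨hqp, htr⟩

theorem eventually_pos_of_add_smul_innerNormal_neg (hρ : ContDiffAt ℝ 1 ρ p)
    (hp : fderiv ℝ ρ p ≠ 0) : ∀ᶠ y in 𝓝 (p, (0 : ℝ)), ρ y.1 = 0 →
      ρ (y.1 + y.2 • innerNormal ρ y.1) < 0 → 0 < y.2 := by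
  set l := fderiv ℝ ρ p
  have hl : 0 < ‖l‖ := norm_pos_iff.2 hp
  have hN : ContinuousAt (innerNormal ρ) p :=
    (contDiffAt_innerNormal (m := 0) hρ hp).continuousAt
  have hlN : ∀ᶠ y in 𝓝 p, l (innerNormal ρ y) < -(‖l‖ / 2) ∧ ‖innerNormal ρ y‖ = 1 := by
    refine ((l.continuous.continuousAt.comp hN).tendsto.eventually_lt_const ?_).and ?_
    · have : l (innerNormal ρ p) = -‖l‖ := fderiv_innerNormal hp
      rw [Function.comp_apply, this]
      linarith
    · filter_upwards [(hρ.fderiv_right (m := 0) (by norm_num)).continuousAt.eventually_ne hp]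
        with y hy using norm_innerNormal hy
  have htube : Tendsto (fun y : E × ℝ => (y.1 + y.2 • innerNormal ρ y.1, y.1)) (𝓝 (p, 0))
      (𝓝 (p, p)) := by
    have : ContinuousAt (fun y : E × ℝ => (y.1 + y.2 • innerNormal ρ y.1, y.1)) (p, 0) :=
      (continuousAt_fst.add (continuousAt_snd.smul
        (ContinuousAt.comp (f := Prod.fst) (x := (p, (0 : ℝ))) hN continuousAt_fst))).prodMk
        continuousAt_fst
    simpa [ContinuousAt] using this
  filter_upwards [(continuous_fst.tendsto (p, (0 : ℝ))).eventually hlN, htube.eventually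
    ((hρ.hasStrictFDerivAt one_ne_zero).isLittleO.def (half_pos hl))] with y hy hlin h0 hneg
  by_contra! hle
  simp only [h0, add_sub_cancel_left, map_smul, smul_eq_mul, sub_zero, norm_smul, hy.2, mul_one,
    Real.norm_eq_abs, abs_of_nonpos hle] at hlin
  nlinarith [(abs_le.1 hlin).1, hy.1]

theorem IsTubularProjection.eventually_infDist_frontier_eq [ProperSpace E] {π : E → E}
    (h : IsTubularProjection ρ p π d) (hΩ : IsOpen Ω) (hp : p ∈ frontier Ω)
    (hρ : ContDiffAt ℝ 1 ρ p) (hpρ : fderiv ℝ ρ p ≠ 0) (hmem : ∀ᶠ y in 𝓝 p, y ∈ Ω ↔ ρ y < 0) :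
    ∀ᶠ z in 𝓝 p, z ∈ Ω → infDist z (frontier Ω) = d z ∧ 0 < d z := by
  filter_upwards [hmem, eventually_exists_eq_add_smul_innerNormal hΩ hp hρ hpρ hmem
    (h.height_add_smul.and (eventually_pos_of_add_smul_innerNormal_neg hρ hpρ))]
  rintro z hz ⟨q, t, hρq, rfl, ht, hd, hpos⟩ hzΩ
  have ht0 : 0 < t := hpos hρq (hz.1 hzΩ)
  rw [hd hρq, ← ht, abs_of_pos ht0]
  exact ⟨rfl, ht0⟩

theorem exists_signedDistance [ProperSpace E] {ε : ℝ} {m : ℕ} (hε : 0 < ε) (hε1 : ε ≤ 1)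
    (hΩ : IsOpen Ω) (hp : p ∈ frontier Ω) (hρ : HolderContDiffAt ε (m + 2) ρ p)
    (hpρ : fderiv ℝ ρ p ≠ 0) (hmem : ∀ᶠ y in 𝓝 p, y ∈ Ω ↔ ρ y < 0) :
    ∃ d : E → ℝ, HolderContDiffAt ε (m + 2) d p ∧
      (∀ v, fderiv ℝ d p v = -‖fderiv ℝ ρ p‖⁻¹ * fderiv ℝ ρ p v) ∧
      (∀ X, fderiv ℝ ρ p X = 0 →
        fderiv ℝ (fderiv ℝ d) p X X = -‖fderiv ℝ ρ p‖⁻¹ * fderiv ℝ (fderiv ℝ ρ) p X X) ∧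
      ∀ᶠ z in 𝓝 p, z ∈ Ω → infDist z (frontier Ω) = d z ∧ 0 < d z := by
  have hρ2 : ContDiffAt ℝ 2 ρ p := (hρ.contDiffAt hε).of_le (by norm_cast; lia)
  have hρ1 : ContDiffAt ℝ 1 ρ p := hρ2.of_le (by norm_num)
  obtain ⟨π, d, hπ, hd, h⟩ := exists_isTubularProjection hε hε1 hρ
    (eq_zero_of_mem_frontier hΩ (hρ.continuousAt hε) hmem hp) hpρ
  exact ⟨d, h.holderContDiffAt_height hε hε1 hρ hpρ hπ hd, h.fderiv_height_apply hρ2 hpρ,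
    fun X hX => h.fderiv_fderiv_height_apply hρ2 hpρ hX,
    h.eventually_infDist_frontier_eq hΩ hp hρ1 hpρ hmem⟩

end BoundaryDistance

/-! ### A Schwarz lemma with a holomorphic barrier -/

section Barrier

open Filter Topology

variable {V : Type*} [NormedAddCommGroup V]

variable {f : ℂ → V} {g u : ℂ → ℝ} {R b m c : ℝ}

theorem isOpen_setOf_lt_and_lt_norm_or_lt {r : ℝ} (hr : r ≤ 1)
    (hu : ContinuousOn u (ball 0 1)) (hg : ContinuousOn g (ball 0 1))
    (hf : ∀ ζ ∈ ball 0 1, u ζ ≤ R → ContinuousAt f ζ) :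
    IsOpen {ζ | ζ ∈ ball 0 r ∧ u ζ < R ∧ (m < ‖f ζ‖ ∨ c < g ζ)} := by
  refine isOpen_iff_eventually.2 fun ζ ⟨hζr, hζR, hζ⟩ => ?_
  have hζ1 := ball_subset_ball hr hζr
  have hnhds := isOpen_ball.mem_nhds hζ1
  refine (isOpen_ball.eventually_mem hζr).and
    (((hu.continuousAt hnhds).eventually_lt_const hζR).and ?_)
  rcases hζ with h | h
  · exact ((hf ζ hζ1 hζR.le).norm.eventually_const_lt h).mono fun _ => Or.inl
  · exact ((hg.continuousAt hnhds).eventually_const_lt h).mono fun _ => Or.inr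

theorem le_of_mem_closure_of_forall_lt {X : Type*} [TopologicalSpace X] {u : X → ℝ} {U : Set X}
    {x : X} (hx : x ∈ closure U) (hu : ContinuousAt u x) (hU : ∀ y ∈ U, u y < R) : u x ≤ R := by
  have := mem_closure_iff_nhdsWithin_neBot.1 hx
  exact le_of_tendsto (hu.tendsto.mono_left nhdsWithin_le_nhds)
    (eventually_nhdsWithin_of_forall fun y hy => (hU y hy).le)

/-- `{u < R}` is left through `{g < c, ‖f‖ < m}`, and `{g < c}` is entered only where `‖f‖ > m`,
so on the set where `u < R` and `‖f‖ > m` or `g > c`, the inner frontier consists of points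
with `‖f‖ ≤ m`, near which `‖f‖ > m` on the set. -/
theorem norm_le_and_eventually_lt_of_mem_frontier {r : ℝ} (hr : r ≤ 1)
    (hu : ContinuousOn u (ball 0 1)) (hg : ContinuousOn g (ball 0 1))
    (hf : ∀ ζ ∈ ball 0 1, u ζ ≤ R → ContinuousAt f ζ)
    (hlevel : ∀ ζ ∈ ball 0 1, u ζ ≤ R → g ζ = c → m < ‖f ζ‖)
    (hsphere : ∀ ζ ∈ ball 0 1, u ζ = R → g ζ < c ∧ ‖f ζ‖ < m) {U : Set ℂ}
    (hUdef : U = {ζ | ζ ∈ ball 0 r ∧ u ζ < R ∧ (m < ‖f ζ‖ ∨ c < g ζ)}) {ζ : ℂ}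
    (hζ : ζ ∈ frontier U) (hζr : ‖ζ‖ < r) :
    ‖f ζ‖ ≤ m ∧ ∀ᶠ x in 𝓝[U] ζ, m < ‖f x‖ := by
  have hζr' : ζ ∈ ball 0 r := mem_ball_zero_iff.2 hζr
  have hζ1 := ball_subset_ball hr hζr'
  have hnhds := isOpen_ball.mem_nhds hζ1
  have hζcl := frontier_subset_closure hζ
  have hguζ := hg.continuousAt hnhds
  have hζR : u ζ ≤ R := le_of_mem_closure_of_forall_lt hζcl (hu.continuousAt hnhds)
    (hUdef ▸ fun _ h => h.2.1)
  have hfζ := (hf ζ hζ1 hζR).norm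
  have hne := mem_closure_iff_nhdsWithin_neBot.1 hζcl
  have hUor : ∀ᶠ x in 𝓝[U] ζ, m < ‖f x‖ ∨ c < g x := by
    filter_upwards [self_mem_nhdsWithin] with x hx
    rw [hUdef] at hx
    exact hx.2.2
  have hζR' : u ζ < R := by
    refine hζR.lt_of_ne fun heq => ?_
    obtain ⟨hgζ, hfm⟩ := hsphere ζ hζ1 heq
    obtain ⟨x, hx, hgx, hfx⟩ := (hUor.and
      (((hguζ.eventually_lt_const hgζ).and (hfζ.eventually_lt_const hfm)).filter_mono
        nhdsWithin_le_nhds)).exists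
    exact hx.elim hfx.not_gt hgx.not_gt
  have hζU : ¬(m < ‖f ζ‖ ∨ c < g ζ) := by
    rw [(hUdef ▸ isOpen_setOf_lt_and_lt_norm_or_lt hr hu hg hf : IsOpen U).frontier_eq] at hζ
    exact fun h => hζ.2 (hUdef ▸ ⟨hζr', hζR', h⟩)
  rw [not_or, not_lt, not_lt] at hζU
  have hgζ : g ζ < c := hζU.2.lt_of_ne fun heq => (hlevel ζ hζ1 hζR heq).not_ge hζU.1
  refine ⟨hζU.1, ?_⟩
  filter_upwards [hUor, nhdsWithin_le_nhds (hguζ.eventually_lt_const hgζ)] with x hx hgx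
  exact hx.resolve_right hgx.not_gt

variable [NormedSpace ℂ V] {E : Type*} [NormedAddCommGroup E] [NormedSpace ℂ E]

theorem deriv_exp_smul_comp {P : E → ℂ} {Φ : E → V} {φ : ℂ → E} {ζ a : ℂ}
    (hφ : DifferentiableAt ℂ φ ζ) (hP : DifferentiableAt ℂ P (φ ζ))
    (hΦ : DifferentiableAt ℂ Φ (φ ζ)) (hP0 : P (φ ζ) = 0) (hΦ0 : Φ (φ ζ) = 0) :
    deriv (fun ξ => Complex.exp (a * P (φ ξ)) • Φ (φ ξ)) ζ = fderiv ℂ Φ (φ ζ) (deriv φ ζ) := by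
  have hcomp := hΦ.hasFDerivAt.comp_hasDerivAt ζ hφ.hasDerivAt
  have hexp := ((hP.comp ζ hφ).const_mul a).cexp.hasDerivAt
  have h := (hexp.smul hcomp).deriv
  simp only [Function.comp_apply, hP0, hΦ0, mul_zero, Complex.exp_zero, one_smul, smul_zero,
    add_zero] at h
  exact h

theorem norm_exp_mul_smul_sq (a : ℝ) (w : ℂ) (v : V) :
    ‖Complex.exp (a * w) • v‖ ^ 2 = Real.exp (a * (2 * w.re)) * ‖v‖ ^ 2 := by
  rw [norm_smul, Complex.norm_exp, mul_pow, ← Real.exp_nat_mul, Complex.re_ofReal_mul]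
  congr 2
  push_cast
  ring

theorem norm_exp_mul_smul_le {a M B : ℝ} {w : ℂ} {v : V} (ha : 0 ≤ a) (hw : 2 * w.re ≤ M)
    (hv : ‖v‖ ^ 2 ≤ B) : ‖Complex.exp (a * w) • v‖ ≤ √(Real.exp (a * M) * B) := by
  refine Real.le_sqrt_of_sq_le ?_
  rw [norm_exp_mul_smul_sq]
  gcongr

theorem exp_neg_lt_norm_exp_mul_smul {a c : ℝ} {w : ℂ} {v : V} (hw : 2 * w.re = -c)
    (hv : Real.exp (-(a * c)) < ‖v‖ ^ 2) :
    Real.exp (-(a * c)) < ‖Complex.exp (a * w) • v‖ := by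
  refine lt_of_pow_lt_pow_left₀ 2 (norm_nonneg _) ?_
  rw [norm_exp_mul_smul_sq, hw, sq, mul_neg]
  gcongr

theorem norm_exp_mul_smul_lt_exp_neg {a c : ℝ} {w : ℂ} {v : V} (ha : 0 ≤ a)
    (hw : 2 * w.re ≤ -(4 * c)) (hv : ‖v‖ ^ 2 < Real.exp (2 * (a * c))) :
    ‖Complex.exp (a * w) • v‖ < Real.exp (-(a * c)) := by
  refine lt_of_pow_lt_pow_left₀ 2 (Real.exp_nonneg _) ?_
  calc ‖Complex.exp (a * w) • v‖ ^ 2 = Real.exp (a * (2 * w.re)) * ‖v‖ ^ 2 :=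
        norm_exp_mul_smul_sq _ _ _
    _ < Real.exp (a * -(4 * c)) * Real.exp (2 * (a * c)) :=
      mul_lt_mul' (by gcongr) hv (sq_nonneg _) (Real.exp_pos _)
    _ = Real.exp (-(a * c)) ^ 2 := by
      rw [← Real.exp_add, ← Real.exp_nat_mul]
      congr 1
      push_cast
      ring

theorem exists_mem_frontier_ball_norm_subset {U : Set ℂ} (hU : IsOpen U) (h0U : (0 : ℂ) ∈ U)
    {ζ : ℂ} (hζ : ζ ∉ U) :
    ∃ ξ ∈ frontier U, ‖ξ‖ ≤ ‖ζ‖ ∧ ball 0 ‖ξ‖ ⊆ U ∧ (𝓝[ball 0 ‖ξ‖] ξ).NeBot := by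
  obtain ⟨ξ, hξU, hξ⟩ := hU.isClosed_compl.exists_infDist_eq_dist ⟨ζ, hζ⟩ 0
  rw [dist_zero_left] at hξ
  have hball : ball 0 ‖ξ‖ ⊆ U := hξ ▸ ball_infDist_compl_subset
  have hξcl : ξ ∈ closure (ball 0 ‖ξ‖) := by
    have hξ0 : ξ ≠ 0 := fun h => hξU (h ▸ h0U)
    simp [closure_ball (0 : ℂ) (norm_ne_zero_iff.2 hξ0)]
  refine ⟨ξ, ?_, ?_, hball, mem_closure_iff_nhdsWithin_neBot.1 hξcl⟩
  · rw [hU.frontier_eq]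
    exact ⟨closure_mono hball hξcl, hξU⟩
  · simpa [← hξ] using infDist_le_dist_of_mem (x := (0 : ℂ)) (mem_compl hζ)

variable [CompleteSpace V]

/-- If `‖f ζ‖ / ‖ζ‖` were largest at an inner frontier point, where `‖f‖ ≤ m`, then the point of
`Uᶜ` closest to the origin would be adjacent to points of `U` with larger quotient. -/
theorem mul_norm_deriv_zero_le_of_frontier {U : Set ℂ} {r : ℝ}
    (hU : IsOpen U) (h0U : (0 : ℂ) ∈ U) (hUr : U ⊆ ball 0 r)
    (hf : DifferentiableOn ℂ f (closure U)) (hf0 : f 0 = 0)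
    (houter : ∀ ζ ∈ frontier U, ‖ζ‖ = r → ‖f ζ‖ ≤ b)
    (hinner : ∀ ζ ∈ frontier U, ‖ζ‖ < r → ‖f ζ‖ ≤ m ∧ ∀ᶠ x in 𝓝[U] ζ, m < ‖f x‖) :
    r * ‖deriv f 0‖ ≤ b := by
  have hr : 0 < r := by simpa using hUr h0U
  have hquot (ζ : ℂ) : ‖ζ‖ * ‖dslope f 0 ζ‖ = ‖f ζ‖ := by
    rw [← norm_smul]
    simpa [hf0] using congrArg norm (sub_smul_dslope f 0 ζ)
  have hF : DiffContOnCl ℂ (dslope f 0) U :=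
    ((Complex.differentiableOn_dslope
      (mem_of_superset (hU.mem_nhds h0U) subset_closure)).2 hf).diffContOnCl
  obtain ⟨ζ₀, hζ₀, hmax⟩ := Complex.exists_mem_frontier_isMaxOn_norm
    (isBounded_ball.subset hUr) ⟨0, h0U⟩ hF
  have hmax0 : ‖deriv f 0‖ ≤ ‖dslope f 0 ζ₀‖ := by
    simpa using hmax (subset_closure h0U)
  have hζ₀r : ‖ζ₀‖ ≤ r := by
    simpa using closure_ball_subset_closedBall (closure_mono hUr (frontier_subset_closure hζ₀))
  rcases hζ₀r.eq_or_lt with heq | hlt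
  · calc r * ‖deriv f 0‖ ≤ ‖ζ₀‖ * ‖dslope f 0 ζ₀‖ := by rw [heq]; gcongr
      _ ≤ b := (hquot ζ₀).trans_le (houter ζ₀ hζ₀ heq)
  exfalso
  have hζ₀U : ζ₀ ∉ U := by
    rw [hU.frontier_eq] at hζ₀
    exact hζ₀.2
  obtain ⟨ζ₁, hζ₁, hle, hball, hne⟩ := exists_mem_frontier_ball_norm_subset hU h0U hζ₀U
  obtain ⟨x, hx, hxball⟩ := (((hinner ζ₁ hζ₁ (hle.trans_lt hlt)).2.filter_mono
    (nhdsWithin_mono _ hball)).and self_mem_nhdsWithin).exists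
  have hζ₀m := (hinner ζ₀ hζ₀ hlt).1
  have hxle : ‖dslope f 0 x‖ ≤ ‖dslope f 0 ζ₀‖ := hmax (subset_closure (hball hxball))
  have hxζ₀ : ‖x‖ ≤ ‖ζ₀‖ := (mem_ball_zero_iff.1 hxball).le.trans hle
  refine hx.not_ge ?_
  calc ‖f x‖ = ‖x‖ * ‖dslope f 0 x‖ := (hquot x).symm
    _ ≤ ‖ζ₀‖ * ‖dslope f 0 ζ₀‖ := by gcongr
    _ ≤ m := (hquot ζ₀).trans_le hζ₀m

theorem norm_deriv_zero_le_of_barrier (hu : ContinuousOn u (ball 0 1))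
    (hg : ContinuousOn g (ball 0 1)) (hu0 : u 0 < R) (hg0 : c < g 0) (hf0 : f 0 = 0)
    (hf : ∀ ζ ∈ ball 0 1, u ζ ≤ R → DifferentiableAt ℂ f ζ)
    (hfb : ∀ ζ ∈ ball 0 1, u ζ ≤ R → ‖f ζ‖ ≤ b)
    (hlevel : ∀ ζ ∈ ball 0 1, u ζ ≤ R → g ζ = c → m < ‖f ζ‖)
    (hsphere : ∀ ζ ∈ ball 0 1, u ζ = R → g ζ < c ∧ ‖f ζ‖ < m) :
    ‖deriv f 0‖ ≤ b := by
  have hfc : ∀ ζ ∈ ball (0 : ℂ) 1, u ζ ≤ R → ContinuousAt f ζ :=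
    fun ζ hζ h => (hf ζ hζ h).continuousAt
  have hlt : ∀ r ∈ Ioo (0 : ℝ) 1, r * ‖deriv f 0‖ ≤ b := by
    intro r hr
    obtain ⟨U, hUdef⟩ : ∃ U, U = {ζ | ζ ∈ ball 0 r ∧ u ζ < R ∧ (m < ‖f ζ‖ ∨ c < g ζ)} :=
      ⟨_, rfl⟩
    have hUcl : ∀ ζ ∈ closure U, ζ ∈ ball (0 : ℂ) 1 ∧ u ζ ≤ R := by
      intro ζ hζ
      have hζ1 : ζ ∈ ball (0 : ℂ) 1 := closedBall_subset_ball hr.2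
        (closure_ball_subset_closedBall (closure_mono (hUdef ▸ fun _ h => h.1) hζ))
      exact ⟨hζ1, le_of_mem_closure_of_forall_lt hζ
        (hu.continuousAt (isOpen_ball.mem_nhds hζ1)) (hUdef ▸ fun _ h => h.2.1)⟩
    refine mul_norm_deriv_zero_le_of_frontier (U := U)
      (hUdef ▸ isOpen_setOf_lt_and_lt_norm_or_lt hr.2.le hu hg hfc)
      (hUdef ▸ ⟨mem_ball_self hr.1, hu0, .inr hg0⟩) (hUdef ▸ fun _ h => h.1)
      (fun ζ hζ => (hf ζ (hUcl ζ hζ).1 (hUcl ζ hζ).2).differentiableWithinAt) hf0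
      (fun ζ hζ _ => ?_) (fun ζ hζ => norm_le_and_eventually_lt_of_mem_frontier hr.2.le hu hg
        hfc hlevel hsphere hUdef hζ)
    obtain ⟨hζ1, hζR⟩ := hUcl ζ (frontier_subset_closure hζ)
    exact hfb ζ hζ1 hζR
  have hlim : Tendsto (fun r : ℝ => r * ‖deriv f 0‖) (𝓝[<] 1) (𝓝 (1 * ‖deriv f 0‖)) :=
    (continuous_id.mul_const _).continuousWithinAt
  rw [one_mul] at hlim
  exact le_of_tendsto hlim
    (eventually_of_mem (Ioo_mem_nhdsLT zero_lt_one) hlt)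

/-- The factor `exp (a * P)` makes `exp (a * P) • Φ` small where `Re P` is very negative, in
particular far from `z`, while changing neither the derivative at `z` nor, much, the bound. -/
theorem norm_sq_fderiv_deriv_zero_le_of_barrier {Ω : Set E} {z : E} {R B M a c : ℝ}
    {Φ : E → V} {P : E → ℂ} {φ : ℂ → E} (hR : 0 < R) (ha : 0 ≤ a) (hc : 0 < c)
    (hP : Differentiable ℂ P) (hPz : P z = 0) (hΦz : Φ z = 0)
    (hΦ : ∀ w ∈ Ω, dist w z ≤ R → DifferentiableAt ℂ Φ w)
    (hΦB : ∀ w ∈ Ω, dist w z ≤ R → ‖Φ w‖ ^ 2 ≤ B)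
    (hPM : ∀ w ∈ Ω, dist w z ≤ R → 2 * (P w).re ≤ M)
    (hlevel : ∀ w ∈ Ω, dist w z ≤ R → 2 * (P w).re = -c → Real.exp (-(a * c)) < ‖Φ w‖ ^ 2)
    (hsphere : ∀ w ∈ Ω, dist w z = R →
      2 * (P w).re ≤ -(4 * c) ∧ ‖Φ w‖ ^ 2 < Real.exp (2 * (a * c)))
    (hφ : DifferentiableOn ℂ φ (ball 0 1)) (hφΩ : MapsTo φ (ball 0 1) Ω) (hφ0 : φ 0 = z) :
    ‖fderiv ℂ Φ z (deriv φ 0)‖ ^ 2 ≤ Real.exp (a * M) * B := by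
  let f : ℂ → V := fun ζ => Complex.exp (a * P (φ ζ)) • Φ (φ ζ)
  have hφd : ∀ ζ ∈ ball (0 : ℂ) 1, DifferentiableAt ℂ φ ζ :=
    fun ζ hζ => hφ.differentiableAt (isOpen_ball.mem_nhds hζ)
  have hfd : ∀ ζ ∈ ball (0 : ℂ) 1, dist (φ ζ) z ≤ R → DifferentiableAt ℂ f ζ :=
    fun ζ hζ h => ((hP.differentiableAt.comp ζ (hφd ζ hζ)).const_mul _).cexp.smul
      ((hΦ _ (hφΩ hζ) h).comp ζ (hφd ζ hζ))
  have h0 : (0 : ℂ) ∈ ball 0 1 := mem_ball_self one_pos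
  have hfderiv : deriv f 0 = fderiv ℂ Φ z (deriv φ 0) := by
    subst hφ0
    exact deriv_exp_smul_comp (hφd 0 h0) (hP _) (hΦ _ (hφΩ h0) (by simp [hR.le])) hPz hΦz
  have hb : ‖deriv f 0‖ ≤ √(Real.exp (a * M) * B) := by
    refine norm_deriv_zero_le_of_barrier (u := fun ζ => dist (φ ζ) z)
      (g := fun ζ => 2 * (P (φ ζ)).re) (R := R) (c := -c) (m := Real.exp (-(a * c)))
      ((continuous_id.dist continuous_const).comp_continuousOn hφ.continuousOn) ?_
      (by simpa [hφ0]) (by simpa [hφ0, hPz])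
      (by simp [f, hφ0, hΦz]) hfd
      (fun ζ hζ h => norm_exp_mul_smul_le ha (hPM _ (hφΩ hζ) h) (hΦB _ (hφΩ hζ) h))
      (fun ζ hζ h hlev => exp_neg_lt_norm_exp_mul_smul hlev (hlevel _ (hφΩ hζ) h hlev))
      (fun ζ hζ h => ?_)
    · exact continuousOn_const.mul
        (Complex.continuous_re.comp_continuousOn (hP.continuous.comp_continuousOn hφ.continuousOn))
    · obtain ⟨hPζ, hΦζ⟩ := hsphere _ (hφΩ hζ) h
      exact ⟨by linarith, norm_exp_mul_smul_lt_exp_neg ha hPζ hΦζ⟩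
  rw [← hfderiv]
  have hM : 0 ≤ Real.exp (a * M) * B := mul_nonneg (Real.exp_nonneg _)
    ((sq_nonneg _).trans (hΦB z (hφ0 ▸ hφΩ h0) (by simp [hR.le])))
  exact (Real.le_sqrt (norm_nonneg _) hM).1 hb

end Barrier

/-! ### Osculating model domains -/

section RealEstimates

open Filter Topology

theorem mul_rpow_two_add_le {x t τ : ℝ} (hx : 0 < x) (ht : 0 ≤ t) (hτ : 0 ≤ τ) (hτ2 : τ ≤ 2) :
    x * t ^ (2 + τ) ≤ x ^ (τ / 2) * (x + t ^ 2) ^ 2 := by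
  have hxt : 0 < x + t ^ 2 := by positivity
  have hτ' : 0 ≤ 1 - τ / 2 := by linarith
  calc x * t ^ (2 + τ) = x ^ (τ / 2) * (x ^ (1 - τ / 2) * (t ^ 2) ^ (1 + τ / 2)) := by
        rw [← mul_assoc, ← Real.rpow_add hx, ← Real.rpow_two, ← Real.rpow_mul ht]
        ring_nf
        rw [Real.rpow_one, mul_comm]
    _ ≤ x ^ (τ / 2) * ((x + t ^ 2) ^ (1 - τ / 2) * (x + t ^ 2) ^ (1 + τ / 2)) := by
        gcongr
        exacts [le_add_of_nonneg_right (sq_nonneg t), le_add_of_nonneg_left hx.le]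
    _ = x ^ (τ / 2) * (x + t ^ 2) ^ 2 := by
        rw [← Real.rpow_add hxt, ← Real.rpow_natCast (x + t ^ 2) 2]
        norm_num

theorem le_rpow_self_of_le_one {x q : ℝ} (hx : 0 < x) (hx1 : x ≤ 1) (hq : q ≤ 1) : x ≤ x ^ q :=
  (Real.rpow_one x).symm.trans_le (Real.rpow_le_rpow_of_exponent_ge hx hx1 hq)

theorem exp_neg_four_mul_add_lt_one_sub {x y : ℝ} (hx : 0 ≤ x) (hx1 : x ≤ 1 / 4) (hy : 0 < y) :
    Real.exp (-(4 * x + 4 * y)) < 1 - x := by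
  rw [Real.exp_neg, inv_lt_comm₀ (Real.exp_pos _) (by linarith),
    inv_lt_iff_one_lt_mul₀ (by linarith)]
  calc 1 < (4 * x + 4 * y + 1) * (1 - x) := by nlinarith
    _ ≤ Real.exp (4 * x + 4 * y) * (1 - x) :=
      mul_le_mul_of_nonneg_right (Real.add_one_le_exp _) (by linarith)

theorem exp_mul_two_mul_one_add_le {A B δ x : ℝ} (hA : 0 ≤ A) (hB : 0 ≤ B) (hδ : 0 ≤ δ)
    (hAδ : A * δ ≤ 1 / 4) (hδx : δ ≤ x) :
    Real.exp (A * δ * 2) * (1 + B * x) ≤ (1 + (B + 4 * A) * x) ^ 2 := by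
  have hx := hδ.trans hδx
  have hexp : Real.exp (A * δ * 2) ≤ 1 + 4 * A * x := by
    have : 0 ≤ A * δ := by positivity
    have habs := Real.abs_exp_sub_one_le (x := A * δ * 2)
      (by rw [abs_of_nonneg (by positivity)]; linarith)
    rw [abs_of_nonneg (by positivity : 0 ≤ A * δ * 2)] at habs
    linarith [(abs_le.1 habs).2, mul_le_mul_of_nonneg_left hδx hA]
  calc Real.exp (A * δ * 2) * (1 + B * x) ≤ (1 + 4 * A * x) * (1 + B * x) := by gcongr
    _ ≤ (1 + (B + 4 * A) * x) * (1 + (B + 4 * A) * x) := by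
      gcongr <;> linarith
    _ = (1 + (B + 4 * A) * x) ^ 2 := (sq _).symm

end RealEstimates

section OsculatingModel

open Filter Topology

variable {E V : Type*} [NormedAddCommGroup V]

/-- The remainder of `d` with respect to the model `d z + 2 Re s - ‖g‖² + K |s|²`, in which
`s` and `g` are holomorphic and vanish at `z`. -/
def modelRemainder (d : E → ℝ) (z : E) (s : E → ℂ) (g : E → V) (K : ℝ) (w : E) : ℝ :=
  d w - (d z + 2 * (s w).re - ‖g w‖ ^ 2 + K * ‖s w‖ ^ 2)

theorem norm_ofReal_add_sq (δ : ℝ) (w : ℂ) :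
    ‖(δ : ℂ) + w‖ ^ 2 = δ ^ 2 + 2 * δ * w.re + ‖w‖ ^ 2 := by
  rw [← Complex.normSq_eq_norm_sq, ← Complex.normSq_eq_norm_sq, Complex.normSq_add]
  simp [Complex.normSq_ofReal]
  ring

/-- This identity is why the comparison map takes `Ω` almost into the unit ball. -/
theorem norm_sq_add_norm_sq_eq (d : E → ℝ) (z : E) (s : E → ℂ) (g : E → V) (K : ℝ) (w : E) :
    (1 - K * d z) * ‖s w‖ ^ 2 + d z * ‖g w‖ ^ 2
      = ‖(d z : ℂ) + s w‖ ^ 2 - d z * d w + d z * modelRemainder d z s g K w := by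
  rw [norm_ofReal_add_sq, modelRemainder]
  ring

/-- The exponent of a holomorphic peak function at `z`: twice its real part is comparable to
`-dist w z ^ 2` on `Ω`, up to a multiple of `d z`. -/
def peakExponent (K : ℝ) (s : E → ℂ) (w : E) : ℂ := -(s w - (K / 2 : ℝ) * s w ^ 2)

theorem two_mul_re_peakExponent (K : ℝ) (s : E → ℂ) (w : E) :
    2 * (peakExponent K s w).re = -2 * (s w).re + K * (2 * (s w).re ^ 2 - ‖s w‖ ^ 2) := by
  have hnorm : ‖s w‖ ^ 2 = (s w).re ^ 2 + (s w).im ^ 2 := by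
    rw [← Complex.normSq_eq_norm_sq, Complex.normSq_apply]
    ring
  have hre : (s w ^ 2).re = (s w).re ^ 2 - (s w).im ^ 2 := by
    rw [sq (s w), Complex.mul_re]
    ring
  simp only [peakExponent, Complex.neg_re, Complex.sub_re, Complex.re_ofReal_mul, hre, hnorm]
  ring

variable [InnerProductSpace ℂ V]

/-- The holomorphic map `(√κ s, √δ g) / (δ + s)`, which compares the model domain
`{δ + 2 Re s - ‖g‖² + (1 - κ) / δ * |s|² > 0}` with the unit ball. -/
def comparisonMap (κ δ : ℝ) (s : E → ℂ) (g : E → V) (w : E) : WithLp 2 (ℂ × V) :=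
  (δ + s w)⁻¹ • WithLp.toLp 2 ((√κ : ℂ) * s w, (√δ : ℂ) • g w)

theorem norm_toLp_sqrt_sq {κ δ : ℝ} (hκ : 0 ≤ κ) (hδ : 0 ≤ δ) (x : ℂ) (v : V) :
    ‖WithLp.toLp 2 ((√κ : ℂ) * x, (√δ : ℂ) • v)‖ ^ 2 = κ * ‖x‖ ^ 2 + δ * ‖v‖ ^ 2 := by
  simp [WithLp.prod_norm_sq_eq_of_L2, norm_smul, mul_pow, Real.sq_sqrt hκ, Real.sq_sqrt hδ]

theorem norm_comparisonMap_sq {κ δ : ℝ} (hκ : 0 ≤ κ) (hδ : 0 ≤ δ) (s : E → ℂ) (g : E → V) (w : E) :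
    ‖comparisonMap κ δ s g w‖ ^ 2
      = (κ * ‖s w‖ ^ 2 + δ * ‖g w‖ ^ 2) / ‖(δ : ℂ) + s w‖ ^ 2 := by
  rw [comparisonMap, norm_smul, mul_pow, norm_toLp_sqrt_sq hκ hδ, norm_inv]
  ring

variable [NormedAddCommGroup E] [NormedSpace ℂ E]

/-- `Ω` is osculated at `z` by the model domain `{d z + 2 Re s - ‖g‖² + K |s|² > 0}`: on the points
of `Ω` within distance `R` of `z`, the positive function `d` differs from the model by an error of
order `2 + τ`, up to a term controlled by `|s|`. -/
structure IsOsculatingModel (Ω : Set E) (d : E → ℝ) (z : E) (s : E → ℂ) (g : E → V)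
    (C c K τ R : ℝ) : Prop where
  differentiable_s : Differentiable ℂ s
  differentiable_g : Differentiable ℂ g
  s_self : s z = 0
  g_self : g z = 0
  pos : ∀ w ∈ Ω, dist w z ≤ R → 0 < d w
  abs_remainder_le : ∀ w ∈ Ω, dist w z ≤ R →
    |modelRemainder d z s g K w| ≤ C * (dist w z ^ (2 + τ) + ‖s w‖ * dist w z ^ 2)
  le_norm_g_sq : ∀ w ∈ Ω, dist w z ≤ R → c * dist w z ^ 2 ≤ ‖g w‖ ^ 2
  norm_g_le : ∀ w ∈ Ω, dist w z ≤ R → ‖g w‖ ≤ C * dist w z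
  norm_s_le : ∀ w ∈ Ω, dist w z ≤ R → ‖s w‖ ≤ C * dist w z

theorem IsOsculatingModel.mono {Ω : Set E} {d : E → ℝ} {z : E} {s : E → ℂ} {g : E → V}
    {C c K τ R R' : ℝ} (h : IsOsculatingModel Ω d z s g C c K τ R) (hR : R' ≤ R) :
    IsOsculatingModel Ω d z s g C c K τ R' where
  differentiable_s := h.differentiable_s
  differentiable_g := h.differentiable_g
  s_self := h.s_self
  g_self := h.g_self
  pos w hw hwR := h.pos w hw (hwR.trans hR)
  abs_remainder_le w hw hwR := h.abs_remainder_le w hw (hwR.trans hR)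
  le_norm_g_sq w hw hwR := h.le_norm_g_sq w hw (hwR.trans hR)
  norm_g_le w hw hwR := h.norm_g_le w hw (hwR.trans hR)
  norm_s_le w hw hwR := h.norm_s_le w hw (hwR.trans hR)

/-- A radius so small that the errors of an osculating model with constants `C`, `c`, `K`, `τ` are
absorbed by its main terms. -/
structure IsAdmissibleRadius (C c K τ R : ℝ) : Prop where
  C_pos : 0 < C
  c_pos : 0 < c
  c_le_one : c ≤ 1
  K_nonneg : 0 ≤ K
  τ_pos : 0 < τ
  τ_le_two : τ ≤ 2
  pos : 0 < R
  le_one : R ≤ 1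
  mul_le : K * C * R ≤ 1 / 4
  error_le : C * R ^ τ + C ^ 2 * R ≤ c / 4
  growth_le : K * C * R * (C ^ 2 + K * C ^ 2 + 1) ≤ c / 4

theorem exists_isAdmissibleRadius_le {C c K τ ρ : ℝ} (hC : 0 < C) (hc : 0 < c) (hc1 : c ≤ 1)
    (hK : 0 ≤ K) (hτ : 0 < τ) (hτ2 : τ ≤ 2) (hρ : 0 < ρ) :
    ∃ R ≤ ρ, IsAdmissibleRadius C c K τ R := by
  have hsmall {f : ℝ → ℝ} (hf : Continuous f) (h0 : f 0 = 0) {b : ℝ} (hb : 0 < b) :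
      ∀ᶠ R in 𝓝[>] (0 : ℝ), f R ≤ b :=
    nhdsWithin_le_nhds (hf.continuousAt.eventually_le_const (h0.trans_lt hb))
  have hpow : Continuous fun R : ℝ => R ^ τ := Real.continuous_rpow_const hτ.le
  obtain ⟨R, hR, hRρ, hR1, hmul, herror, hgrowth⟩ := ((eventually_mem_nhdsWithin (a := (0 : ℝ))).and
    ((hsmall continuous_id rfl hρ).and ((hsmall continuous_id rfl one_pos).and
    ((hsmall (f := fun R => K * C * R) (by fun_prop) (by simp) (b := 1 / 4) (by norm_num)).and
    ((hsmall (f := fun R => C * R ^ τ + C ^ 2 * R) (by fun_prop)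
      (by simp [Real.zero_rpow hτ.ne']) (b := c / 4) (by positivity)).and
    (hsmall (f := fun R => K * C * R * (C ^ 2 + K * C ^ 2 + 1)) (by fun_prop) (by simp)
      (b := c / 4) (by positivity))))))).exists
  exact ⟨R, hRρ, hC, hc, hc1, hK, hτ, hτ2, hR, hR1, hmul, herror, hgrowth⟩

namespace IsOsculatingModel

variable {Ω : Set E} {d : E → ℝ} {z : E} {s : E → ℂ} {g : E → V} {C c K τ R : ℝ}
  {w : E}

theorem abs_remainder_le_sq (h : IsOsculatingModel Ω d z s g C c K τ R)
    (hR : IsAdmissibleRadius C c K τ R) (hw : w ∈ Ω) (hwR : dist w z ≤ R) :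
    |modelRemainder d z s g K w| ≤ c / 4 * dist w z ^ 2 := by
  have hC := hR.C_pos.le
  calc |modelRemainder d z s g K w|
      ≤ C * (dist w z ^ (2 + τ) + ‖s w‖ * dist w z ^ 2) := h.abs_remainder_le w hw hwR
    _ = C * (dist w z ^ τ * dist w z ^ 2 + ‖s w‖ * dist w z ^ 2) := by
      rw [add_comm 2 τ, Real.rpow_add_of_nonneg dist_nonneg hR.τ_pos.le zero_le_two, Real.rpow_two]
    _ ≤ C * (R ^ τ * dist w z ^ 2 + C * R * dist w z ^ 2) := by
      have hs : ‖s w‖ ≤ C * R := (h.norm_s_le w hw hwR).trans (by gcongr)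
      have hτ := hR.τ_pos.le
      gcongr
    _ = (C * R ^ τ + C ^ 2 * R) * dist w z ^ 2 := by ring
    _ ≤ c / 4 * dist w z ^ 2 := by
      gcongr
      exact hR.error_le

theorem K_mul_norm_s_mul_le (h : IsOsculatingModel Ω d z s g C c K τ R)
    (hR : IsAdmissibleRadius C c K τ R) (hw : w ∈ Ω) (hwR : dist w z ≤ R) :
    K * ‖s w‖ ≤ 1 / 4 := by
  have hC := hR.C_pos.le
  have hK := hR.K_nonneg
  calc K * ‖s w‖ ≤ K * (C * R) := by
        gcongr
        exact (h.norm_s_le w hw hwR).trans (by gcongr)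
    _ = K * C * R := by ring
    _ ≤ 1 / 4 := hR.mul_le

theorem add_add_le_three_mul_norm (h : IsOsculatingModel Ω d z s g C c K τ R)
    (hR : IsAdmissibleRadius C c K τ R) (hz : z ∈ Ω) (hw : w ∈ Ω) (hwR : dist w z ≤ R) :
    d z + d w + c * dist w z ^ 2 ≤ 3 * ‖(d z : ℂ) + s w‖ := by
  have hδ : 0 < d z := h.pos z hz (by simp [hR.pos.le])
  have hre : d z + (s w).re ≤ ‖(d z : ℂ) + s w‖ := by
    simpa using Complex.re_le_norm ((d z : ℂ) + s w)
  have hs : ‖s w‖ ≤ ‖(d z : ℂ) + s w‖ + d z := by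
    simpa [abs_of_pos hδ] using norm_sub_le ((d z : ℂ) + s w) (d z)
  have hKs : K * ‖s w‖ ^ 2 ≤ 1 / 4 * (‖(d z : ℂ) + s w‖ + d z) := by
    rw [sq, ← mul_assoc]
    gcongr
    exact h.K_mul_norm_s_mul_le hR hw hwR
  have he := (abs_le.1 (h.abs_remainder_le_sq hR hw hwR)).2
  have hg := h.le_norm_g_sq w hw hwR
  rw [modelRemainder] at he
  have hd := h.pos w hw hwR
  have : 0 ≤ c * dist w z ^ 2 := mul_nonneg hR.c_pos.le (sq_nonneg _)
  linarith

theorem norm_add_pos (h : IsOsculatingModel Ω d z s g C c K τ R)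
    (hR : IsAdmissibleRadius C c K τ R) (hz : z ∈ Ω) (hw : w ∈ Ω) (hwR : dist w z ≤ R) :
    0 < ‖(d z : ℂ) + s w‖ := by
  have hδ : 0 < d z := h.pos z hz (by simp [hR.pos.le])
  have hd := h.pos w hw hwR
  have : 0 ≤ c * dist w z ^ 2 := mul_nonneg hR.c_pos.le (sq_nonneg _)
  linarith [h.add_add_le_three_mul_norm hR hz hw hwR]

theorem mul_abs_remainder_le (h : IsOsculatingModel Ω d z s g C c K τ R)
    (hR : IsAdmissibleRadius C c K τ R) (hz : z ∈ Ω) (hδ1 : d z ≤ 1) (hw : w ∈ Ω)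
    (hwR : dist w z ≤ R) :
    d z * |modelRemainder d z s g K w|
      ≤ C * (9 / c ^ 2 + 12 / c) * d z ^ (τ / 2) * ‖(d z : ℂ) + s w‖ ^ 2 := by
  have hC := hR.C_pos
  have hc := hR.c_pos
  have hδ : 0 < d z := h.pos z hz (by simp [hR.pos.le])
  have hd := h.pos w hw hwR
  have hmain := h.add_add_le_three_mul_norm hR hz hw hwR
  have hc2 : 0 ≤ c * dist w z ^ 2 := by positivity
  have hs : ‖s w‖ ≤ ‖(d z : ℂ) + s w‖ + d z := by
    simpa [abs_of_pos hδ] using norm_sub_le ((d z : ℂ) + s w) (d z)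
  set S := ‖(d z : ℂ) + s w‖
  set t := dist w z
  have hpow : d z * t ^ (2 + τ) ≤ d z ^ (τ / 2) * (3 / c * S) ^ 2 := by
    refine (mul_rpow_two_add_le hδ dist_nonneg hR.τ_pos.le hR.τ_le_two).trans ?_
    gcongr
    rw [div_mul_eq_mul_div, le_div_iff₀ hc]
    linarith [mul_le_of_le_one_right hδ.le hR.c_le_one]
  have hst : d z * (‖s w‖ * t ^ 2) ≤ d z ^ (τ / 2) * ((4 * S) * (3 / c * S)) := by
    gcongr
    · exact le_rpow_self_of_le_one hδ hδ1 (by linarith [hR.τ_le_two])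
    · linarith
    · rw [div_mul_eq_mul_div, le_div_iff₀ hc]
      linarith
  calc d z * |modelRemainder d z s g K w|
      ≤ d z * (C * (t ^ (2 + τ) + ‖s w‖ * t ^ 2)) := by
        gcongr
        exact h.abs_remainder_le w hw hwR
    _ = C * (d z * t ^ (2 + τ) + d z * (‖s w‖ * t ^ 2)) := by ring
    _ ≤ C * (d z ^ (τ / 2) * (3 / c * S) ^ 2 + d z ^ (τ / 2) * ((4 * S) * (3 / c * S))) := by
        gcongr
    _ = C * (9 / c ^ 2 + 12 / c) * d z ^ (τ / 2) * S ^ 2 := by ring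

theorem abs_two_mul_re_le (h : IsOsculatingModel Ω d z s g C c K τ R)
    (hR : IsAdmissibleRadius C c K τ R) (hz : z ∈ Ω) (hw : w ∈ Ω) (hwR : dist w z ≤ R) :
    |2 * (s w).re| ≤ d w + d z + (C ^ 2 + K * C ^ 2 + 1) * dist w z ^ 2 := by
  have hK := hR.K_nonneg
  have hδ : 0 < d z := h.pos z hz (by simp [hR.pos.le])
  have hd := h.pos w hw hwR
  have he := abs_le.1 (h.abs_remainder_le_sq hR hw hwR)
  rw [modelRemainder] at he
  have hg : ‖g w‖ ^ 2 ≤ C ^ 2 * dist w z ^ 2 := by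
    rw [← mul_pow]
    gcongr
    exact h.norm_g_le w hw hwR
  have hs : K * ‖s w‖ ^ 2 ≤ K * C ^ 2 * dist w z ^ 2 := by
    rw [mul_assoc, ← mul_pow]
    gcongr
    exact h.norm_s_le w hw hwR
  have hKs : 0 ≤ K * ‖s w‖ ^ 2 := by positivity
  have hcle : c / 4 * dist w z ^ 2 ≤ 1 * dist w z ^ 2 := by
    gcongr
    linarith [hR.c_le_one]
  have hC2 : 0 ≤ C ^ 2 * dist w z ^ 2 := by positivity
  have hg0 : 0 ≤ ‖g w‖ ^ 2 := sq_nonneg _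
  rw [abs_le]
  constructor <;> linarith

theorem two_mul_re_peakExponent_le (h : IsOsculatingModel Ω d z s g C c K τ R)
    (hR : IsAdmissibleRadius C c K τ R) (hz : z ∈ Ω) (hw : w ∈ Ω) (hwR : dist w z ≤ R) :
    2 * (peakExponent K s w).re ≤ 2 * d z - c / 2 * dist w z ^ 2 := by
  have hC := hR.C_pos.le
  have hK := hR.K_nonneg
  have hδ : 0 < d z := h.pos z hz (by simp [hR.pos.le])
  have hd := h.pos w hw hwR
  have he := (abs_le.1 (h.abs_remainder_le_sq hR hw hwR)).2
  rw [modelRemainder] at he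
  have hg := h.le_norm_g_sq w hw hwR
  have hre2 : K * (2 * (s w).re ^ 2) ≤ 1 / 4 * (d w + d z) + c / 4 * dist w z ^ 2 := by
    calc K * (2 * (s w).re ^ 2) = K * |(s w).re| * |2 * (s w).re| := by
          rw [abs_mul, abs_two, ← sq_abs]
          ring
      _ ≤ K * C * R * (d w + d z + (C ^ 2 + K * C ^ 2 + 1) * dist w z ^ 2) := by
          have hre : |(s w).re| ≤ C * R :=
            (Complex.abs_re_le_norm _).trans ((h.norm_s_le w hw hwR).trans (by gcongr))
          have : 0 ≤ R := hR.pos.le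
          rw [mul_assoc K C R]
          gcongr
          exact h.abs_two_mul_re_le hR hz hw hwR
      _ = K * C * R * (d w + d z) + K * C * R * (C ^ 2 + K * C ^ 2 + 1) * dist w z ^ 2 := by ring
      _ ≤ 1 / 4 * (d w + d z) + c / 4 * dist w z ^ 2 := by
          gcongr
          exacts [hR.mul_le, hR.growth_le]
  rw [two_mul_re_peakExponent]
  linarith

theorem neg_two_mul_re_peakExponent_le (h : IsOsculatingModel Ω d z s g C c K τ R)
    (hR : IsAdmissibleRadius C c K τ R) (hw : w ∈ Ω) (hwR : dist w z ≤ R) :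
    -(2 * (peakExponent K s w).re) ≤ (2 * C + K * C ^ 2) * dist w z := by
  have hK := hR.K_nonneg
  have hs : ‖s w‖ ≤ C * dist w z := h.norm_s_le w hw hwR
  have hre := (abs_le.1 (Complex.abs_re_le_norm (s w))).2
  have hs2 : K * ‖s w‖ ^ 2 ≤ K * (C ^ 2 * dist w z) := by
    gcongr
    calc ‖s w‖ ^ 2 ≤ (C * dist w z) ^ 2 := by gcongr
      _ = C ^ 2 * (dist w z * dist w z) := by ring
      _ ≤ C ^ 2 * dist w z := by
        gcongr
        exact mul_le_of_le_one_left dist_nonneg (hwR.trans hR.le_one)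
  have hre2 : 0 ≤ K * (s w).re ^ 2 := by positivity
  rw [two_mul_re_peakExponent]
  linarith

end IsOsculatingModel

theorem differentiableAt_comparisonMap {κ δ : ℝ} {s : E → ℂ} {g : E → V} {w : E}
    (hs : DifferentiableAt ℂ s w) (hg : DifferentiableAt ℂ g w) (h0 : (δ : ℂ) + s w ≠ 0) :
    DifferentiableAt ℂ (comparisonMap κ δ s g) w := by
  have hpair := (hs.const_mul (√κ : ℂ)).prodMk (hg.const_smul (√δ : ℂ))
  exact ((hs.const_add (δ : ℂ)).inv h0).smul
    ((WithLp.prodContinuousLinearEquiv 2 ℂ ℂ V).symm.differentiableAt.comp w hpair)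

theorem norm_fderiv_comparisonMap_sq {κ δ : ℝ} (hκ : 0 ≤ κ) (hδ : 0 < δ) {s : E → ℂ}
    {g : E → V} {z : E} (hs : DifferentiableAt ℂ s z) (hg : DifferentiableAt ℂ g z)
    (hsz : s z = 0) (hgz : g z = 0) (X : E) :
    ‖fderiv ℂ (comparisonMap κ δ s g) z X‖ ^ 2
      = (κ * ‖fderiv ℂ s z X‖ ^ 2 + δ * ‖fderiv ℂ g z X‖ ^ 2) / δ ^ 2 := by
  have hpair := (hs.hasFDerivAt.const_mul (√κ : ℂ)).prodMk (hg.hasFDerivAt.const_smul (√δ : ℂ))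
  have hnum := (WithLp.prodContinuousLinearEquiv 2 ℂ ℂ V).symm.hasFDerivAt.comp z hpair
  have hδz : (δ : ℂ) + s z ≠ 0 := by simp [hsz, hδ.ne']
  have hden := ((hs.const_add (δ : ℂ)).inv hδz).hasFDerivAt
  have hfderiv : fderiv ℂ (comparisonMap κ δ s g) z X
      = (δ : ℂ)⁻¹ • WithLp.toLp 2 ((√κ : ℂ) * fderiv ℂ s z X, (√δ : ℂ) • fderiv ℂ g z X) := by
    have h : HasFDerivAt (comparisonMap κ δ s g) _ z := hden.smul hnum
    rw [h.fderiv]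
    simp [hsz, hgz]
  rw [hfderiv, norm_smul, mul_pow, norm_toLp_sqrt_sq hκ hδ.le, norm_inv, Complex.norm_real,
    Real.norm_eq_abs, abs_of_pos hδ]
  field_simp

namespace IsOsculatingModel

variable {Ω : Set E} {d : E → ℝ} {z : E} {s : E → ℂ} {g : E → V} {C c K τ R : ℝ}
  {w : E}

theorem norm_comparisonMap_sq_le (h : IsOsculatingModel Ω d z s g C c K τ R)
    (hR : IsAdmissibleRadius C c K τ R) (hz : z ∈ Ω) (hδ1 : d z ≤ 1) (hKδ : K * d z ≤ 1)
    (hw : w ∈ Ω) (hwR : dist w z ≤ R) :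
    ‖comparisonMap (1 - K * d z) (d z) s g w‖ ^ 2
      ≤ 1 + C * (9 / c ^ 2 + 12 / c) * d z ^ (τ / 2) := by
  have hδ : 0 < d z := h.pos z hz (by simp [hR.pos.le])
  have hS := h.norm_add_pos hR hz hw hwR
  rw [norm_comparisonMap_sq (by linarith) hδ.le, norm_sq_add_norm_sq_eq,
    div_le_iff₀ (by positivity)]
  have he := h.mul_abs_remainder_le hR hz hδ1 hw hwR
  have hle := mul_le_mul_of_nonneg_left (le_abs_self (modelRemainder d z s g K w)) hδ.le
  have hd : 0 < d z * d w := mul_pos hδ (h.pos w hw hwR)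
  linarith

theorem abs_norm_comparisonMap_sq_sub_one_le (h : IsOsculatingModel Ω d z s g C c K τ R)
    (hR : IsAdmissibleRadius C c K τ R) (hz : z ∈ Ω) (hKδ : K * d z ≤ 1)
    (hw : w ∈ Ω) (hwR : dist w z ≤ R) {t : ℝ} (ht : 0 < t) (htw : t ≤ dist w z) :
    |‖comparisonMap (1 - K * d z) (d z) s g w‖ ^ 2 - 1| ≤ 12 / (c * t ^ 2) * d z := by
  have hc := hR.c_pos
  have hδ : 0 < d z := h.pos z hz (by simp [hR.pos.le])
  have hd := h.pos w hw hwR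
  have hmain := h.add_add_le_three_mul_norm hR hz hw hwR
  have he := h.abs_remainder_le_sq hR hw hwR
  have hS := h.norm_add_pos hR hz hw hwR
  rw [norm_comparisonMap_sq (by linarith) hδ.le, norm_sq_add_norm_sq_eq]
  set S := ‖(d z : ℂ) + s w‖
  set e := modelRemainder d z s g K w
  have hct : c * t ^ 2 ≤ 3 * S := by
    have : c * t ^ 2 ≤ c * dist w z ^ 2 := by gcongr
    linarith
  have hed : |e - d w| ≤ 12 / (c * t ^ 2) * S ^ 2 := by
    have hcw : 0 ≤ c * dist w z ^ 2 := by positivity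
    calc |e - d w| ≤ |e| + |d w| := abs_sub _ _
      _ ≤ 3 * S := by
        rw [abs_of_pos hd]
        linarith
      _ ≤ 12 / (c * t ^ 2) * S ^ 2 := by
        rw [div_mul_eq_mul_div, le_div_iff₀ (by positivity)]
        nlinarith
  have hquot : (S ^ 2 - d z * d w + d z * e) / S ^ 2 - 1 = d z * (e - d w) / S ^ 2 := by
    field_simp
    ring
  rw [hquot, abs_div, abs_mul, abs_of_pos hδ, abs_of_pos (pow_pos hS 2),
    div_le_iff₀ (by positivity)]
  calc d z * |e - d w| ≤ d z * (12 / (c * t ^ 2) * S ^ 2) := by gcongr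
    _ = 12 / (c * t ^ 2) * d z * S ^ 2 := by ring

end IsOsculatingModel

/-- Here `c₁` is the level of `-2 Re peakExponent` separating `z` from the sphere of radius `R`, and
the points of this level have distance at least `t₁` from `z`. -/
theorem IsOsculatingModel.norm_fderiv_sq_le [CompleteSpace V] {Ω : Set E} {d : E → ℝ} {z : E}
    {s : E → ℂ} {g : E → V} {C c K τ R A c₁ t₁ : ℝ} {φ : ℂ → E}
    (h : IsOsculatingModel Ω d z s g C c K τ R) (hR : IsAdmissibleRadius C c K τ R)
    (hz : z ∈ Ω) (hδ1 : d z ≤ 1) (hKδ : K * d z ≤ 1) (hδc₁ : d z ≤ 2 * c₁)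
    (hc₁R : 16 * c₁ ≤ c * R ^ 2) (ht₁ : 0 < t₁) (ht₁R : t₁ ≤ R)
    (ht₁c₁ : (2 * C + K * C ^ 2) * t₁ ≤ c₁) (hA : 0 ≤ A)
    (hAc₁ : 4 * (12 / (c * t₁ ^ 2)) + 4 ≤ A * c₁) (hδt₁ : 12 / (c * t₁ ^ 2) * d z ≤ 1 / 4)
    (hφ : DifferentiableOn ℂ φ (ball 0 1)) (hφΩ : MapsTo φ (ball 0 1) Ω) (hφ0 : φ 0 = z) :
    ((1 - K * d z) * ‖fderiv ℂ s z (deriv φ 0)‖ ^ 2 + d z * ‖fderiv ℂ g z (deriv φ 0)‖ ^ 2)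
        / d z ^ 2
      ≤ Real.exp (A * d z * 2) * (1 + C * (9 / c ^ 2 + 12 / c) * d z ^ (τ / 2)) := by
  have hδ : 0 < d z := h.pos z hz (by simp [hR.pos.le])
  have hC := hR.C_pos
  have hc := hR.c_pos
  have hK := hR.K_nonneg
  set C₂ := 12 / (c * t₁ ^ 2)
  have : 0 ≤ C₂ := by positivity
  have hclose : ∀ w ∈ Ω, dist w z ≤ R → t₁ ≤ dist w z →
      |‖comparisonMap (1 - K * d z) (d z) s g w‖ ^ 2 - 1| ≤ C₂ * d z :=
    fun w hw hwR htw => h.abs_norm_comparisonMap_sq_sub_one_le hR hz hKδ hw hwR ht₁ htw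
  have hexponent : 4 * (C₂ * d z) + 4 * d z ≤ A * d z * c₁ := by
    linarith [mul_le_mul_of_nonneg_right hAc₁ hδ.le]
  rw [← norm_fderiv_comparisonMap_sq (by linarith) hδ (h.differentiable_s z)
    (h.differentiable_g z) h.s_self h.g_self]
  refine norm_sq_fderiv_deriv_zero_le_of_barrier (P := peakExponent K s) (c := c₁) hR.pos
    (by positivity) (by linarith)
    (h.differentiable_s.sub ((h.differentiable_s.pow 2).const_mul _)).neg
    (by simp [peakExponent, h.s_self]) (by simp [comparisonMap, h.s_self, h.g_self])
    (fun w hw hwR => differentiableAt_comparisonMap (h.differentiable_s w)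
      (h.differentiable_g w) (norm_pos_iff.1 (h.norm_add_pos hR hz hw hwR)))
    (fun w hw hwR => h.norm_comparisonMap_sq_le hR hz hδ1 hKδ hw hwR)
    (fun w hw hwR => ?_) (fun w hw hwR hlevel => ?_) (fun w hw hwR => ⟨?_, ?_⟩) hφ hφΩ hφ0
  · have : 0 ≤ c / 2 * dist w z ^ 2 := by positivity
    linarith [h.two_mul_re_peakExponent_le hR hz hw hwR]
  · have htw : t₁ ≤ dist w z := by
      have hle := h.neg_two_mul_re_peakExponent_le hR hw hwR
      rw [hlevel, neg_neg] at hle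
      exact le_of_mul_le_mul_left (ht₁c₁.trans hle) (by positivity)
    calc Real.exp (-(A * d z * c₁)) ≤ Real.exp (-(4 * (C₂ * d z) + 4 * d z)) := by gcongr
      _ < 1 - C₂ * d z := exp_neg_four_mul_add_lt_one_sub (by positivity) hδt₁ hδ
      _ ≤ _ := by linarith [(abs_le.1 (hclose w hw hwR htw)).1]
  · have hle := h.two_mul_re_peakExponent_le hR hz hw hwR.le
    rw [hwR] at hle
    linarith
  · calc ‖comparisonMap (1 - K * d z) (d z) s g w‖ ^ 2 ≤ 1 + C₂ * d z := by
          linarith [(abs_le.1 (hclose w hw hwR.le (ht₁R.trans_eq hwR.symm))).2]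
      _ < 2 * (A * d z * c₁) + 1 := by
          have : 0 ≤ C₂ * d z := by positivity
          linarith
      _ ≤ Real.exp (2 * (A * d z * c₁)) := Real.add_one_le_exp _

theorem exists_norm_fderiv_sq_le_of_isAdmissibleRadius [CompleteSpace V] {C c K τ R : ℝ}
    (hR : IsAdmissibleRadius C c K τ R) :
    ∃ C' > 0, ∃ δ₀ > 0, ∀ (Ω : Set E) (d : E → ℝ) (z : E) (s : E → ℂ) (g : E → V),
      IsOsculatingModel Ω d z s g C c K τ R → z ∈ Ω → d z ≤ δ₀ →
      ∀ φ : ℂ → E, DifferentiableOn ℂ φ (ball 0 1) → MapsTo φ (ball 0 1) Ω → φ 0 = z →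
        ((1 - K * d z) * ‖fderiv ℂ s z (deriv φ 0)‖ ^ 2
          + d z * ‖fderiv ℂ g z (deriv φ 0)‖ ^ 2) / d z ^ 2 ≤ (1 + C' * d z ^ (τ / 2)) ^ 2 := by
  have hRpos := hR.pos
  have hC := hR.C_pos
  have hc := hR.c_pos
  have hK := hR.K_nonneg
  obtain ⟨c₁, hc₁, hc₁R⟩ : ∃ c₁ > 0, 16 * c₁ = c * R ^ 2 :=
    ⟨c * R ^ 2 / 16, by positivity, by ring⟩
  obtain ⟨t₁, ht₁, ht₁R, ht₁c₁⟩ : ∃ t₁ > 0, t₁ ≤ R ∧ (2 * C + K * C ^ 2) * t₁ ≤ c₁ := by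
    refine ⟨min R (c₁ / (2 * C + K * C ^ 2)), by positivity, min_le_left _ _, ?_⟩
    calc _ ≤ (2 * C + K * C ^ 2) * (c₁ / (2 * C + K * C ^ 2)) := by
          gcongr
          exact min_le_right _ _
      _ = c₁ := by field_simp
  obtain ⟨C₂, hC₂, hC₂def⟩ : ∃ C₂ > 0, 12 / (c * t₁ ^ 2) = C₂ := ⟨_, by positivity, rfl⟩
  obtain ⟨A, hA, hAc₁⟩ : ∃ A > 0, 4 * C₂ + 4 = A * c₁ :=
    ⟨(4 * C₂ + 4) / c₁, by positivity, by field_simp⟩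
  refine ⟨C * (9 / c ^ 2 + 12 / c) + 4 * A, by positivity,
    min 1 (min (2 * c₁) (1 / (4 * (C₂ + K + A)))), by positivity, ?_⟩
  intro Ω d z s g h hz hδ φ hφ hφΩ hφ0
  have hδ0 : 0 < d z := h.pos z hz (by simp [hRpos.le])
  have hδ1 : d z ≤ 1 := hδ.trans (min_le_left _ _)
  have hδc₁ : d z ≤ 2 * c₁ := hδ.trans ((min_le_right _ _).trans (min_le_left _ _))
  have hsum : C₂ * d z + K * d z + A * d z ≤ 1 / 4 := by
    have hle := hδ.trans ((min_le_right _ _).trans (min_le_right _ _))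
    rw [le_div_iff₀ (by positivity)] at hle
    linarith
  have hC₂δ : 0 ≤ C₂ * d z := by positivity
  have hKδ : 0 ≤ K * d z := by positivity
  have hAδ : 0 ≤ A * d z := by positivity
  exact (h.norm_fderiv_sq_le hR hz hδ1 (by linarith) hδc₁ hc₁R.le ht₁ ht₁R ht₁c₁ hA.le
    (by rw [hC₂def, hAc₁]) (by rw [hC₂def]; linarith) hφ hφΩ hφ0).trans
    (exp_mul_two_mul_one_add_le hA.le (by positivity) hδ0.le (by linarith)
      (le_rpow_self_of_le_one hδ0 hδ1 (by linarith [hR.τ_le_two])))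

end OsculatingModel

/-! ### Complex linear and antilinear parts of real forms -/

section ComplexParts

variable {E F : Type*} [NormedAddCommGroup E] [NormedSpace ℂ E]

theorem norm_I_smul (x : E) : ‖Complex.I • x‖ = ‖x‖ := by
  rw [norm_smul, Complex.norm_I, one_mul]

variable [NormedSpace ℝ E] [NormedAddCommGroup F] [NormedSpace ℝ F]

theorem norm_apply_I_smul_le (A : E →L[ℝ] F) (x : E) : ‖A (Complex.I • x)‖ ≤ ‖A‖ * ‖x‖ :=
  (A.le_opNorm _).trans_eq (by rw [norm_I_smul])

variable [IsScalarTower ℝ ℂ E]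

theorem smul_eq_re_smul_add_im_smul (c : ℂ) (x : E) :
    c • x = c.re • x + c.im • Complex.I • x := by
  rw [← algebraMap_smul ℂ c.re x, ← algebraMap_smul ℂ c.im (Complex.I • x), ← mul_smul, ← add_smul,
    Complex.coe_algebraMap, Complex.re_add_im]

theorem map_complex_smul (A : E →L[ℝ] F) (c : ℂ) (x : E) :
    A (c • x) = c.re • A x + c.im • A (Complex.I • x) := by
  rw [smul_eq_re_smul_add_im_smul c x, map_add, map_smul, map_smul]

variable [NormedSpace ℂ F] [IsScalarTower ℝ ℂ F]

/-- The real linear map `x ↦ (A x + u A (i x)) / 2`, which is complex linear for `u = -i` and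
antilinear for `u = i`. -/
def halfTwist (u : ℂ) (A : E →L[ℝ] F) : E →L[ℝ] F :=
  (2⁻¹ : ℝ) • (A + u • A ∘L (Complex.I • ContinuousLinearMap.id ℝ E))

theorem halfTwist_apply (u : ℂ) (A : E →L[ℝ] F) (x : E) :
    halfTwist u A x = (2⁻¹ : ℝ) • (A x + u • A (Complex.I • x)) := rfl

theorem halfTwist_add (u : ℂ) (A B : E →L[ℝ] F) :
    halfTwist u (A + B) = halfTwist u A + halfTwist u B := by
  simp only [halfTwist, ContinuousLinearMap.add_comp, smul_add]
  abel

theorem halfTwist_smul (u : ℂ) (r : ℝ) (A : E →L[ℝ] F) :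
    halfTwist u (r • A) = r • halfTwist u A := by
  simp only [halfTwist, ContinuousLinearMap.smul_comp, smul_add, smul_comm r]

theorem norm_halfTwist_apply_le {u : ℂ} (hu : ‖u‖ ≤ 1) (A : E →L[ℝ] F) (x : E) :
    ‖halfTwist u A x‖ ≤ ‖A‖ * ‖x‖ := by
  have hI : ‖u • A (Complex.I • x)‖ ≤ ‖A‖ * ‖x‖ := by
    rw [norm_smul]
    exact (mul_le_of_le_one_left (norm_nonneg _) hu).trans (norm_apply_I_smul_le A x)
  rw [halfTwist_apply, norm_smul, norm_inv, Real.norm_ofNat]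
  linarith [norm_add_le (A x) (u • A (Complex.I • x)), A.le_opNorm x]

theorem halfTwist_I_smul {u : ℂ} (hu : u * u = -1) (A : E →L[ℝ] F) (x : E) :
    halfTwist u A (Complex.I • x) = -u • halfTwist u A x := by
  have hI : Complex.I • Complex.I • x = -x := by rw [← mul_smul, Complex.I_mul_I, neg_one_smul]
  rw [halfTwist_apply, halfTwist_apply, hI, smul_comm (-u), smul_add (-u), ← mul_smul (-u), neg_mul,
    hu, neg_neg, one_smul, map_neg, smul_neg, neg_smul, add_comm]

theorem halfTwist_complex_smul {u : ℂ} (hu : u * u = -1) (A : E →L[ℝ] F) (c : ℂ) (x : E) :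
    halfTwist u A (c • x) = (c.re + c.im * -u : ℂ) • halfTwist u A x := by
  rw [map_complex_smul, halfTwist_I_smul hu, ← algebraMap_smul ℂ c.re, ← algebraMap_smul ℂ c.im,
    ← mul_smul, ← add_smul]
  rfl

/-- The complex linear part `x ↦ (A x - i A (i x)) / 2` of a real linear map `A`. -/
def complexLinearPart : (E →L[ℝ] F) →L[ℝ] E →L[ℂ] F :=
  LinearMap.mkContinuous
    { toFun A :=
        { halfTwist (-Complex.I) A with
          map_smul' c x := by
            simpa [Complex.re_add_im]
              using halfTwist_complex_smul (u := -Complex.I) (by simp) A c x }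
      map_add' A B := ContinuousLinearMap.ext fun x => congr($(halfTwist_add (-Complex.I) A B) x)
      map_smul' r A := ContinuousLinearMap.ext fun x =>
        congr($(halfTwist_smul (-Complex.I) r A) x) }
    1 fun A => ContinuousLinearMap.opNorm_le_bound _ (by positivity) fun x =>
      (norm_halfTwist_apply_le (by simp) A x).trans_eq (by rw [one_mul])

/-- The antilinear part `x ↦ (A x + i A (i x)) / 2` of a real linear map `A`. -/
def complexAntilinearPart : (E →L[ℝ] F) →L[ℝ] E →L⋆[ℂ] F :=
  LinearMap.mkContinuous
    { toFun A :=
        { halfTwist Complex.I A with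
          map_smul' c x := by
            have hconj : (starRingEnd ℂ) c = c.re + c.im * -Complex.I := by
              apply Complex.ext <;> simp
            simpa [hconj] using halfTwist_complex_smul Complex.I_mul_I A c x }
      map_add' A B := ContinuousLinearMap.ext fun x => congr($(halfTwist_add Complex.I A B) x)
      map_smul' r A := ContinuousLinearMap.ext fun x => congr($(halfTwist_smul Complex.I r A) x) }
    1 fun A => ContinuousLinearMap.opNorm_le_bound _ (by positivity) fun x =>
      (norm_halfTwist_apply_le (by simp) A x).trans_eq (by rw [one_mul])

theorem norm_complexLinearPart_le : ‖complexLinearPart (E := E) (F := F)‖ ≤ 1 :=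
  LinearMap.mkContinuous_norm_le _ zero_le_one _

theorem norm_complexAntilinearPart_le : ‖complexAntilinearPart (E := E) (F := F)‖ ≤ 1 :=
  LinearMap.mkContinuous_norm_le _ zero_le_one _

theorem complexLinearPart_apply (A : E →L[ℝ] F) (x : E) :
    complexLinearPart A x = (2⁻¹ : ℝ) • (A x - Complex.I • A (Complex.I • x)) := by
  rw [sub_eq_add_neg, ← neg_smul]
  rfl

theorem complexAntilinearPart_apply (A : E →L[ℝ] F) (x : E) :
    complexAntilinearPart A x = (2⁻¹ : ℝ) • (A x + Complex.I • A (Complex.I • x)) := rfl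

end ComplexParts

section WirtingerForms

set_option maxSynthPendingDepth 3

theorem norm_comp_le_of_norm_le_one {U V W : Type*} [NormedAddCommGroup U] [NormedSpace ℝ U]
    [NormedAddCommGroup V] [NormedSpace ℝ V] [NormedAddCommGroup W] [NormedSpace ℝ W]
    {L : V →L[ℝ] W} (hL : ‖L‖ ≤ 1) (A : U →L[ℝ] V) : ‖L ∘L A‖ ≤ ‖A‖ :=
  (L.opNorm_comp_le A).trans (mul_le_of_le_one_left (norm_nonneg _) hL)

theorem norm_comp_compL_le_one (U : Type*) {V W X : Type*} [NormedAddCommGroup U] [NormedSpace ℝ U]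
    [NormedAddCommGroup V] [NormedSpace ℝ V] [NormedAddCommGroup W] [NormedSpace ℝ W]
    [NormedAddCommGroup X] [NormedSpace ℝ X] {P : (U →L[ℝ] W) →L[ℝ] X} {L : V →L[ℝ] W}
    (hP : ‖P‖ ≤ 1) (hL : ‖L‖ ≤ 1) : ‖P ∘L ContinuousLinearMap.compL ℝ U V W L‖ ≤ 1 :=
  (norm_comp_le_of_norm_le_one hP _).trans <|
    ((ContinuousLinearMap.le_of_opNorm_le _ (ContinuousLinearMap.norm_compL_le ℝ U V W) L).trans_eq
      (one_mul _)).trans hL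

variable {E : Type*} [NormedAddCommGroup E] [NormedSpace ℂ E] [NormedSpace ℝ E]
  [IsScalarTower ℝ ℂ E]

/-- The form `∂A`, the complex linear part of the real linear form `A = 2 Re ∂A`. -/
def wirtinger : (E →L[ℝ] ℝ) →L[ℝ] E →L[ℂ] ℂ :=
  complexLinearPart ∘L ContinuousLinearMap.compL ℝ E ℝ ℂ Complex.ofRealCLM

/-- The complex bilinear part of a real bilinear form. -/
def bilinearPart : (E →L[ℝ] E →L[ℝ] ℝ) →L[ℝ] E →L[ℂ] E →L[ℂ] ℂ :=
  complexLinearPart ∘L ContinuousLinearMap.compL ℝ E _ _ wirtinger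

/-- The sesquilinear part of a real bilinear form, antilinear in its first argument. -/
def sesquilinearPart : (E →L[ℝ] E →L[ℝ] ℝ) →L[ℝ] E →L⋆[ℂ] E →L[ℂ] ℂ :=
  complexAntilinearPart ∘L ContinuousLinearMap.compL ℝ E _ _ wirtinger

/-- The complex trilinear part of a real trilinear form. -/
def trilinearPart (T : E →L[ℝ] E →L[ℝ] E →L[ℝ] ℝ) : E →L[ℂ] E →L[ℂ] E →L[ℂ] ℂ :=
  complexLinearPart (bilinearPart ∘L T)

/-- The part of a real trilinear form that is antilinear in its first two arguments and linear in
the last one. -/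
def biantilinearPart (T : E →L[ℝ] E →L[ℝ] E →L[ℝ] ℝ) : E →L⋆[ℂ] E →L⋆[ℂ] E →L[ℂ] ℂ :=
  complexAntilinearPart (sesquilinearPart ∘L T)

/-- The Levi form of a function with real second derivative `-B`. -/
def leviQuadratic (B : E →L[ℝ] E →L[ℝ] ℝ) (x : E) : ℝ :=
  -((B x x + B (Complex.I • x) (Complex.I • x)) / 4)

theorem norm_wirtinger_le : ‖wirtinger (E := E)‖ ≤ 1 :=
  norm_comp_compL_le_one E norm_complexLinearPart_le Complex.ofRealCLM_norm.le

theorem norm_bilinearPart_le : ‖bilinearPart (E := E)‖ ≤ 1 :=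
  norm_comp_compL_le_one E norm_complexLinearPart_le norm_wirtinger_le

theorem norm_sesquilinearPart_le : ‖sesquilinearPart (E := E)‖ ≤ 1 :=
  norm_comp_compL_le_one E norm_complexAntilinearPart_le norm_wirtinger_le

theorem norm_trilinearPart_le (T : E →L[ℝ] E →L[ℝ] E →L[ℝ] ℝ) : ‖trilinearPart T‖ ≤ ‖T‖ :=
  (ContinuousLinearMap.le_of_opNorm_le _ norm_complexLinearPart_le _).trans <|
    (one_mul _).trans_le (norm_comp_le_of_norm_le_one norm_bilinearPart_le T)

theorem norm_biantilinearPart_le (T : E →L[ℝ] E →L[ℝ] E →L[ℝ] ℝ) : ‖biantilinearPart T‖ ≤ ‖T‖ :=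
  (ContinuousLinearMap.le_of_opNorm_le _ norm_complexAntilinearPart_le _).trans <|
    (one_mul _).trans_le (norm_comp_le_of_norm_le_one norm_sesquilinearPart_le T)

theorem wirtinger_apply (A : E →L[ℝ] ℝ) (x : E) :
    wirtinger A x = ((A x : ℂ) - Complex.I * (A (Complex.I • x) : ℂ)) / 2 := by
  simp only [wirtinger, ContinuousLinearMap.comp_apply, ContinuousLinearMap.compL_apply,
    complexLinearPart_apply, Complex.ofRealCLM_apply, smul_eq_mul, Complex.real_smul,
    Complex.ofReal_inv, Complex.ofReal_ofNat]
  ring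

theorem bilinearPart_apply (B : E →L[ℝ] E →L[ℝ] ℝ) (x y : E) :
    bilinearPart B x y
      = (wirtinger (B x) y - Complex.I * wirtinger (B (Complex.I • x)) y) / 2 := by
  simp only [bilinearPart, ContinuousLinearMap.comp_apply, ContinuousLinearMap.compL_apply,
    complexLinearPart_apply, smul_apply, sub_apply, smul_eq_mul, Complex.real_smul,
    Complex.ofReal_inv, Complex.ofReal_ofNat]
  ring

theorem sesquilinearPart_apply (B : E →L[ℝ] E →L[ℝ] ℝ) (x y : E) :
    sesquilinearPart B x y
      = (wirtinger (B x) y + Complex.I * wirtinger (B (Complex.I • x)) y) / 2 := by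
  simp only [sesquilinearPart, ContinuousLinearMap.comp_apply, ContinuousLinearMap.compL_apply,
    complexAntilinearPart_apply, add_apply, smul_apply, smul_eq_mul, Complex.real_smul,
    Complex.ofReal_inv, Complex.ofReal_ofNat]
  ring

theorem trilinearPart_apply (T : E →L[ℝ] E →L[ℝ] E →L[ℝ] ℝ) (x y z : E) :
    trilinearPart T x y z
      = (bilinearPart (T x) y z - Complex.I * bilinearPart (T (Complex.I • x)) y z) / 2 := by
  simp only [trilinearPart, complexLinearPart_apply, ContinuousLinearMap.comp_apply, smul_apply,
    sub_apply, smul_eq_mul, Complex.real_smul, Complex.ofReal_inv, Complex.ofReal_ofNat]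
  ring

theorem biantilinearPart_apply (T : E →L[ℝ] E →L[ℝ] E →L[ℝ] ℝ) (x y z : E) :
    biantilinearPart T x y z
      = (sesquilinearPart (T x) y z
          + Complex.I * sesquilinearPart (T (Complex.I • x)) y z) / 2 := by
  simp only [biantilinearPart, complexAntilinearPart_apply, ContinuousLinearMap.comp_apply,
    add_apply, smul_apply, smul_eq_mul, Complex.real_smul, Complex.ofReal_inv,
    Complex.ofReal_ofNat]
  ring

theorem two_mul_re_wirtinger (A : E →L[ℝ] ℝ) (x : E) : 2 * (wirtinger A x).re = A x := by
  simp [wirtinger_apply, mul_div_cancel₀]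

theorem sesquilinearPart_self {B : E →L[ℝ] E →L[ℝ] ℝ} (hB : ∀ x y, B x y = B y x) (x : E) :
    sesquilinearPart B x x = -leviQuadratic B x := by
  rw [sesquilinearPart_apply, wirtinger_apply, wirtinger_apply, leviQuadratic, hB x (Complex.I • x)]
  push_cast
  linear_combination (-B (Complex.I • x) (Complex.I • x) / 4 : ℂ) * Complex.I_sq

theorem half_mul_apply_self (B : E →L[ℝ] E →L[ℝ] ℝ) (x : E) :
    1 / 2 * B x x = (bilinearPart B x x).re - leviQuadratic B x := by
  simp only [bilinearPart_apply, wirtinger_apply, Complex.div_ofNat_re, Complex.div_ofNat_im,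
    Complex.sub_re, Complex.sub_im, Complex.mul_re, Complex.mul_im, Complex.ofReal_re,
    Complex.ofReal_im, Complex.I_re, Complex.I_im, leviQuadratic]
  ring

theorem apply_self_self (T : E →L[ℝ] E →L[ℝ] E →L[ℝ] ℝ) (hT : ∀ x y, T x y = T y x)
    (hT' : ∀ x y z, T x y z = T x z y) (x : E) :
    T x x x = 2 * (trilinearPart T x x x).re + 6 * (biantilinearPart T x x x).re := by
  have hswap : T (Complex.I • x) (Complex.I • x) x = T x (Complex.I • x) (Complex.I • x) := by
    rw [hT', hT]
  simp only [trilinearPart_apply, biantilinearPart_apply, bilinearPart_apply,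
    sesquilinearPart_apply, wirtinger_apply, hT (Complex.I • x) x, hswap, Complex.div_ofNat_re,
    Complex.div_ofNat_im, Complex.add_re, Complex.add_im, Complex.sub_re, Complex.sub_im,
    Complex.mul_re, Complex.mul_im, Complex.ofReal_re, Complex.ofReal_im, Complex.I_re,
    Complex.I_im]
  ring

end WirtingerForms

section SquareRoot

variable {E : Type*} [NormedAddCommGroup E] [InnerProductSpace ℂ E]

theorem exists_norm_sq_eq_re_inner [CompleteSpace E] {T : E →L[ℂ] E} (hT : T.IsPositive) :
    ∃ R : E →L[ℂ] E, R.IsPositive ∧ ∀ x, ‖R x‖ ^ 2 = (inner ℂ (T x) x).re := by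
  have hT0 : 0 ≤ T := (ContinuousLinearMap.nonneg_iff_isPositive T).2 hT
  have hR : (CFC.sqrt T).IsPositive :=
    (ContinuousLinearMap.nonneg_iff_isPositive _).1 (CFC.sqrt_nonneg T)
  refine ⟨CFC.sqrt T, hR, fun x => ?_⟩
  have hsq : CFC.sqrt T (CFC.sqrt T x) = T x := congr($(CFC.sqrt_mul_sqrt_self T hT0) x)
  rw [← hsq, hR.isSymmetric.apply_clm, ← inner_self_eq_norm_sq (𝕜 := ℂ)]
  rfl

theorem exists_norm_sq_eq_re_inner_and_inverse [FiniteDimensional ℂ E] {T : E →L[ℂ] E} {c : ℝ}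
    (hc : 0 < c) (hT : T.IsPositive) (hTc : ∀ x, c * ‖x‖ ^ 2 ≤ (inner ℂ (T x) x).re) :
    ∃ R Rinv : E →L[ℂ] E, (∀ x, ‖R x‖ ^ 2 = (inner ℂ (T x) x).re) ∧
      (∀ x y, inner ℂ (R x) (Rinv y) = inner ℂ x y) ∧ ∀ y, c * ‖Rinv y‖ ^ 2 ≤ ‖y‖ ^ 2 := by
  have : CompleteSpace E := FiniteDimensional.complete ℂ E
  obtain ⟨R, hR, hRT⟩ := exists_norm_sq_eq_re_inner hT
  have hinj : Function.Injective (R : E →ₗ[ℂ] E) := by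
    refine (injective_iff_map_eq_zero _).2 fun x (hx : R x = 0) => ?_
    have hle := hTc x
    rw [← hRT, hx, norm_zero, zero_pow two_ne_zero] at hle
    exact norm_eq_zero.1 (pow_eq_zero_iff two_ne_zero |>.1
      (le_antisymm (nonpos_of_mul_nonpos_right hle hc) (sq_nonneg _)))
  let e := LinearEquiv.ofInjectiveEndo (R : E →ₗ[ℂ] E) hinj
  have hRe (y : E) : R (e.symm y) = y := e.apply_symm_apply y
  refine ⟨R, LinearMap.toContinuousLinearMap (e.symm : E →ₗ[ℂ] E), hRT, fun x y => ?_, fun y => ?_⟩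
  · exact (hR.isSymmetric x _).trans (congrArg (inner ℂ x) (hRe y))
  · have hle := hTc (e.symm y)
    rwa [← hRT, hRe] at hle

variable [NormedSpace ℝ E] [IsScalarTower ℝ ℂ E]

set_option maxSynthPendingDepth 3 in
/-- The operator of the Hermitian form with quadratic form `leviQuadratic B + K |∂A|²`. -/
def leviOperator [CompleteSpace E] (A : E →L[ℝ] ℝ) (B : E →L[ℝ] E →L[ℝ] ℝ) (K : ℝ) : E →L[ℂ] E :=
  InnerProductSpace.continuousLinearMapOfBilin (-sesquilinearPart B) +
    (K : ℂ) • ContinuousLinearMap.adjoint (wirtinger A) ∘L wirtinger A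

theorem inner_leviOperator_self [CompleteSpace E] (A : E →L[ℝ] ℝ) {B : E →L[ℝ] E →L[ℝ] ℝ}
    (hB : ∀ x y, B x y = B y x) (K : ℝ) (x : E) :
    inner ℂ (leviOperator A B K x) x
      = ((leviQuadratic B x + K * ‖wirtinger A x‖ ^ 2 : ℝ) : ℂ) := by
  simp only [leviOperator, add_apply, smul_apply, inner_add_left, inner_smul_left,
    InnerProductSpace.continuousLinearMapOfBilin_apply, ContinuousLinearMap.comp_apply,
    ContinuousLinearMap.adjoint_inner_left, neg_apply, sesquilinearPart_self hB,
    inner_self_eq_norm_sq_to_K]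
  simp

theorem exists_norm_sq_eq_leviQuadratic_add [FiniteDimensional ℂ E] {A : E →L[ℝ] ℝ}
    {B : E →L[ℝ] E →L[ℝ] ℝ} {K c : ℝ} (hB : ∀ x y, B x y = B y x) (hc : 0 < c)
    (hpos : ∀ x, c * ‖x‖ ^ 2 ≤ leviQuadratic B x + K * ‖wirtinger A x‖ ^ 2) :
    ∃ R Rinv : E →L[ℂ] E, (∀ x, ‖R x‖ ^ 2 = leviQuadratic B x + K * ‖wirtinger A x‖ ^ 2) ∧
      (∀ x y, inner ℂ (R x) (Rinv y) = inner ℂ x y) ∧ ∀ y, c * ‖Rinv y‖ ^ 2 ≤ ‖y‖ ^ 2 := by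
  have : CompleteSpace E := FiniteDimensional.complete ℂ E
  have hre (x : E) : (inner ℂ (leviOperator A B K x) x).re
      = leviQuadratic B x + K * ‖wirtinger A x‖ ^ 2 := by
    rw [inner_leviOperator_self A hB, Complex.ofReal_re]
  have hT : (leviOperator A B K).IsPositive := by
    refine (leviOperator A B K).isPositive_iff_complex.2 fun x => ⟨?_, ?_⟩
    · rw [inner_leviOperator_self A hB, RCLike.re_eq_complex_re, Complex.ofReal_re]
    · rw [RCLike.re_eq_complex_re, hre]
      exact (by positivity : 0 ≤ c * ‖x‖ ^ 2).trans (hpos x)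
  obtain ⟨R, Rinv, hR, hinner, hRinv⟩ :=
    exists_norm_sq_eq_re_inner_and_inverse hc hT fun x => (hpos x).trans_eq (hre x).symm
  exact ⟨R, Rinv, fun x => (hR x).trans (hre x), hinner, hRinv⟩

end SquareRoot

/-! ### Osculating models from Taylor jets -/

section JetModel

set_option maxSynthPendingDepth 3

variable {E : Type*} [NormedAddCommGroup E] [InnerProductSpace ℂ E]

theorem hasFDerivAt_comp_sub_of_norm_sub_le_sq {F : Type*} [NormedAddCommGroup F] [NormedSpace ℂ F]
    {f : E → F} {L : E →L[ℂ] F} {M : ℝ} (hf : ∀ x, ‖x‖ ≤ 1 → ‖f x - L x‖ ≤ M * ‖x‖ ^ 2)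
    (z : E) : HasFDerivAt (fun w => f (w - z)) L z := by
  have hO : (fun x => f x - L x) =O[nhds 0] fun x : E => ‖x - 0‖ ^ 2 := by
    refine .of_bound M ?_
    filter_upwards [closedBall_mem_nhds (0 : E) one_pos] with x hx
    rw [sub_zero, norm_pow, norm_norm]
    exact hf x (mem_closedBall_zero_iff.1 hx)
  have hadd := (hO.hasFDerivAt one_lt_two).add L.hasFDerivAt
  rw [zero_add] at hadd
  rw [hasFDerivAt_comp_sub, sub_self]
  exact hadd.congr_of_eventuallyEq (.of_forall fun x => (sub_add_cancel (f x) (L x)).symm)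

theorem norm_sub_sq_le_two_mul {F : Type*} [SeminormedAddCommGroup F] (x y : F) :
    ‖x - y‖ ^ 2 ≤ 2 * ‖x‖ ^ 2 + 2 * ‖y‖ ^ 2 := by
  have hle : ‖x - y‖ ^ 2 ≤ (‖x‖ + ‖y‖) ^ 2 := by gcongr; exact norm_sub_le x y
  linarith [sq_nonneg (‖x‖ - ‖y‖), add_sq ‖x‖ ‖y‖, sub_sq ‖x‖ ‖y‖]

theorem abs_norm_sq_sub_norm_sq_le {F : Type*} [SeminormedAddCommGroup F] {x y : F} {r : ℝ}
    (h : ‖x - y‖ ≤ r) : |‖y‖ ^ 2 - ‖x‖ ^ 2| ≤ 2 * r * ‖x‖ + r ^ 2 := by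
  have hr : |‖y‖ - ‖x‖| ≤ r := by
    rw [abs_sub_comm]
    exact (abs_norm_sub_norm_le x y).trans h
  calc |‖y‖ ^ 2 - ‖x‖ ^ 2| = |2 * ‖x‖ * (‖y‖ - ‖x‖) + (‖y‖ - ‖x‖) ^ 2| := by ring_nf
    _ ≤ 2 * ‖x‖ * |‖y‖ - ‖x‖| + |‖y‖ - ‖x‖| ^ 2 := by
      refine (abs_add_le _ _).trans_eq ?_
      rw [abs_mul, abs_of_nonneg (by positivity : 0 ≤ 2 * ‖x‖), abs_pow]
    _ ≤ 2 * ‖x‖ * r + r ^ 2 := by gcongr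
    _ = 2 * r * ‖x‖ + r ^ 2 := by ring

variable [NormedSpace ℝ E] [IsScalarTower ℝ ℂ E]

/-- The coefficients `A`, `B`, `T` of the Taylor polynomial `a + A h + B h h / 2 + T h h h` of a
real function are bounded by `M`, and `leviQuadratic B`, the Levi form of minus the function,
becomes at least `c |h|²` after adding `K |∂A h|²`. -/
structure IsStrictlyPscJet (M c K : ℝ) (A : E →L[ℝ] ℝ) (B : E →L[ℝ] E →L[ℝ] ℝ)
    (T : E →L[ℝ] E →L[ℝ] E →L[ℝ] ℝ) : Prop where
  norm_A_le : ‖A‖ ≤ M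
  norm_B_le : ‖B‖ ≤ M
  norm_T_le : ‖T‖ ≤ M
  symm_B : ∀ x y, B x y = B y x
  symm_T : ∀ x y, T x y = T y x
  symm_T' : ∀ x y z, T x y z = T x z y
  le_levi : ∀ x, c * ‖x‖ ^ 2 ≤ leviQuadratic B x + K * ‖wirtinger A x‖ ^ 2

/-- A factorization of the modified Levi form as `|R x|²`, together with a right inverse of the
adjoint of `R`. -/
structure IsLeviRoot (c K : ℝ) (A : E →L[ℝ] ℝ) (B : E →L[ℝ] E →L[ℝ] ℝ)
    (R Rinv : E →L[ℂ] E) : Prop where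
  norm_sq : ∀ x, ‖R x‖ ^ 2 = leviQuadratic B x + K * ‖wirtinger A x‖ ^ 2
  inner_apply : ∀ x y, inner ℂ (R x) (Rinv y) = inner ℂ x y
  norm_inv_sq_le : ∀ y, c * ‖Rinv y‖ ^ 2 ≤ ‖y‖ ^ 2

/-- The holomorphic polynomial formed by the terms of the Taylor expansion that are the real part
of a holomorphic function. -/
def holomorphicJet (A : E →L[ℝ] ℝ) (B : E →L[ℝ] E →L[ℝ] ℝ) (T : E →L[ℝ] E →L[ℝ] E →L[ℝ] ℝ)
    (h : E) : ℂ :=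
  wirtinger A h + (1 / 2 * bilinearPart B h h + trilinearPart T h h h)

variable {M c K : ℝ} {A : E →L[ℝ] ℝ} {B : E →L[ℝ] E →L[ℝ] ℝ} {T : E →L[ℝ] E →L[ℝ] E →L[ℝ] ℝ}

theorem differentiable_holomorphicJet : Differentiable ℂ (holomorphicJet A B T) := by
  unfold holomorphicJet
  fun_prop

namespace IsStrictlyPscJet

theorem norm_wirtinger_apply_le (hJ : IsStrictlyPscJet M c K A B T) (h : E) :
    ‖wirtinger A h‖ ≤ M * ‖h‖ := by
  refine (wirtinger A).le_of_opNorm_le ?_ h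
  exact (wirtinger.le_of_opNorm_le norm_wirtinger_le A).trans ((one_mul _).trans_le hJ.norm_A_le)

theorem norm_bilinearPart_apply_le (hJ : IsStrictlyPscJet M c K A B T) (h : E) :
    ‖bilinearPart B h h‖ ≤ M * ‖h‖ ^ 2 := by
  have hB : ‖bilinearPart B‖ ≤ M :=
    (bilinearPart.le_of_opNorm_le norm_bilinearPart_le B).trans
      ((one_mul _).trans_le hJ.norm_B_le)
  exact ((bilinearPart B).le_of_opNorm₂_le_of_le hB le_rfl le_rfl).trans_eq (by ring)

theorem norm_trilinearPart_apply_le (hJ : IsStrictlyPscJet M c K A B T) (h : E) :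
    ‖trilinearPart T h h h‖ ≤ M * ‖h‖ ^ 3 := by
  have hle := (trilinearPart T).le_of_opNorm_le ((norm_trilinearPart_le T).trans hJ.norm_T_le) h
  exact ((trilinearPart T h).le_of_opNorm₂_le_of_le hle le_rfl le_rfl).trans_eq (by ring)

theorem norm_holomorphicJet_sub_le (hJ : IsStrictlyPscJet M c K A B T) {h : E} (hh : ‖h‖ ≤ 1) :
    ‖holomorphicJet A B T h - wirtinger A h‖ ≤ 2 * M * ‖h‖ ^ 2 := by
  have hM : 0 ≤ M := (norm_nonneg A).trans hJ.norm_A_le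
  rw [holomorphicJet, add_sub_cancel_left]
  calc ‖1 / 2 * bilinearPart B h h + trilinearPart T h h h‖
      ≤ ‖(1 / 2 : ℂ)‖ * ‖bilinearPart B h h‖ + ‖trilinearPart T h h h‖ :=
        (norm_add_le _ _).trans_eq (by rw [norm_mul])
    _ ≤ 1 * (M * ‖h‖ ^ 2) + M * ‖h‖ ^ 2 := by
        gcongr
        · norm_num
        · exact hJ.norm_bilinearPart_apply_le h
        · refine (hJ.norm_trilinearPart_apply_le h).trans ?_
          gcongr ?_ * ?_
          exact pow_le_pow_of_le_one (norm_nonneg h) hh (by norm_num)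
    _ = 2 * M * ‖h‖ ^ 2 := by ring

theorem norm_holomorphicJet_le (hJ : IsStrictlyPscJet M c K A B T) {h : E} (hh : ‖h‖ ≤ 1) :
    ‖holomorphicJet A B T h‖ ≤ 3 * M * ‖h‖ := by
  have hM : 0 ≤ M := (norm_nonneg A).trans hJ.norm_A_le
  calc ‖holomorphicJet A B T h‖
      ≤ ‖holomorphicJet A B T h - wirtinger A h‖ + ‖wirtinger A h‖ := norm_le_norm_sub_add _ _
    _ ≤ 2 * M * ‖h‖ ^ 2 + M * ‖h‖ :=
        add_le_add (hJ.norm_holomorphicJet_sub_le hh) (hJ.norm_wirtinger_apply_le h)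
    _ ≤ 2 * M * ‖h‖ + M * ‖h‖ := by
        gcongr
        exact pow_le_of_le_one (norm_nonneg h) hh two_ne_zero
    _ = 3 * M * ‖h‖ := by ring

theorem hasFDerivAt_holomorphicJet (hJ : IsStrictlyPscJet M c K A B T) (z : E) :
    HasFDerivAt (fun w => holomorphicJet A B T (w - z)) (wirtinger A) z :=
  hasFDerivAt_comp_sub_of_norm_sub_le_sq (fun _ => hJ.norm_holomorphicJet_sub_le) z

theorem leviQuadratic_le (hJ : IsStrictlyPscJet M c K A B T) (h : E) :
    leviQuadratic B h ≤ M * ‖h‖ ^ 2 := by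
  have hB {x : E} (hx : ‖x‖ = ‖h‖) : |B x x| ≤ M * ‖h‖ ^ 2 :=
    (B.le_of_opNorm₂_le_of_le hJ.norm_B_le hx.le hx.le).trans_eq (by ring)
  have hre := neg_le_of_abs_le (hB rfl)
  have him := neg_le_of_abs_le (hB (norm_I_smul h))
  have hM : 0 ≤ M * ‖h‖ ^ 2 := (abs_nonneg _).trans (hB rfl)
  rw [leviQuadratic]
  linarith

theorem exists_isLeviRoot [FiniteDimensional ℂ E] (hJ : IsStrictlyPscJet M c K A B T)
    (hc : 0 < c) : ∃ R Rinv : E →L[ℂ] E, IsLeviRoot c K A B R Rinv := by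
  obtain ⟨R, Rinv, hR, hinner, hRinv⟩ :=
    exists_norm_sq_eq_leviQuadratic_add hJ.symm_B hc hJ.le_levi
  exact ⟨R, Rinv, hR, hinner, hRinv⟩

end IsStrictlyPscJet

/-- The vector-valued complex bilinear map representing `3 * biantilinearPart T` through the inner
product. -/
def mixedCubicVector [CompleteSpace E] (T : E →L[ℝ] E →L[ℝ] E →L[ℝ] ℝ) : E →L[ℂ] E →L[ℂ] E :=
  (3 : ℂ) • (ContinuousLinearMap.compSL E (StrongDual ℂ E) E (starRingEnd ℂ) (starRingEnd ℂ)
    (InnerProductSpace.toDual ℂ E).symm.toContinuousLinearEquiv.toContinuousLinearMap) ∘SL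
      biantilinearPart T

theorem mixedCubicVector_apply [CompleteSpace E] (T : E →L[ℝ] E →L[ℝ] E →L[ℝ] ℝ) (x y : E) :
    mixedCubicVector T x y
      = (3 : ℂ) • (InnerProductSpace.toDual ℂ E).symm (biantilinearPart T x y) :=
  rfl

/-- The square of the norm of this map reproduces the Levi part of the Taylor expansion. -/
def leviMap [CompleteSpace E] (T : E →L[ℝ] E →L[ℝ] E →L[ℝ] ℝ) (R Rinv : E →L[ℂ] E) (h : E) : E :=
  R h - Rinv (mixedCubicVector T h h)

theorem re_inner_mixedCubicVector [CompleteSpace E] (h : E) :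
    (inner ℂ h (mixedCubicVector T h h)).re = 3 * (biantilinearPart T h h h).re := by
  rw [mixedCubicVector_apply, inner_smul_right, ← inner_conj_symm,
    InnerProductSpace.toDual_symm_apply]
  simp

theorem IsStrictlyPscJet.norm_mixedCubicVector_le [CompleteSpace E]
    (hJ : IsStrictlyPscJet M c K A B T) (h : E) :
    ‖mixedCubicVector T h h‖ ≤ 3 * M * ‖h‖ ^ 2 := by
  rw [mixedCubicVector_apply, norm_smul, LinearIsometryEquiv.norm_map, mul_assoc]
  gcongr
  · norm_num
  · have hT := (norm_biantilinearPart_le T).trans hJ.norm_T_le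
    exact ((biantilinearPart T).le_of_opNorm₂_le_of_le hT le_rfl le_rfl).trans_eq (by ring)

section

variable [CompleteSpace E] {R Rinv : E →L[ℂ] E} {h : E}

theorem differentiable_leviMap : Differentiable ℂ (leviMap T R Rinv) := by
  unfold leviMap
  fun_prop

theorem IsStrictlyPscJet.hasFDerivAt_leviMap (hJ : IsStrictlyPscJet M c K A B T) (z : E) :
    HasFDerivAt (fun w => leviMap T R Rinv (w - z)) R z := by
  refine hasFDerivAt_comp_sub_of_norm_sub_le_sq (M := ‖Rinv‖ * (3 * M)) (fun h _ => ?_) z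
  rw [leviMap, sub_sub_cancel_left, norm_neg, mul_assoc]
  exact Rinv.le_opNorm_of_le (hJ.norm_mixedCubicVector_le h)

theorem IsLeviRoot.norm_leviMap_sq (hR : IsLeviRoot c K A B R Rinv) (h : E) :
    ‖leviMap T R Rinv h‖ ^ 2 = leviQuadratic B h + K * ‖wirtinger A h‖ ^ 2
      - 6 * (biantilinearPart T h h h).re + ‖Rinv (mixedCubicVector T h h)‖ ^ 2 := by
  rw [leviMap, norm_sub_sq (𝕜 := ℂ), hR.norm_sq, hR.inner_apply, RCLike.re_eq_complex_re,
    re_inner_mixedCubicVector]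
  ring

theorem IsLeviRoot.taylor_eq (hJ : IsStrictlyPscJet M c K A B T)
    (hR : IsLeviRoot c K A B R Rinv) (h : E) :
    A h + 1 / 2 * B h h + T h h h
      = 2 * (holomorphicJet A B T h).re - ‖leviMap T R Rinv h‖ ^ 2 + K * ‖wirtinger A h‖ ^ 2
        + ‖Rinv (mixedCubicVector T h h)‖ ^ 2 := by
  have hre : 2 * (holomorphicJet A B T h).re
      = A h + (bilinearPart B h h).re + 2 * (trilinearPart T h h h).re := by
    rw [← two_mul_re_wirtinger A h, holomorphicJet]
    simp only [Complex.add_re, Complex.mul_re]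
    norm_num
    ring
  rw [half_mul_apply_self, apply_self_self T hJ.symm_T hJ.symm_T', hre, hR.norm_leviMap_sq]
  ring

theorem IsLeviRoot.norm_inv_mixedCubicVector_sq_le (hJ : IsStrictlyPscJet M c K A B T)
    (hR : IsLeviRoot c K A B R Rinv) (hc : 0 < c) (h : E) :
    ‖Rinv (mixedCubicVector T h h)‖ ^ 2 ≤ 9 * M ^ 2 / c * ‖h‖ ^ 4 := by
  rw [div_mul_eq_mul_div, le_div_iff₀' hc]
  calc c * ‖Rinv (mixedCubicVector T h h)‖ ^ 2
      ≤ ‖mixedCubicVector T h h‖ ^ 2 := hR.norm_inv_sq_le _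
    _ ≤ (3 * M * ‖h‖ ^ 2) ^ 2 := by gcongr; exact hJ.norm_mixedCubicVector_le h
    _ = 9 * M ^ 2 * ‖h‖ ^ 4 := by ring

theorem IsLeviRoot.le_norm_leviMap_sq (hJ : IsStrictlyPscJet M c K A B T)
    (hR : IsLeviRoot c K A B R Rinv) (hc : 0 < c) (hh : 6 * M * ‖h‖ ≤ c) :
    c / 4 * ‖h‖ ^ 2 ≤ ‖leviMap T R Rinv h‖ ^ 2 := by
  have hM : 0 ≤ M := (norm_nonneg A).trans hJ.norm_A_le
  have hR2 : ‖R h‖ ^ 2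
      ≤ 2 * ‖leviMap T R Rinv h‖ ^ 2 + 2 * ‖Rinv (mixedCubicVector T h h)‖ ^ 2 := by
    simpa [leviMap] using
      norm_sub_sq_le_two_mul (leviMap T R Rinv h) (-Rinv (mixedCubicVector T h h))
  have hpos : c * ‖h‖ ^ 2 ≤ ‖R h‖ ^ 2 := (hJ.le_levi h).trans_eq (hR.norm_sq h).symm
  have hcub : ‖Rinv (mixedCubicVector T h h)‖ ^ 2 ≤ c / 4 * ‖h‖ ^ 2 :=
    calc ‖Rinv (mixedCubicVector T h h)‖ ^ 2
        ≤ 9 * M ^ 2 / c * ‖h‖ ^ 4 := hR.norm_inv_mixedCubicVector_sq_le hJ hc h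
      _ = (6 * M * ‖h‖) ^ 2 / (4 * c) * ‖h‖ ^ 2 := by ring
      _ ≤ c ^ 2 / (4 * c) * ‖h‖ ^ 2 := by gcongr
      _ = c / 4 * ‖h‖ ^ 2 := by field_simp
  linarith

theorem IsLeviRoot.norm_leviMap_le (hJ : IsStrictlyPscJet M c K A B T)
    (hR : IsLeviRoot c K A B R Rinv) (hc : 0 < c) (hK : 0 ≤ K) (hh : ‖h‖ ≤ 1) :
    ‖leviMap T R Rinv h‖ ≤ (1 + 2 * (M + K * M ^ 2 + 9 * M ^ 2 / c)) * ‖h‖ := by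
  have hM : 0 ≤ M := (norm_nonneg A).trans hJ.norm_A_le
  set D := 2 * (M + K * M ^ 2 + 9 * M ^ 2 / c)
  have hD : 0 ≤ D := by positivity
  have hR2 : ‖R h‖ ^ 2 ≤ (M + K * M ^ 2) * ‖h‖ ^ 2 := by
    rw [hR.norm_sq]
    calc leviQuadratic B h + K * ‖wirtinger A h‖ ^ 2
        ≤ M * ‖h‖ ^ 2 + K * (M * ‖h‖) ^ 2 := by
          gcongr
          · exact hJ.leviQuadratic_le h
          · exact hJ.norm_wirtinger_apply_le h
      _ = (M + K * M ^ 2) * ‖h‖ ^ 2 := by ring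
  refine le_of_sq_le_sq ?_ (by positivity)
  calc ‖leviMap T R Rinv h‖ ^ 2
      ≤ 2 * ‖R h‖ ^ 2 + 2 * ‖Rinv (mixedCubicVector T h h)‖ ^ 2 := norm_sub_sq_le_two_mul _ _
    _ ≤ 2 * ((M + K * M ^ 2) * ‖h‖ ^ 2) + 2 * (9 * M ^ 2 / c * ‖h‖ ^ 2) := by
        gcongr
        refine (hR.norm_inv_mixedCubicVector_sq_le hJ hc h).trans ?_
        gcongr ?_ * ?_
        exact pow_le_pow_of_le_one (norm_nonneg h) hh (by norm_num)
    _ = D * ‖h‖ ^ 2 := by ring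
    _ ≤ (1 + D) ^ 2 * ‖h‖ ^ 2 := by gcongr; linarith [sq_nonneg D, add_sq 1 D]
    _ = ((1 + D) * ‖h‖) ^ 2 := (mul_pow _ _ _).symm

theorem IsLeviRoot.abs_sub_model_le (hJ : IsStrictlyPscJet M c K A B T)
    (hR : IsLeviRoot c K A B R Rinv) (hc : 0 < c) (hK : 0 ≤ K) (hh : ‖h‖ ≤ 1) {τ x y : ℝ}
    (hτ : 0 < τ) (hτ2 : τ ≤ 2)
    (hxy : |y - (x + A h + 1 / 2 * B h h + T h h h)| ≤ M * ‖h‖ ^ (2 + τ)) :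
    |y - (x + 2 * (holomorphicJet A B T h).re - ‖leviMap T R Rinv h‖ ^ 2
        + K * ‖holomorphicJet A B T h‖ ^ 2)|
      ≤ (M + 9 * M ^ 2 / c + 4 * K * M ^ 2 + 4 * K * M)
        * (‖h‖ ^ (2 + τ) + ‖holomorphicJet A B T h‖ * ‖h‖ ^ 2) := by
  have hM : 0 ≤ M := (norm_nonneg A).trans hJ.norm_A_le
  set S := holomorphicJet A B T h
  have hpow : ‖h‖ ^ 4 ≤ ‖h‖ ^ (2 + τ) := by
    rw [← Real.rpow_natCast]
    exact Real.rpow_le_rpow_of_exponent_ge' (norm_nonneg h) hh (by linarith)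
      (by push_cast; linarith)
  have hS : |‖wirtinger A h‖ ^ 2 - ‖S‖ ^ 2| ≤ 4 * M * (‖S‖ * ‖h‖ ^ 2) + 4 * M ^ 2 * ‖h‖ ^ 4 :=
    (abs_norm_sq_sub_norm_sq_le (hJ.norm_holomorphicJet_sub_le hh)).trans_eq (by ring)
  calc |y - (x + 2 * S.re - ‖leviMap T R Rinv h‖ ^ 2 + K * ‖S‖ ^ 2)|
      = |(y - (x + A h + 1 / 2 * B h h + T h h h)) + ‖Rinv (mixedCubicVector T h h)‖ ^ 2
          + K * (‖wirtinger A h‖ ^ 2 - ‖S‖ ^ 2)| := by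
        congr 1
        linear_combination hR.taylor_eq hJ h
    _ ≤ |y - (x + A h + 1 / 2 * B h h + T h h h)| + ‖Rinv (mixedCubicVector T h h)‖ ^ 2
          + K * |‖wirtinger A h‖ ^ 2 - ‖S‖ ^ 2| := by
        refine (abs_add_three _ _ _).trans_eq ?_
        rw [abs_mul, abs_of_nonneg hK, abs_of_nonneg (sq_nonneg ‖Rinv _‖)]
    _ ≤ M * ‖h‖ ^ (2 + τ) + 9 * M ^ 2 / c * ‖h‖ ^ (2 + τ)
          + K * (4 * M * (‖S‖ * ‖h‖ ^ 2) + 4 * M ^ 2 * ‖h‖ ^ (2 + τ)) := by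
        gcongr
        · exact (hR.norm_inv_mixedCubicVector_sq_le hJ hc h).trans (by gcongr)
        · exact hS.trans (by gcongr)
    _ ≤ (M + 9 * M ^ 2 / c + 4 * K * M ^ 2 + 4 * K * M)
          * (‖h‖ ^ (2 + τ) + ‖S‖ * ‖h‖ ^ 2) := by
        have hSh : 0 ≤ (M + 9 * M ^ 2 / c + 4 * K * M ^ 2) * (‖S‖ * ‖h‖ ^ 2) := by positivity
        have hhτ : 0 ≤ 4 * K * M * ‖h‖ ^ (2 + τ) := by positivity
        linarith

theorem IsLeviRoot.isOsculatingModel (hJ : IsStrictlyPscJet M c K A B T)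
    (hR : IsLeviRoot c K A B R Rinv) (hc : 0 < c) (hK : 0 ≤ K) {τ ρ C c' : ℝ}
    (hτ : 0 < τ) (hτ2 : τ ≤ 2) (hρ : ρ ≤ 1) (hρc : 6 * M * ρ ≤ c)
    (hC : 1 + 3 * M + 2 * (M + K * M ^ 2 + 9 * M ^ 2 / c)
      + (M + 9 * M ^ 2 / c + 4 * K * M ^ 2 + 4 * K * M) ≤ C) (hc' : c' ≤ c / 4)
    {Ω : Set E} {d : E → ℝ} {z : E} (hpos : ∀ w ∈ Ω, dist w z ≤ ρ → 0 < d w)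
    (htaylor : ∀ w ∈ Ω, dist w z ≤ ρ →
      |d w - (d z + A (w - z) + 1 / 2 * B (w - z) (w - z) + T (w - z) (w - z) (w - z))|
        ≤ M * dist w z ^ (2 + τ)) :
    IsOsculatingModel Ω d z (fun w => holomorphicJet A B T (w - z))
      (fun w => leviMap T R Rinv (w - z)) C c' K τ ρ := by
  have hM : 0 ≤ M := (norm_nonneg A).trans hJ.norm_A_le
  have hD : 0 ≤ M + K * M ^ 2 + 9 * M ^ 2 / c := by positivity
  have hD' : 0 ≤ M + 9 * M ^ 2 / c + 4 * K * M ^ 2 + 4 * K * M := by positivity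
  have hdiff : Differentiable ℂ fun w : E => w - z := differentiable_id.sub_const z
  refine
    { differentiable_s := differentiable_holomorphicJet.comp hdiff
      differentiable_g := differentiable_leviMap.comp hdiff
      s_self := by simp [holomorphicJet]
      g_self := by simp [leviMap]
      pos := hpos
      abs_remainder_le := fun w hw hwρ => ?_
      le_norm_g_sq := fun w _ hwρ => ?_
      norm_g_le := fun w _ hwρ => ?_
      norm_s_le := fun w _ hwρ => ?_ }
  · have hw' := htaylor w hw hwρ
    rw [dist_eq_norm] at hwρ hw' ⊢
    refine (hR.abs_sub_model_le hJ hc hK (hwρ.trans hρ) hτ hτ2 hw').trans ?_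
    gcongr
    linarith
  · rw [dist_eq_norm] at hwρ ⊢
    have hle : 6 * M * ‖w - z‖ ≤ c := le_trans (by gcongr) hρc
    exact le_trans (by gcongr) (hR.le_norm_leviMap_sq hJ hc hle)
  · rw [dist_eq_norm] at hwρ ⊢
    refine (hR.norm_leviMap_le hJ hc hK (hwρ.trans hρ)).trans ?_
    gcongr
    linarith
  · rw [dist_eq_norm] at hwρ ⊢
    refine (hJ.norm_holomorphicJet_le (hwρ.trans hρ)).trans ?_
    gcongr
    linarith

end

theorem IsStrictlyPscJet.exists_isOsculatingModel [FiniteDimensional ℂ E]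
    (hJ : IsStrictlyPscJet M c K A B T) (hc : 0 < c) (hK : 0 ≤ K) {τ ρ C c' : ℝ}
    (hτ : 0 < τ) (hτ2 : τ ≤ 2) (hρ : ρ ≤ 1) (hρc : 6 * M * ρ ≤ c)
    (hC : 1 + 3 * M + 2 * (M + K * M ^ 2 + 9 * M ^ 2 / c)
      + (M + 9 * M ^ 2 / c + 4 * K * M ^ 2 + 4 * K * M) ≤ C) (hc' : c' ≤ c / 4)
    {Ω : Set E} {d : E → ℝ} {z : E} (hpos : ∀ w ∈ Ω, dist w z ≤ ρ → 0 < d w)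
    (htaylor : ∀ w ∈ Ω, dist w z ≤ ρ →
      |d w - (d z + A (w - z) + 1 / 2 * B (w - z) (w - z) + T (w - z) (w - z) (w - z))|
        ≤ M * dist w z ^ (2 + τ)) :
    ∃ (s : E → ℂ) (g : E → E), IsOsculatingModel Ω d z s g C c' K τ ρ ∧
      (∀ X, fderiv ℂ s z X = wirtinger A X) ∧
      ∀ X, ‖fderiv ℂ g z X‖ ^ 2 = leviQuadratic B X + K * ‖wirtinger A X‖ ^ 2 := by
  have : CompleteSpace E := FiniteDimensional.complete ℂ E
  obtain ⟨R, Rinv, hR⟩ := hJ.exists_isLeviRoot hc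
  exact ⟨_, _, hR.isOsculatingModel hJ hc hK hτ hτ2 hρ hρc hC hc' hpos htaylor,
    fun X => by rw [(hJ.hasFDerivAt_holomorphicJet z).fderiv],
    fun X => by rw [(hJ.hasFDerivAt_leviMap z).fderiv, hR.norm_sq]⟩

end JetModel

section LeviPositivity

open Filter Topology

theorem exists_pos_forall_le_add_mul_of_isCompact {X : Type*} [TopologicalSpace X] {s : Set X}
    (hs : IsCompact s) {f g : X → ℝ} (hf : Continuous f) (hg : Continuous g) (hg0 : ∀ x, 0 ≤ g x)
    (hpos : ∀ x ∈ s, g x = 0 → 0 < f x) :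
    ∃ K ≥ 0, ∃ c > 0, ∀ x ∈ s, c ≤ f x + K * g x := by
  have hcover : s ⊆ ⋃ m : ℕ, {x | 0 < f x + m * g x} := fun x hx => by
    rcases (hg0 x).eq_or_lt with h0 | h0
    · exact mem_iUnion.2 ⟨0, by simpa using hpos x hx h0.symm⟩
    · obtain ⟨m, hm⟩ := exists_nat_gt (-f x / g x)
      exact mem_iUnion.2 ⟨m, by simpa [neg_lt_iff_pos_add'] using (div_lt_iff₀ h0).1 hm⟩
  have hmono : Monotone fun m : ℕ => {x | 0 < f x + m * g x} := fun m m' hm x hx => by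
    have := hg0 x
    exact lt_of_lt_of_le (b := f x + m * g x) hx (by gcongr)
  obtain ⟨m, hm⟩ := hs.elim_directed_cover _
    (fun m => isOpen_lt continuous_const (by fun_prop)) hcover hmono.directed_le
  obtain ⟨c, hc, hle⟩ := hs.exists_forall_le' (f := fun x => f x + m * g x) (by fun_prop) hm
  exact ⟨m, m.cast_nonneg, c, hc, hle⟩

set_option maxSynthPendingDepth 3

variable {E : Type*} [NormedAddCommGroup E] [NormedSpace ℂ E] [NormedSpace ℝ E]

theorem leviQuadratic_add (B B' : E →L[ℝ] E →L[ℝ] ℝ) (x : E) :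
    leviQuadratic (B + B') x = leviQuadratic B x + leviQuadratic B' x := by
  simp only [leviQuadratic, add_apply]
  ring

theorem abs_leviQuadratic_le (B : E →L[ℝ] E →L[ℝ] ℝ) (x : E) :
    |leviQuadratic B x| ≤ ‖B‖ * ‖x‖ ^ 2 := by
  have hx := B.le_opNorm₂ x x
  have hIx := B.le_opNorm₂ (Complex.I • x) (Complex.I • x)
  rw [Real.norm_eq_abs] at hx hIx
  rw [norm_I_smul] at hIx
  rw [leviQuadratic, abs_neg, abs_div, abs_of_pos (by norm_num : (0 : ℝ) < 4)]
  have hB : 0 ≤ ‖B‖ * ‖x‖ ^ 2 := by positivity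
  linarith [abs_add_le (B x x) (B (Complex.I • x) (Complex.I • x))]

theorem continuous_leviQuadratic (B : E →L[ℝ] E →L[ℝ] ℝ) : Continuous (leviQuadratic B) := by
  unfold leviQuadratic
  fun_prop

variable [IsScalarTower ℝ ℂ E]

theorem wirtinger_eq_zero_iff {A : E →L[ℝ] ℝ} {x : E} :
    wirtinger A x = 0 ↔ A x = 0 ∧ A (Complex.I • x) = 0 := by
  simp [wirtinger_apply, Complex.ext_iff]

theorem leviQuadratic_smul (B : E →L[ℝ] E →L[ℝ] ℝ) (α : ℂ) (x : E) :
    leviQuadratic B (α • x) = ‖α‖ ^ 2 * leviQuadratic B x := by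
  have hI : Complex.I • Complex.I • x = -x := by rw [← mul_smul, Complex.I_mul_I, neg_one_smul]
  rw [leviQuadratic, leviQuadratic, smul_comm, smul_eq_re_smul_add_im_smul α x,
    smul_eq_re_smul_add_im_smul α (Complex.I • x), hI, ← Complex.normSq_eq_norm_sq,
    Complex.normSq_apply]
  simp only [map_add, map_smul, map_neg, add_apply, smul_apply, neg_apply, smul_eq_mul]
  ring

theorem exists_forall_le_leviQuadratic_add [FiniteDimensional ℂ E] {A : E →L[ℝ] ℝ}
    {B : E →L[ℝ] E →L[ℝ] ℝ} (hpos : ∀ x ≠ 0, wirtinger A x = 0 → 0 < leviQuadratic B x) :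
    ∃ K ≥ 0, ∃ c > 0, ∀ x, c * ‖x‖ ^ 2 ≤ leviQuadratic B x + K * ‖wirtinger A x‖ ^ 2 := by
  have := FiniteDimensional.proper ℂ E
  have hsphere : ∀ x ∈ sphere (0 : E) 1, ‖wirtinger A x‖ ^ 2 = 0 → 0 < leviQuadratic B x :=
    fun x hx h0 => hpos x (ne_of_mem_sphere hx one_ne_zero) (by simpa using h0)
  obtain ⟨K, hK, c, hc, hle⟩ := exists_pos_forall_le_add_mul_of_isCompact
    (isCompact_sphere (0 : E) 1) (continuous_leviQuadratic B) (by fun_prop)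
    (fun x => by positivity) hsphere
  refine ⟨K, hK, c, hc, fun x => ?_⟩
  rcases eq_or_ne x 0 with rfl | hx
  · simp [leviQuadratic]
  have hunit := hle (((‖x‖⁻¹ : ℝ) : ℂ) • x) (by simp [norm_smul, hx])
  rw [leviQuadratic_smul, map_smul, norm_smul, mul_pow, mul_left_comm, ← mul_add,
    Complex.norm_real, norm_inv, norm_norm, inv_pow, inv_mul_eq_div,
    le_div_iff₀ (by positivity)] at hunit
  exact hunit

theorem le_leviQuadratic_add_of_norm_sub_le {A A' : E →L[ℝ] ℝ} {B B' : E →L[ℝ] E →L[ℝ] ℝ}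
    {K c : ℝ} (hK : 0 ≤ K) (hA : 2 * K * ‖A - A'‖ ^ 2 ≤ c / 4) (hB : ‖B - B'‖ ≤ c / 4) {x : E}
    (hle : c * ‖x‖ ^ 2 ≤ leviQuadratic B x + K * ‖wirtinger A x‖ ^ 2) :
    c / 2 * ‖x‖ ^ 2 ≤ leviQuadratic B' x + 2 * K * ‖wirtinger A' x‖ ^ 2 := by
  have hlevi : leviQuadratic B x ≤ leviQuadratic B' x + c / 4 * ‖x‖ ^ 2 := by
    calc leviQuadratic B x = leviQuadratic B' x + leviQuadratic (B - B') x := by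
          rw [← leviQuadratic_add, add_sub_cancel]
      _ ≤ leviQuadratic B' x + ‖B - B'‖ * ‖x‖ ^ 2 := by
          gcongr
          exact (le_abs_self _).trans (abs_leviQuadratic_le _ x)
      _ ≤ leviQuadratic B' x + c / 4 * ‖x‖ ^ 2 := by gcongr
  have hwirtinger : ‖wirtinger (A - A') x‖ ≤ ‖A - A'‖ * ‖x‖ :=
    ContinuousLinearMap.le_of_opNorm_le _
      ((ContinuousLinearMap.le_of_opNorm_le _ norm_wirtinger_le _).trans_eq (one_mul _)) x
  have hsq : K * ‖wirtinger A x‖ ^ 2 ≤ 2 * K * ‖wirtinger A' x‖ ^ 2 + c / 4 * ‖x‖ ^ 2 := by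
    calc K * ‖wirtinger A x‖ ^ 2 = K * ‖wirtinger (A - A') x - -wirtinger A' x‖ ^ 2 := by
          rw [map_sub, sub_apply, sub_neg_eq_add, sub_add_cancel]
      _ ≤ K * (2 * (‖A - A'‖ * ‖x‖) ^ 2 + 2 * ‖wirtinger A' x‖ ^ 2) := by
          grw [norm_sub_sq_le_two_mul, norm_neg, hwirtinger]
      _ = 2 * K * ‖wirtinger A' x‖ ^ 2 + 2 * K * ‖A - A'‖ ^ 2 * ‖x‖ ^ 2 := by ring
      _ ≤ 2 * K * ‖wirtinger A' x‖ ^ 2 + c / 4 * ‖x‖ ^ 2 := by gcongr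
  linarith

theorem eventually_le_leviQuadratic_add [FiniteDimensional ℂ E] {Y : Type*} [TopologicalSpace Y]
    {p : Y} {A : Y → E →L[ℝ] ℝ} {B : Y → E →L[ℝ] E →L[ℝ] ℝ} (hA : ContinuousAt A p)
    (hB : ContinuousAt B p) (hpos : ∀ x ≠ 0, wirtinger (A p) x = 0 → 0 < leviQuadratic (B p) x) :
    ∃ K ≥ 0, ∃ c > 0, ∀ᶠ z in 𝓝 p, ∀ x,
      c * ‖x‖ ^ 2 ≤ leviQuadratic (B z) x + K * ‖wirtinger (A z) x‖ ^ 2 := by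
  obtain ⟨K, hK, c, hc, hle⟩ := exists_forall_le_leviQuadratic_add hpos
  have hAz : ∀ᶠ z in 𝓝 p, 2 * K * ‖A p - A z‖ ^ 2 < c / 4 :=
    (((continuousAt_const.sub hA).norm.pow 2).const_mul (2 * K)).eventually_lt_const
      (by simp [hc])
  have hBz : ∀ᶠ z in 𝓝 p, ‖B p - B z‖ < c / 4 :=
    (continuousAt_const.sub hB).norm.eventually_lt_const (by simp [hc])
  refine ⟨2 * K, by positivity, c / 2, by positivity, ?_⟩
  filter_upwards [hAz, hBz] with z hAz hBz x
  exact le_leviQuadratic_add_of_norm_sub_le hK hAz.le hBz.le (hle x)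

end LeviPositivity

section LocalModel

open Asymptotics Filter Topology

set_option maxSynthPendingDepth 3

theorem exists_eventually_forall_dist_le {X : Type*} [PseudoMetricSpace X] {x : X}
    {P : X × X → Prop} (h : ∀ᶠ q in 𝓝 (x, x), P q) :
    ∃ r > 0, ∀ᶠ z in 𝓝 x, ∀ w, dist w z ≤ r → P (w, z) := by
  obtain ⟨r, hr, hball⟩ := Metric.eventually_nhds_iff_ball.1 h
  refine ⟨r / 2, half_pos hr, ?_⟩
  filter_upwards [ball_mem_nhds x (half_pos hr)] with z hz w hw
  rw [mem_ball] at hz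
  have hwx : dist w x < r := (dist_triangle w z x).trans_lt (by linarith)
  exact hball _ (by rw [mem_ball, Prod.dist_eq]; exact max_lt hwx (by linarith))

section Jets

variable {E : Type} [NormedAddCommGroup E] [NormedSpace ℝ E] {d : E → ℝ} {p : E} {ε : ℝ} {k : ℕ}

/-- The coefficient of the cubic term in the Taylor polynomial of order `k + 2 ≤ 3`. -/
def cubicCoeff (k : ℕ) (d : E → ℝ) (z : E) : E →L[ℝ] E →L[ℝ] E →L[ℝ] ℝ :=
  if k = 0 then 0 else (1 / 6 : ℝ) • fderiv ℝ (fderiv ℝ (fderiv ℝ d)) z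

theorem taylorAlong_eq_cubicCoeff (hk : k = 0 ∨ k = 1) (d : E → ℝ) (z h : E) :
    taylorAlong (k + 2) d z h 1 = d z + fderiv ℝ d z h
      + 1 / 2 * fderiv ℝ (fderiv ℝ d) z h h + cubicCoeff k d z h h h := by
  rcases hk with rfl | rfl
  · simp [taylorAlong_two, cubicCoeff]
  · simp [taylorAlong_three, cubicCoeff]

theorem HolderContDiffAt.continuousAt_cubicCoeff (hε : 0 < ε) (hk : k = 0 ∨ k = 1)
    (hd : HolderContDiffAt ε (k + 2) d p) : ContinuousAt (cubicCoeff k d) p := by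
  rcases hk with rfl | rfl
  · exact continuousAt_const
  · exact (hd.2.2.2.continuousAt hε).const_smul (1 / 6 : ℝ)

theorem cubicCoeff_comm (hk : k = 0 ∨ k = 1) (hd : ContDiffAt ℝ (k + 2 : ℕ) d p) (u v : E) :
    cubicCoeff k d p u v = cubicCoeff k d p v u := by
  rcases hk with rfl | rfl
  · simp [cubicCoeff]
  · have hD : ContDiffAt ℝ 2 (fderiv ℝ d) p := hd.fderiv_right (by norm_num)
    simp [cubicCoeff, fderiv_fderiv_comm hD u v]

theorem cubicCoeff_right_comm (hk : k = 0 ∨ k = 1) (hd : ContDiffAt ℝ (k + 2 : ℕ) d p)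
    (u v w : E) : cubicCoeff k d p u v w = cubicCoeff k d p u w v := by
  rcases hk with rfl | rfl
  · simp [cubicCoeff]
  · simp [cubicCoeff, fderiv_fderiv_fderiv_right_comm (f := d) (by exact_mod_cast hd) u v w]

end Jets

variable {E : Type} [NormedAddCommGroup E] [InnerProductSpace ℂ E] [FiniteDimensional ℂ E]
  [NormedSpace ℝ E] [IsScalarTower ℝ ℂ E] {d : E → ℝ} {p : E} {ε : ℝ} {k : ℕ}

/-- The Levi form of `-d` at `p` is positive definite on the complex tangent space of the level set
of `d`. -/
def IsStrictlyPseudoconvexAt (d : E → ℝ) (p : E) : Prop :=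
  ∀ X ≠ 0, wirtinger (fderiv ℝ d p) X = 0 → 0 < leviQuadratic (fderiv ℝ (fderiv ℝ d) p) X

theorem HolderContDiffAt.exists_eventually_isStrictlyPscJet (hε : 0 < ε) (hk : k = 0 ∨ k = 1)
    (hd : HolderContDiffAt ε (k + 2) d p) (hpsc : IsStrictlyPseudoconvexAt d p) :
    ∃ M > 0, ∃ K ≥ 0, ∃ c > 0,
      (∀ᶠ z in 𝓝 p, IsStrictlyPscJet M c K (fderiv ℝ d z) (fderiv ℝ (fderiv ℝ d) z)
        (cubicCoeff k d z)) ∧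
      ∀ᶠ q in 𝓝 (p, p), |d q.1 - taylorAlong (k + 2) d q.2 (q.1 - q.2) 1|
        ≤ M * dist q.1 q.2 ^ (2 + (k + ε)) := by
  have hA : ContinuousAt (fderiv ℝ d) p := hd.2.continuousAt hε
  have hB : ContinuousAt (fderiv ℝ (fderiv ℝ d)) p := hd.2.2.continuousAt hε
  have hT : ContinuousAt (cubicCoeff k d) p := hd.continuousAt_cubicCoeff hε hk
  obtain ⟨K, hK, c, hc, hlevi⟩ := eventually_le_leviQuadratic_add hA hB hpsc
  obtain ⟨M₀, hM₀, htaylor⟩ := (hd.isBigO_sub_taylorAlong hε).exists_pos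
  obtain ⟨MA, hMA⟩ := hA.norm.isBoundedUnder_le
  obtain ⟨MB, hMB⟩ := hB.norm.isBoundedUnder_le
  obtain ⟨MT, hMT⟩ := hT.norm.isBoundedUnder_le
  refine ⟨max M₀ (max MA (max MB MT)), lt_max_of_lt_left hM₀, K, hK, c, hc, ?_, ?_⟩
  · have hsmooth : ∀ᶠ z in 𝓝 p, ContDiffAt ℝ (k + 2 : ℕ) d z :=
      (hd.contDiffAt hε).eventually (ENat.natCast_ne_coe_top _)
    filter_upwards [hlevi, eventually_map.1 hMA, eventually_map.1 hMB, eventually_map.1 hMT,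
      hsmooth] with z hlevi hMA hMB hMT hz
    exact
      { norm_A_le := hMA.trans (by simp)
        norm_B_le := hMB.trans (by simp)
        norm_T_le := hMT.trans (by simp)
        symm_B := fderiv_fderiv_comm (hz.of_le (by exact_mod_cast Nat.le_add_left 2 k))
        symm_T := cubicCoeff_comm hk hz
        symm_T' := cubicCoeff_right_comm hk hz
        le_levi := hlevi }
  · filter_upwards [htaylor.bound] with q hq
    rw [dist_eq_norm, ← add_assoc, add_comm (2 : ℝ)]
    rw [Real.norm_eq_abs, Real.norm_of_nonneg (by positivity), Nat.cast_add, Nat.cast_ofNat] at hq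
    refine hq.trans ?_
    gcongr
    exact le_max_left _ _

theorem HolderContDiffAt.exists_eventually_isOsculatingModel (hε : 0 < ε) (hε1 : ε ≤ 1)
    (hk : k = 0 ∨ k = 1) (hd : HolderContDiffAt ε (k + 2) d p)
    (hpsc : IsStrictlyPseudoconvexAt d p) {Ω : Set E} (hpos : ∀ᶠ w in 𝓝 p, w ∈ Ω → 0 < d w) :
    ∃ C c K R, IsAdmissibleRadius C c K (k + ε) R ∧
      ∀ᶠ z in 𝓝 p, ∃ (s : E → ℂ) (g : E → E), IsOsculatingModel Ω d z s g C c K (k + ε) R ∧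
        (∀ X, fderiv ℂ s z X = wirtinger (fderiv ℝ d z) X) ∧
        ∀ X, ‖fderiv ℂ g z X‖ ^ 2 = leviQuadratic (fderiv ℝ (fderiv ℝ d) z) X
          + K * ‖wirtinger (fderiv ℝ d z) X‖ ^ 2 := by
  obtain ⟨M, hM, K, hK, c, hc, hjet, htaylor⟩ := hd.exists_eventually_isStrictlyPscJet hε hk hpsc
  obtain ⟨r, hr, hclose⟩ :=
    exists_eventually_forall_dist_le (htaylor.and (continuousAt_fst.eventually hpos))
  have hτ : 0 < k + ε := by positivity
  have hτ2 : k + ε ≤ 2 := by rcases hk with rfl | rfl <;> norm_num <;> linarith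
  obtain ⟨C, hC⟩ : ∃ C, 1 + 3 * M + 2 * (M + K * M ^ 2 + 9 * M ^ 2 / c)
    + (M + 9 * M ^ 2 / c + 4 * K * M ^ 2 + 4 * K * M) ≤ C := ⟨_, le_rfl⟩
  have hC0 : 0 < C := lt_of_lt_of_le (by positivity) hC
  obtain ⟨R, hRle, hR⟩ := exists_isAdmissibleRadius_le hC0 (c := min 1 (c / 4)) (by positivity)
    (min_le_left _ _) hK hτ hτ2 (ρ := min r (min 1 (c / (6 * M)))) (by positivity)
  rw [le_min_iff, le_min_iff, le_div_iff₀' (by positivity)] at hRle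
  obtain ⟨hRr, hR1, hRc⟩ := hRle
  refine ⟨C, min 1 (c / 4), K, R, hR, ?_⟩
  filter_upwards [hjet, hclose] with z hjet hclose
  refine hjet.exists_isOsculatingModel hc hK hτ hτ2 hR1 hRc hC (min_le_right _ _)
    (fun w hw hwz => (hclose w (hwz.trans hRr)).2 hw) fun w _ hwz => ?_
  rw [← taylorAlong_eq_cubicCoeff hk]
  exact (hclose w (hwz.trans hRr)).1

theorem HolderContDiffAt.exists_eventually_norm_wirtinger_deriv_le (hε : 0 < ε) (hε1 : ε ≤ 1)
    (hk : k = 0 ∨ k = 1) (hd : HolderContDiffAt ε (k + 2) d p)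
    (hpsc : IsStrictlyPseudoconvexAt d p) {Ω : Set E} (hpos : ∀ᶠ w in 𝓝 p, w ∈ Ω → 0 < d w) :
    ∃ C > 0, ∃ δ > 0, ∀ᶠ z in 𝓝 p, z ∈ Ω → d z ≤ δ → ∀ φ : ℂ → E,
      DifferentiableOn ℂ φ (ball 0 1) → MapsTo φ (ball 0 1) Ω → φ 0 = z →
      ‖wirtinger (fderiv ℝ d z) (deriv φ 0)‖ ^ 2 / d z ^ 2
        + leviQuadratic (fderiv ℝ (fderiv ℝ d) z) (deriv φ 0) / d z
        ≤ (1 + C * d z ^ ((k + ε) / 2)) ^ 2 := by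
  have : CompleteSpace E := FiniteDimensional.complete ℂ E
  obtain ⟨C, c, K, R, hR, hmodel⟩ :=
    hd.exists_eventually_isOsculatingModel hε hε1 hk hpsc hpos
  obtain ⟨C', hC', δ, hδ, hle⟩ :=
    exists_norm_fderiv_sq_le_of_isAdmissibleRadius (E := E) (V := E) hR
  refine ⟨C', hC', δ, hδ, ?_⟩
  filter_upwards [hmodel, hpos] with z ⟨s, g, hsg, hs, hg⟩ hpos hz hdz φ hφ hφΩ hφz
  have hdz0 : d z ≠ 0 := (hpos hz).ne'
  convert hle Ω d z s g hsg hz hdz φ hφ hφΩ hφz using 1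
  rw [hs, hg]
  field_simp
  ring

end LocalModel

/-! ### The Kobayashi metric -/

section Kobayashi

open Filter Topology

set_option maxSynthPendingDepth 3

theorem exists_holomorphic_disc {E : Type*} [NormedAddCommGroup E] [NormedSpace ℂ E] {Ω : Set E}
    (hΩ : IsOpen Ω) {z : E} (hz : z ∈ Ω) (X : E) :
    ∃ (α : ℂ) (φ : ℂ → E), DifferentiableOn ℂ φ (ball 0 1) ∧ MapsTo φ (ball 0 1) Ω ∧ φ 0 = z ∧
      α • deriv φ 0 = X := by
  obtain ⟨r, hr, hball⟩ := Metric.isOpen_iff.1 hΩ z hz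
  obtain ⟨t, ht, htX⟩ := exists_pos_mul_lt hr ‖X‖
  have hderiv : ∀ ζ : ℂ, HasDerivAt (fun ζ : ℂ => z + ζ • (t : ℂ) • X) ((t : ℂ) • X) ζ :=
    fun ζ => by simpa using ((hasDerivAt_id ζ).smul_const ((t : ℂ) • X)).const_add z
  refine ⟨(t : ℂ)⁻¹, fun ζ => z + ζ • (t : ℂ) • X,
    fun ζ _ => (hderiv ζ).differentiableAt.differentiableWithinAt, fun ζ hζ => hball ?_, by simp,
    ?_⟩
  · rw [mem_ball_zero_iff] at hζ
    rw [mem_ball, dist_eq_norm, add_sub_cancel_left, norm_smul, norm_smul, Complex.norm_real,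
      Real.norm_of_nonneg ht.le, mul_comm t]
    exact (mul_le_of_le_one_left (by positivity) hζ.le).trans_lt htX
  · rw [(hderiv 0).deriv, smul_smul, inv_mul_cancel₀ (by exact_mod_cast ht.ne'), one_smul]

theorem le_kobayashi {Ω : Set (Cn n)} (hΩ : IsOpen Ω) {z : Cn n} (hz : z ∈ Ω) {N : Cn n → ℝ}
    (hN : ∀ (α : ℂ) (v : Cn n), N (α • v) = ‖α‖ * N v)
    (hle : ∀ φ : ℂ → Cn n, DifferentiableOn ℂ φ (ball 0 1) → MapsTo φ (ball 0 1) Ω → φ 0 = z →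
      N (deriv φ 0) ≤ 1) (X : Cn n) : N X ≤ kobayashi Ω z X := by
  obtain ⟨α₀, φ₀, hφ₀, hφ₀Ω, hφ₀z, hφ₀X⟩ := exists_holomorphic_disc hΩ hz X
  refine le_csInf ⟨_, α₀, φ₀, hφ₀, hφ₀Ω, hφ₀z, hφ₀X, rfl⟩ ?_
  rintro _ ⟨α, φ, hφ, hφΩ, hφz, rfl, rfl⟩
  rw [hN]
  exact mul_le_of_le_one_right (norm_nonneg α) (hle φ hφ hφΩ hφz)

theorem cderiv_eq_wirtinger (ρ : Cn n → ℝ) (q X : Cn n) :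
    cderiv ρ q X = wirtinger (fderiv ℝ ρ q) X :=
  (wirtinger_apply _ X).symm

theorem leviForm_eq_neg_leviQuadratic {ρ : Cn n → ℝ} {q : Cn n}
    (hρ : DifferentiableAt ℝ (fderiv ℝ ρ) q) (X : Cn n) :
    leviForm ρ q X = -leviQuadratic (fderiv ℝ (fderiv ℝ ρ) q) X := by
  have hsnd : ∀ Y, fderiv ℝ (fun w => fderiv ℝ ρ w Y) q = (fderiv ℝ (fderiv ℝ ρ) q).flip Y :=
    fun Y => by simp [fderiv_clm_apply hρ (differentiableAt_const Y)]
  simp only [leviForm, hsnd, ContinuousLinearMap.flip_apply, leviQuadratic, neg_neg]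

theorem leviForm_neg_of_eventuallyEq {f d : Cn n → ℝ} {z : Cn n} (hfd : f =ᶠ[𝓝 z] d)
    (hd : DifferentiableAt ℝ (fderiv ℝ d) z) (X : Cn n) :
    leviForm (fun w => -f w) z X = leviQuadratic (fderiv ℝ (fderiv ℝ d) z) X := by
  have hneg : fderiv ℝ (fun w => -f w) =ᶠ[𝓝 z] -fderiv ℝ d :=
    hfd.neg.fderiv.trans (.of_forall fun w => fderiv_neg)
  rw [leviForm_eq_neg_leviQuadratic (hd.neg.congr_of_eventuallyEq hneg), hneg.fderiv_eq,
    fderiv_neg]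
  simp only [leviQuadratic, neg_apply]
  ring

theorem Mfun_eq_of_eventuallyEq {Ω : Set (Cn n)} {d : Cn n → ℝ} {z : Cn n}
    (hΩd : bdist Ω =ᶠ[𝓝 z] d) (hd : DifferentiableAt ℝ (fderiv ℝ d) z) (X : Cn n) :
    Mfun Ω z X = √(‖wirtinger (fderiv ℝ d z) X‖ ^ 2 / d z ^ 2
      + leviQuadratic (fderiv ℝ (fderiv ℝ d) z) X / d z) := by
  rw [Mfun, cderiv_eq_wirtinger, hΩd.fderiv_eq, leviForm_neg_of_eventuallyEq hΩd hd, hΩd.eq_of_nhds]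

theorem Mfun_smul_of_eventuallyEq {Ω : Set (Cn n)} {d : Cn n → ℝ} {z : Cn n}
    (hΩd : bdist Ω =ᶠ[𝓝 z] d) (hd : DifferentiableAt ℝ (fderiv ℝ d) z) (α : ℂ) (X : Cn n) :
    Mfun Ω z (α • X) = ‖α‖ * Mfun Ω z X := by
  rw [Mfun_eq_of_eventuallyEq hΩd hd, Mfun_eq_of_eventuallyEq hΩd hd, map_smul, norm_smul,
    leviQuadratic_smul, mul_pow, mul_div_assoc, mul_div_assoc, ← mul_add,
    Real.sqrt_mul (by positivity), Real.sqrt_sq (norm_nonneg α)]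

theorem one_sub_mul_Mfun_le_kobayashi {Ω : Set (Cn n)} (hΩ : IsOpen Ω) {z : Cn n} (hz : z ∈ Ω)
    {d : Cn n → ℝ} (hΩd : bdist Ω =ᶠ[𝓝 z] d) (hd : DifferentiableAt ℝ (fderiv ℝ d) z) {x : ℝ}
    (hx : 0 ≤ x)
    (hle : ∀ φ : ℂ → Cn n, DifferentiableOn ℂ φ (ball 0 1) → MapsTo φ (ball 0 1) Ω → φ 0 = z →
      ‖wirtinger (fderiv ℝ d z) (deriv φ 0)‖ ^ 2 / d z ^ 2
        + leviQuadratic (fderiv ℝ (fderiv ℝ d) z) (deriv φ 0) / d z ≤ (1 + x) ^ 2) (X : Cn n) :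
    (1 - x) * Mfun Ω z X ≤ kobayashi Ω z X := by
  refine le_kobayashi hΩ hz (N := fun X => (1 - x) * Mfun Ω z X) (fun α v => ?_)
    (fun φ hφ hφΩ hφz => ?_) X
  · rw [Mfun_smul_of_eventuallyEq hΩd hd, mul_left_comm]
  · have hM : Mfun Ω z (deriv φ 0) ≤ 1 + x := by
      rw [Mfun_eq_of_eventuallyEq hΩd hd]
      exact Real.sqrt_le_iff.2 ⟨by positivity, hle φ hφ hφΩ hφz⟩
    have hM0 : 0 ≤ Mfun Ω z (deriv φ 0) := Real.sqrt_nonneg _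
    rcases le_total x 1 with hx1 | hx1 <;> nlinarith

theorem IsStrictPscPtHolder.exists_signedDistance {Ω : Set (Cn n)} (hΩ : IsOpen Ω) {p : Cn n}
    {ε : ℝ} (hε : 0 < ε) (hε1 : ε ≤ 1) {k : ℕ} (hp : IsStrictPscPtHolder Ω p (k + 2) ε) :
    ∃ d : Cn n → ℝ, HolderContDiffAt ε (k + 2) d p ∧ IsStrictlyPseudoconvexAt d p ∧
      ∀ᶠ z in 𝓝 p, z ∈ Ω → bdist Ω z = d z ∧ 0 < d z := by
  obtain ⟨hpΩ, W, hW, hpW, ρ, hρ, ⟨C, hC⟩, hΩW, hgrad, hlevi⟩ := hp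
  have hWp : W ∈ 𝓝 p := hW.mem_nhds hpW
  have hρp : ContDiffAt ℝ (k + 2 : ℕ) ρ p := hρ.contDiffAt hWp
  have hholder := isHolderNear_of_holderOnWith hWp hC
  rw [Real.coe_toNNReal _ hε.le] at hholder
  have hmem : ∀ᶠ y in 𝓝 p, y ∈ Ω ↔ ρ y < 0 := by
    filter_upwards [hWp] with y hy
    simpa [hy] using Set.ext_iff.1 hΩW y
  have hρ0 : fderiv ℝ ρ p ≠ 0 := hgrad p ⟨hpΩ, hpW⟩
  obtain ⟨d, hd, hfst, hsnd, hdist⟩ := _root_.exists_signedDistance hε hε1 hΩ hpΩ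
    (.of_iteratedFDeriv hρp hholder) hρ0 hmem
  refine ⟨d, hd, fun X hX hX0 => ?_, hdist⟩
  have hinv : 0 < ‖fderiv ℝ ρ p‖⁻¹ := by positivity
  obtain ⟨hρX, hρIX⟩ : fderiv ℝ ρ p X = 0 ∧ fderiv ℝ ρ p (Complex.I • X) = 0 := by
    simpa [wirtinger_eq_zero_iff, hfst, hρ0] using hX0
  have hdiff : DifferentiableAt ℝ (fderiv ℝ ρ) p :=
    (hρp.fderiv_right (m := 1) (by exact_mod_cast Nat.le_add_left 2 k)).differentiableAt one_ne_zero
  have hpos := hlevi p ⟨hpΩ, hpW⟩ X hX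
    ((cderiv_eq_wirtinger ρ p X).trans (wirtinger_eq_zero_iff.2 ⟨hρX, hρIX⟩))
  rw [leviForm_eq_neg_leviQuadratic hdiff, leviQuadratic, neg_neg] at hpos
  rw [leviQuadratic, hsnd X hρX, hsnd _ hρIX, ← mul_add, mul_div_assoc, neg_mul, neg_neg]
  exact mul_pos hinv hpos

end Kobayashi

theorem kobayashi_lower_estimate_general {ε : ℝ} (hε0 : 0 < ε) (hε1 : ε ≤ 1) {k : ℕ}
    (hk : k = 0 ∨ k = 1) {Ω : Set (Cn n)} (hopen : IsOpen Ω) {p : Cn n}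
    (hp : IsStrictPscPtHolder Ω p (k + 2) ε) :
    ∃ (C : ℝ) (U : Set (Cn n)), 0 < C ∧ IsOpen U ∧ p ∈ U ∧
      ∀ z ∈ Ω ∩ U, ∀ X : Cn n,
        (1 - C * bdist Ω z ^ (((k : ℝ) + ε) / 2)) * Mfun Ω z X ≤ kobayashi Ω z X := by
  obtain ⟨d, hd, hpsc, hdist⟩ := hp.exists_signedDistance hopen hε0 hε1
  obtain ⟨C, hC, δ, hδ, hdisc⟩ := hd.exists_eventually_norm_wirtinger_deriv_le hε0 hε1 hk hpsc
    (hdist.mono fun _ hz hzΩ => (hz hzΩ).2)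
  have hdiff : ∀ᶠ z in nhds p, DifferentiableAt ℝ (fderiv ℝ d) z := hd.2.1
  have hsmall : ∀ᶠ z in nhds p, bdist Ω z < δ :=
    (continuous_infDist_pt _).continuousAt.eventually_lt_const (by simpa [infDist_zero_of_mem hp.1])
  obtain ⟨U, hU, hUopen, hpU⟩ := _root_.eventually_nhds_iff.1
    (hdisc.and (hdist.eventually_nhds.and (hdiff.and hsmall)))
  refine ⟨C, U, hC, hUopen, hpU, fun z ⟨hzΩ, hzU⟩ X => ?_⟩
  obtain ⟨hdisc, hdist, hdiff, hsmall⟩ := hU z hzU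
  obtain ⟨hz, hz0⟩ := hdist.self_of_nhds hzΩ
  have hΩd : bdist Ω =ᶠ[nhds z] d := by
    filter_upwards [hdist, hopen.mem_nhds hzΩ] with w hw hwΩ using (hw hwΩ).1
  rw [hz]
  exact one_sub_mul_Mfun_le_kobayashi hopen hzΩ hΩd hdiff (by positivity)
    (hdisc hzΩ (hz ▸ hsmall.le)) X

/-- Under assumption (∗), the Kobayashi metric satisfies the lower estimate
`κ_Ω(z;X) ≥ (1 - C·δ_Ω(z)^ε_k)·M(z;X)` near `p`. -/
theorem kobayashi_lower_estimate (n : ℕ) (ε : ℝ) (hε : ε ∈ Set.Ioc (0 : ℝ) 1) (k : ℕ) (hk : k = 0 ∨ k = 1)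
    (Ω : Set (Cn n)) (hopen : IsOpen Ω) (hconn : IsConnected Ω) (p : Cn n) (hp : IsStrictPscPtHolder Ω p (k + 2) ε) :
    ∃ (C : ℝ) (U : Set (Cn n)), 0 < C ∧ IsOpen U ∧ p ∈ U ∧
      ∀ z ∈ Ω ∩ U, ∀ X : Cn n,
        (1 - C * bdist Ω z ^ (((k : ℝ) + ε) / 2)) * Mfun Ω z X ≤ kobayashi Ω z X := by
  exact kobayashi_lower_estimate_general hε.1 hε.2 hk hopen hp

end
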